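/- Let n ≥ 3 and let G' be a nontrivial finite subgroup of Out(F_n) whose order is not a power of 2. Then the normal closure N(G') of G' in Out(F_n) equals SOut(F_n) if G' ⊆ SOut(F_n), and equals Out(F_n) otherwise. -/

import Mathlib

open Matrix

namespace NormalClosurePaper

/-- The automorphism group of the free group on `n` generators. -/
abbrev FrAut (n : ℕ) := MulAut (FreeGroup (Fin n))

/-- Exponent sum of the generator `x_i` in a word of the free group. -/
def expSum {n : ℕ} (i : Fin n) : FreeGroup (Fin n) →* Multiplicative ℤ :=
  FreeGroup.lift fun j => Multiplicative.ofAdd (if j = i then (1 : ℤ) else 0)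

/-- The abelianized matrix of an automorphism of the free group:
the `(i, j)` entry is the exponent sum of `x_i` in `f x_j`. -/
def mat {n : ℕ} (f : FrAut n) : Matrix (Fin n) (Fin n) ℤ :=
  Matrix.of fun i j => (expSum i (f (FreeGroup.of j))).toAdd

lemma expSum_apply {n : ℕ} (f : FrAut n) (i : Fin n) (w : FreeGroup (Fin n)) :
    (expSum i (f w)).toAdd = ∑ k, mat f i k * (expSum k w).toAdd := by
  induction w using FreeGroup.induction_on with
  | C1 => simp
  | of j =>
      have h : (expSum i (f (FreeGroup.of j))).toAdd = mat f i j := rfl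
      rw [h]
      simp [expSum, mul_ite, Finset.sum_ite_eq]
  | inv_of j ih =>
      simp only [_root_.map_inv, toAdd_inv, mul_neg, Finset.sum_neg_distrib, ih]
  | mul x y ihx ihy =>
      simp only [_root_.map_mul, toAdd_mul, mul_add, Finset.sum_add_distrib, ihx, ihy]

lemma mat_one {n : ℕ} : mat (1 : FrAut n) = 1 := by
  ext i j
  simp [mat, expSum, Matrix.one_apply, eq_comm]

lemma mat_mul {n : ℕ} (f g : FrAut n) : mat (f * g) = mat f * mat g := by
  ext i j
  rw [Matrix.mul_apply]
  show (expSum i ((f * g) (FreeGroup.of j))).toAdd = _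
  rw [show (f * g) (FreeGroup.of j) = f (g (FreeGroup.of j)) from rfl, expSum_apply]
  rfl

/-- The matrix of the induced map on the abelianization, as a monoid homomorphism. -/
def matHom (n : ℕ) : FrAut n →* Matrix (Fin n) (Fin n) ℤ where
  toFun := mat
  map_one' := mat_one
  map_mul' := mat_mul

/-- The homomorphism `Aut(F_n) → GL_n(ℤ)` induced by abelianization. -/
def ρ (n : ℕ) : FrAut n →* GL (Fin n) ℤ := (matHom n).toHomUnits

/-- The composition of `ρ` with the determinant. -/
def detρ (n : ℕ) : FrAut n →* ℤˣ := (Matrix.GeneralLinearGroup.det).comp (ρ n)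

/-- The special automorphism group `SAut(F_n)`: automorphisms whose induced matrix
has determinant `1`. -/
def SAut (n : ℕ) : Subgroup (FrAut n) := (detρ n).ker

/-- The Torelli subgroup `IA_n`, the kernel of `ρ`. -/
def IA (n : ℕ) : Subgroup (FrAut n) := (ρ n).ker

/-- The group of inner automorphisms of the free group. -/
def Inn (n : ℕ) : Subgroup (FrAut n) := (MulAut.conj (G := FreeGroup (Fin n))).range

instance Inn_normal (n : ℕ) : (Inn n).Normal := by
  constructor
  rintro - ⟨a, rfl⟩ g
  refine ⟨g a, ?_⟩
  ext y
  simp [MulAut.conj_apply, MulAut.mul_apply, _root_.map_mul, _root_.map_inv]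

/-- The outer automorphism group `Out(F_n)`. -/
abbrev OutF (n : ℕ) := FrAut n ⧸ Inn n

/-- The projection `Aut(F_n) → Out(F_n)`. -/
def toOut (n : ℕ) : FrAut n →* OutF n := QuotientGroup.mk' (Inn n)

lemma mat_conj {n : ℕ} (g : FreeGroup (Fin n)) : mat (MulAut.conj g) = 1 := by
  rw [← mat_one (n := n)]
  ext i j
  simp only [mat, Matrix.of_apply, MulAut.conj_apply, MulAut.one_apply, _root_.map_mul,
    _root_.map_inv, toAdd_mul, toAdd_inv]
  omega

lemma ρ_conj {n : ℕ} (g : FreeGroup (Fin n)) : ρ n (MulAut.conj g) = 1 :=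
  Units.ext (mat_conj g)

/-- The homomorphism `Out(F_n) → GL_n(ℤ)` induced by abelianization. -/
def ρOut (n : ℕ) : OutF n →* GL (Fin n) ℤ :=
  QuotientGroup.lift (Inn n) (ρ n) (by rintro - ⟨g, rfl⟩; exact ρ_conj g)

/-- The composition of `ρOut` with the determinant. -/
def detρOut (n : ℕ) : OutF n →* ℤˣ := (Matrix.GeneralLinearGroup.det).comp (ρOut n)

/-- The special outer automorphism group `SOut(F_n)`. -/
def SOut (n : ℕ) : Subgroup (OutF n) := (detρOut n).ker

/-- Entrywise reduction `GL_n(ℤ) → GL_n(ℤ/ℓℤ)`. -/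
def redGL (n ℓ : ℕ) : GL (Fin n) ℤ →* GL (Fin n) (ZMod ℓ) :=
  Units.map (RingHom.mapMatrix (Int.castRingHom (ZMod ℓ))).toMonoidHom

/-- The subgroup `GΓ_n(ℓ)` of `GL_n(ℤ)` of matrices congruent to the identity mod `ℓ`. -/
def GGamma (n ℓ : ℕ) : Subgroup (GL (Fin n) ℤ) := (redGL n ℓ).ker

/-- The level `ℓ` congruence subgroup `Γ_n(ℓ)` (viewed inside `GL_n(ℤ)`): matrices with
determinant `1` that are congruent to the identity mod `ℓ`. -/
def GammaGL (n ℓ : ℕ) : Subgroup (GL (Fin n) ℤ) :=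
  GGamma n ℓ ⊓ (Matrix.GeneralLinearGroup.det).ker

/-- Reduction `SL_n(ℤ) → SL_n(ℤ/ℓℤ)`. -/
def redSL (n ℓ : ℕ) : Matrix.SpecialLinearGroup (Fin n) ℤ →*
    Matrix.SpecialLinearGroup (Fin n) (ZMod ℓ) :=
  Matrix.SpecialLinearGroup.map (Int.castRingHom (ZMod ℓ))

/-- Projection `SL_n(ℤ/ℓℤ) → PSL_n(ℤ/ℓℤ)`. -/
def projPSL (n ℓ : ℕ) : Matrix.SpecialLinearGroup (Fin n) (ZMod ℓ) →*
    Matrix.ProjectiveSpecialLinearGroup (Fin n) (ZMod ℓ) :=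
  QuotientGroup.mk' _

open scoped Pointwise

section Cuts

variable {V E : Type*}

/-- The edges of the graph with endpoint map `d` that have exactly one endpoint in `C`. -/
def coboundary (d : E → V × V) (C : Set V) : Set E :=
  {e | ¬ ((d e).1 ∈ C ↔ (d e).2 ∈ C)}

lemma coboundary_compl (d : E → V × V) (C : Set V) : coboundary d Cᶜ = coboundary d C := by
  ext e
  simp only [coboundary, Set.mem_ofPred_eq, Set.mem_compl_iff]
  tauto

lemma mem_coboundary {d : E → V × V} {C : Set V} {e : E} :
    e ∈ coboundary d C ↔ ¬ ((d e).1 ∈ C ↔ (d e).2 ∈ C) := Iff.rfl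

/-- Two sets of a graph are nested unless all four corners are nonempty. -/
def Crosses (C D : Set V) : Prop :=
  (C ∩ D).Nonempty ∧ (C ∩ Dᶜ).Nonempty ∧ (Cᶜ ∩ D).Nonempty ∧ (Cᶜ ∩ Dᶜ).Nonempty

lemma Crosses.symm {C D : Set V} (h : Crosses C D) : Crosses D C := by
  obtain ⟨h₁, h₂, h₃, h₄⟩ := h
  exact ⟨by rwa [Set.inter_comm], by rwa [Set.inter_comm], by rwa [Set.inter_comm],
    by rwa [Set.inter_comm]⟩

lemma Crosses.compl_right {C D : Set V} (h : Crosses C D) : Crosses C Dᶜ := by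
  obtain ⟨h₁, h₂, h₃, h₄⟩ := h
  exact ⟨h₂, by rwa [compl_compl], h₄, by rwa [compl_compl]⟩

lemma crosses_compl_right_iff {C D : Set V} : Crosses C Dᶜ ↔ Crosses C D :=
  ⟨fun h => by simpa using h.compl_right, Crosses.compl_right⟩

lemma crosses_compl_left_iff {C D : Set V} : Crosses Cᶜ D ↔ Crosses C D :=
  ⟨fun h => (crosses_compl_right_iff.1 h.symm).symm,
    fun h => (crosses_compl_right_iff.2 h.symm).symm⟩

lemma subset_cases_of_not_crosses {C D : Set V} (h : ¬ Crosses C D) :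
    C ⊆ Dᶜ ∨ C ⊆ D ∨ D ⊆ C ∨ Dᶜ ⊆ C := by
  simp only [Crosses, not_and_or, Set.not_nonempty_iff_eq_empty] at h
  rcases h with h | h | h | h
  · exact .inl (Set.disjoint_iff_inter_eq_empty.2 h).subset_compl_right
  · exact .inr (.inl (by
      have := (Set.disjoint_iff_inter_eq_empty.2 h).subset_compl_right
      rwa [compl_compl] at this))
  · exact .inr (.inr (.inl (by
      have := (Set.disjoint_iff_inter_eq_empty.2 h).subset_compl_left
      rwa [compl_compl] at this)))
  · exact .inr (.inr (.inr (by
      have := (Set.disjoint_iff_inter_eq_empty.2 h).subset_compl_left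
      rwa [compl_compl] at this)))

lemma not_crosses_of_subset {C D : Set V} (h : C ⊆ D) : ¬ Crosses C D := by
  rintro ⟨-, ⟨x, hx, hx'⟩, -⟩
  exact hx' (h hx)

/-- A bond of size at most `K`: an edge cut that is minimal under inclusion. -/
structure IsBond (d : E → V × V) (K : ℕ) (C : Set V) : Prop where
  finite : (coboundary d C).Finite
  card_le : (coboundary d C).ncard ≤ K
  eq_of_subset : ∀ D, coboundary d D ⊆ coboundary d C → D = ∅ ∨ D = Set.univ ∨ D = C ∨ D = Cᶜ

lemma finite_bonds_separating (d : E → V × V) (K : ℕ) (x y : V) :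
    {C | IsBond d K C ∧ x ∈ C ∧ y ∉ C}.Finite := by
  by_contra hinf
  set S := {C | IsBond d K C ∧ x ∈ C ∧ y ∉ C} with hS
  have : (Filter.cofinite ⊓ Filter.principal S).NeBot :=
    Filter.cofinite_inf_principal_neBot_iff.2 hinf
  let U := Ultrafilter.of (Filter.cofinite ⊓ Filter.principal S)
  have hU : (U : Filter (Set V)) ≤ Filter.cofinite ⊓ Filter.principal S := Ultrafilter.of_le _
  have hUS : ∀ᶠ C in (U : Filter (Set V)), C ∈ S :=
    (hU.trans inf_le_right) (Filter.mem_principal_self S)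
  set L : Set V := {z | ∀ᶠ C in (U : Filter (Set V)), z ∈ C} with hL
  have hmem : ∀ z, ∀ᶠ C in (U : Filter (Set V)), (z ∈ L ↔ z ∈ C) := by
    intro z
    by_cases hz : z ∈ L
    · filter_upwards [show ∀ᶠ C in (U : Filter (Set V)), z ∈ C from hz] with C hC
      simp [hz, hC]
    · filter_upwards [Ultrafilter.eventually_not.2 (show ¬ ∀ᶠ C in (U : Filter (Set V)), z ∈ C
        from hz)] with C hC
      simp [hz, hC]
  have hedge : ∀ e ∈ coboundary d L, ∀ᶠ C in (U : Filter (Set V)), e ∈ coboundary d C := by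
    intro e he
    filter_upwards [hmem (d e).1, hmem (d e).2] with C h₁ h₂
    rw [mem_coboundary] at he ⊢
    rwa [← h₁, ← h₂]
  have hxL : x ∈ L := hUS.mono fun C hC => hC.2.1
  have hyL : y ∉ L := fun h => by
    obtain ⟨C, hC, hC'⟩ := ((show ∀ᶠ C in (U : Filter (Set V)), y ∈ C from h).and hUS).exists
    exact hC'.2.2 hC
  have hfin : (coboundary d L).Finite := by
    by_contra hinf'
    obtain ⟨T, hTL, hT⟩ := Set.Infinite.exists_subset_card_eq hinf' (K + 1)
    have hall : ∀ᶠ C in (U : Filter (Set V)), ∀ e ∈ T, e ∈ coboundary d C :=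
      (Filter.eventually_all_finset T).2 fun e he => hedge e (hTL he)
    obtain ⟨C, hC, hCS⟩ := (hall.and hUS).exists
    have h₁ := Set.ncard_le_ncard (s := (T : Set E)) (t := coboundary d C) hC hCS.1.finite
    rw [Set.ncard_coe_finset, hT] at h₁
    have h₂ := hCS.1.card_le
    omega
  have hsub : ∀ᶠ C in (U : Filter (Set V)), coboundary d L ⊆ coboundary d C :=
    (Filter.eventually_all_finite hfin).2 hedge
  have heq : ∀ᶠ C in (U : Filter (Set V)), C = L := by
    filter_upwards [hsub, hUS] with C hC hCS
    rcases hCS.1.eq_of_subset L hC with h | h | h | h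
    · simp [h] at hxL
    · simp [h] at hyL
    · exact h.symm
    · rw [h] at hxL
      exact absurd hCS.2.1 hxL
  have hne : ∀ᶠ C in (U : Filter (Set V)), C ≠ L :=
    (hU.trans inf_le_left) (Set.finite_singleton L).compl_mem_cofinite
  obtain ⟨C, h₁, h₂⟩ := (heq.and hne).exists
  exact h₂ h₁

lemma finite_bonds_crossing (d : E → V × V) (K : ℕ) {C : Set V} (hC : (coboundary d C).Finite) :
    {X | IsBond d K X ∧ Crosses X C}.Finite := by
  set Y : Set V := (fun e => (d e).1) '' coboundary d C ∪ (fun e => (d e).2) '' coboundary d C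
    with hY
  have hYfin : Y.Finite := (hC.image _).union (hC.image _)
  have hfin : (⋃ x ∈ Y, ⋃ y ∈ Y, {X | IsBond d K X ∧ x ∈ X ∧ y ∉ X}).Finite :=
    hYfin.biUnion fun x _ => hYfin.biUnion fun y _ => finite_bonds_separating d K x y
  refine hfin.subset ?_
  have key : ∀ X, IsBond d K X → Crosses X C → (∀ y ∈ Y, y ∉ X) → False := by
    intro X hX hXC h
    have hsub : coboundary d (X ∩ C) ⊆ coboundary d X := by
      intro e he
      by_contra hne
      rw [mem_coboundary, not_not] at hne
      rw [mem_coboundary, Set.mem_inter_iff, Set.mem_inter_iff] at he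
      by_cases heC : e ∈ coboundary d C
      · have h₁ := h _ (Or.inl ⟨e, heC, rfl⟩)
        have h₂ := h _ (Or.inr ⟨e, heC, rfl⟩)
        simp only at h₁ h₂
        tauto
      · rw [mem_coboundary] at heC
        tauto
    obtain ⟨⟨a, ha⟩, ⟨b, hb⟩, ⟨c, hc⟩, -⟩ := hXC
    rcases hX.eq_of_subset _ hsub with h' | h' | h' | h'
    · rw [h'] at ha; exact ha
    · have : c ∈ X ∩ C := h' ▸ Set.mem_univ c
      exact hc.1 this.1
    · rw [← h'] at hb; exact hb.2 hb.1.2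
    · have : c ∈ X ∩ C := h' ▸ hc.1
      exact hc.1 this.1
  rintro X ⟨hX, hXC⟩
  simp only [Set.mem_iUnion, Set.mem_ofPred_eq]
  by_contra hno
  push Not at hno
  by_cases hex : ∃ y ∈ Y, y ∈ X
  · obtain ⟨x, hx, hxX⟩ := hex
    refine key Xᶜ ⟨by rw [coboundary_compl]; exact hX.finite,
      by rw [coboundary_compl]; exact hX.card_le, fun D hD => ?_⟩
      (crosses_compl_left_iff.2 hXC) fun y hy hyX => hyX (hno x hx y hy hX hxX)
    rw [coboundary_compl] at hD
    rw [compl_compl]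
    have := hX.eq_of_subset D hD
    tauto
  · exact key X hX hXC fun y hy hyX => hex ⟨y, hy, hyX⟩

/-- A pair of ultrafilters is separated by `C` if exactly one of them contains `C`. -/
def Separates (α : Ultrafilter V × Ultrafilter V) (C : Set V) : Prop :=
  ¬ (C ∈ α.1 ↔ C ∈ α.2)

lemma separates_compl {α : Ultrafilter V × Ultrafilter V} {C : Set V} :
    Separates α Cᶜ ↔ Separates α C := by
  simp only [Separates, Ultrafilter.compl_mem_iff_notMem]
  tauto

/-- A finite edge cut of smallest size among those separating `α`. -/
structure IsMinCut (d : E → V × V) (α : Ultrafilter V × Ultrafilter V) (C : Set V) : Prop where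
  separates : Separates α C
  finite : (coboundary d C).Finite
  le : ∀ D, Separates α D → (coboundary d D).Finite →
    (coboundary d C).ncard ≤ (coboundary d D).ncard

lemma IsMinCut.compl {d : E → V × V} {α : Ultrafilter V × Ultrafilter V} {C : Set V}
    (h : IsMinCut d α C) : IsMinCut d α Cᶜ :=
  ⟨separates_compl.2 h.separates, by rw [coboundary_compl]; exact h.finite,
    by rw [coboundary_compl]; exact h.le⟩

lemma mem_symmDiff_iff_of_ultrafilter (u : Ultrafilter V) (C D : Set V) :
    symmDiff C D ∈ u ↔ ¬ (C ∈ u ↔ D ∈ u) := by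
  have hinter : ∀ A B : Set V, A ∩ B ∈ u ↔ A ∈ u ∧ B ∈ u := fun A B =>
    Filter.inter_mem_iff (f := (u : Filter V))
  rw [Set.symmDiff_def, Ultrafilter.union_mem_iff, Set.sdiff_eq, Set.sdiff_eq, hinter, hinter,
    Ultrafilter.compl_mem_iff_notMem, Ultrafilter.compl_mem_iff_notMem]
  tauto

lemma mem_coboundary_symmDiff {d : E → V × V} {C D : Set V} {e : E} :
    e ∈ coboundary d (symmDiff C D) ↔ ¬ (e ∈ coboundary d C ↔ e ∈ coboundary d D) := by
  simp only [mem_coboundary, Set.mem_symmDiff]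
  tauto

lemma IsMinCut.isBond {d : E → V × V} (hconn : ∀ C, coboundary d C = ∅ → C = ∅ ∨ C = Set.univ)
    {α : Ultrafilter V × Ultrafilter V} {C : Set V} (h : IsMinCut d α C) {K : ℕ}
    (hK : (coboundary d C).ncard ≤ K) : IsBond d K C := by
  refine ⟨h.finite, hK, fun D hD => ?_⟩
  have hDfin := h.finite.subset hD
  have hsub : coboundary d (symmDiff C D) ⊆ coboundary d C := by
    intro e he
    rw [mem_coboundary_symmDiff] at he
    by_contra hne
    exact he ⟨fun h' => absurd h' hne, fun h' => hD h'⟩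
  have hsymm : coboundary d (symmDiff C D) = ∅ → D = C ∨ D = Cᶜ := by
    intro h'
    rcases hconn _ h' with h'' | h''
    · exact .inl (symmDiff_eq_bot.1 h'').symm
    · right
      ext z
      have : z ∈ symmDiff C D := h'' ▸ Set.mem_univ z
      rw [Set.mem_symmDiff] at this
      rw [Set.mem_compl_iff]
      tauto
  by_cases hsep : Separates α D
  · have heq : coboundary d D = coboundary d C :=
      Set.eq_of_subset_of_ncard_le hD (h.le D hsep hDfin) h.finite
    refine .inr (.inr (hsymm ?_))
    ext e
    rw [mem_coboundary_symmDiff, heq]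
    simp
  · have hsep' : Separates α (symmDiff C D) := by
      have := h.separates
      simp only [Separates, mem_symmDiff_iff_of_ultrafilter] at *
      tauto
    have heq : coboundary d (symmDiff C D) = coboundary d C :=
      Set.eq_of_subset_of_ncard_le hsub (h.le _ hsep' (h.finite.subset hsub)) h.finite
    have hempty : coboundary d D = ∅ := by
      ext e
      have h₁ : e ∈ coboundary d (symmDiff C D) ↔ e ∈ coboundary d C := by rw [heq]
      rw [mem_coboundary_symmDiff] at h₁
      simp only [Set.mem_empty_iff_false, iff_false]
      intro he
      have := hD he
      tauto
    rcases hconn D hempty with h' | h'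
    · exact .inl h'
    · exact .inr (.inl h')

lemma ncard_add_ncard_le {X : Type*} {A B A' B' : Set X} (hA' : A'.Finite) (hB' : B'.Finite)
    (hunion : A ∪ B ⊆ A' ∪ B') (hinter : A ∩ B ⊆ A' ∩ B') :
    A.ncard + B.ncard ≤ A'.ncard + B'.ncard := by
  have hfin := (hA'.union hB').subset hunion
  rw [← Set.ncard_union_add_ncard_inter A B (hfin.subset Set.subset_union_left)
      (hfin.subset Set.subset_union_right), ← Set.ncard_union_add_ncard_inter A' B' hA' hB']
  exact Nat.add_le_add (Set.ncard_le_ncard hunion (hA'.union hB'))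
    (Set.ncard_le_ncard hinter (hA'.subset Set.inter_subset_left))

lemma ncard_add_ncard_lt {X : Type*} {A B A' B' : Set X} (hA' : A'.Finite) (hB' : B'.Finite)
    (hunion : A ∪ B ⊂ A' ∪ B') (hinter : A ∩ B ⊆ A' ∩ B') :
    A.ncard + B.ncard < A'.ncard + B'.ncard := by
  have hfin := (hA'.union hB').subset hunion.subset
  rw [← Set.ncard_union_add_ncard_inter A B (hfin.subset Set.subset_union_left)
      (hfin.subset Set.subset_union_right), ← Set.ncard_union_add_ncard_inter A' B' hA' hB']
  exact Nat.add_lt_add_of_lt_of_le (Set.ncard_lt_ncard hunion (hA'.union hB'))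
    (Set.ncard_le_ncard hinter (hA'.subset Set.inter_subset_left))

lemma coboundary_corners (d : E → V × V) (C D : Set V) :
    coboundary d (C ∩ D) ∪ coboundary d (Cᶜ ∩ Dᶜ) ⊆ coboundary d C ∪ coboundary d D ∧
    coboundary d (C ∩ D) ∩ coboundary d (Cᶜ ∩ Dᶜ) ⊆ coboundary d C ∩ coboundary d D := by
  constructor <;> intro e <;>
    simp only [Set.mem_union, Set.mem_inter_iff, mem_coboundary, Set.mem_compl_iff] <;> tauto

lemma coboundary_corners_finite {d : E → V × V} {C D : Set V} (hC : (coboundary d C).Finite)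
    (hD : (coboundary d D).Finite) : (coboundary d (C ∩ D)).Finite :=
  (hC.union hD).subset (Set.subset_union_left.trans (coboundary_corners d C D).1)

lemma ncard_coboundary_corners {d : E → V × V} {C D : Set V} (hC : (coboundary d C).Finite)
    (hD : (coboundary d D).Finite) :
    (coboundary d (C ∩ D)).ncard + (coboundary d (Cᶜ ∩ Dᶜ)).ncard ≤
      (coboundary d C).ncard + (coboundary d D).ncard :=
  ncard_add_ncard_le hC hD (coboundary_corners d C D).1 (coboundary_corners d C D).2

/-- The cuts that are minimal for some pair in `P`. -/
def minCuts (d : E → V × V) (P : Set (Ultrafilter V × Ultrafilter V)) : Set (Set V) :=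
  {C | ∃ α ∈ P, IsMinCut d α C}

/-- The minimal cuts crossing a given set. -/
def crossing (d : E → V × V) (P : Set (Ultrafilter V × Ultrafilter V)) (C : Set V) :
    Set (Set V) :=
  {X | X ∈ minCuts d P ∧ Crosses X C}

lemma crossing_compl (d : E → V × V) (P : Set (Ultrafilter V × Ultrafilter V)) (C : Set V) :
    crossing d P Cᶜ = crossing d P C := by
  ext X
  simp only [crossing, Set.mem_ofPred_eq, crosses_compl_right_iff]

lemma crossing_corners (d : E → V × V) (P : Set (Ultrafilter V × Ultrafilter V)) {C D : Set V}
    (hCD : Crosses C D) (hD : D ∈ minCuts d P) :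
    crossing d P (C ∩ D) ∪ crossing d P (Cᶜ ∩ Dᶜ) ⊂ crossing d P C ∪ crossing d P D ∧
    crossing d P (C ∩ D) ∩ crossing d P (Cᶜ ∩ Dᶜ) ⊆ crossing d P C ∩ crossing d P D := by
  have aux : ∀ C D X : Set V, Crosses C D → Crosses X (C ∩ D) → Crosses X C ∨ Crosses X D := by
    rintro C D X ⟨-, -, -, a, ha⟩ ⟨⟨b, hb⟩, ⟨c, hc⟩, ⟨e, he⟩, ⟨f, hf⟩⟩
    by_contra hno
    simp only [Crosses, not_or] at hno
    obtain ⟨h₁, h₂⟩ := hno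
    have hC₁ : (X ∩ C).Nonempty := ⟨b, hb.1, hb.2.1⟩
    have hC₂ : (Xᶜ ∩ C).Nonempty := ⟨e, he.1, he.2.1⟩
    have hD₁ : (X ∩ D).Nonempty := ⟨b, hb.1, hb.2.2⟩
    have hD₂ : (Xᶜ ∩ D).Nonempty := ⟨e, he.1, he.2.2⟩
    simp only [hC₁, hC₂, hD₁, hD₂, true_and, not_and_or, Set.not_nonempty_iff_eq_empty,
      Set.eq_empty_iff_forall_notMem, Set.mem_inter_iff, Set.mem_compl_iff, not_not]
      at h₁ h₂
    simp only [Set.mem_inter_iff, Set.mem_compl_iff] at hb hc he hf ha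
    have ha₁ := h₁.imp (· a) (· a)
    have ha₂ := h₂.imp (· a) (· a)
    have hc₁ := h₁.imp (· c) (· f)
    have hc₂ := h₂.imp (· c) (· f)
    grind
  have hCD' : Crosses Cᶜ Dᶜ := crosses_compl_left_iff.2 (crosses_compl_right_iff.2 hCD)
  refine ⟨⟨?_, ?_⟩, ?_⟩
  · rintro X (⟨hX, h⟩ | ⟨hX, h⟩)
    · rcases aux C D X hCD h with h' | h'
      · exact .inl ⟨hX, h'⟩
      · exact .inr ⟨hX, h'⟩
    · rcases aux _ _ X hCD' h with h' | h'
      · exact .inl ⟨hX, crosses_compl_right_iff.1 h'⟩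
      · exact .inr ⟨hX, crosses_compl_right_iff.1 h'⟩
  · intro h
    rcases h (Or.inl ⟨hD, hCD.symm⟩) with h' | h'
    · exact not_crosses_of_subset Set.inter_subset_right h'.2.symm
    · exact not_crosses_of_subset Set.inter_subset_right (crosses_compl_left_iff.2 h'.2).symm
  · rintro X ⟨⟨hX, ⟨a, ha⟩, -, ⟨b, hb⟩, -⟩, ⟨-, ⟨c, hc⟩, -, ⟨e, he⟩, -⟩⟩
    exact ⟨⟨hX, ⟨a, ha.1, ha.2.1⟩, ⟨c, hc.1, hc.2.1⟩, ⟨b, hb.1, hb.2.1⟩, ⟨e, he.1, he.2.1⟩⟩,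
      ⟨hX, ⟨a, ha.1, ha.2.2⟩, ⟨c, hc.1, hc.2.2⟩, ⟨b, hb.1, hb.2.2⟩, ⟨e, he.1, he.2.2⟩⟩⟩

/-- A minimal cut for `α` crossing as few minimal cuts as possible. -/
structure IsOptCut (d : E → V × V) (P : Set (Ultrafilter V × Ultrafilter V))
    (α : Ultrafilter V × Ultrafilter V) (C : Set V) : Prop where
  isMinCut : IsMinCut d α C
  le : ∀ D, IsMinCut d α D → (crossing d P C).ncard ≤ (crossing d P D).ncard

lemma IsOptCut.compl {d : E → V × V} {P : Set (Ultrafilter V × Ultrafilter V)}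
    {α : Ultrafilter V × Ultrafilter V} {C : Set V} (h : IsOptCut d P α C) :
    IsOptCut d P α Cᶜ :=
  ⟨h.isMinCut.compl, by rw [crossing_compl]; exact h.le⟩

lemma exists_isOptCut (d : E → V × V) (P : Set (Ultrafilter V × Ultrafilter V))
    {α : Ultrafilter V × Ultrafilter V} (h : ∃ C, Separates α C ∧ (coboundary d C).Finite) :
    ∃ C, IsOptCut d P α C := by
  have h₁ : ∃ C, IsMinCut d α C := by
    obtain ⟨C, ⟨hC, hC'⟩, hmin⟩ := WellFounded.has_min
      (InvImage.wf (fun C => (coboundary d C).ncard) Nat.lt_wfRel.wf)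
      {C | Separates α C ∧ (coboundary d C).Finite} h
    exact ⟨C, hC, hC', fun D hD hD' => not_lt.1 (hmin D ⟨hD, hD'⟩)⟩
  obtain ⟨C, hC, hmin⟩ := WellFounded.has_min
    (InvImage.wf (fun C => (crossing d P C).ncard) Nat.lt_wfRel.wf) {C | IsMinCut d α C} h₁
  exact ⟨C, hC, fun D hD => not_lt.1 (hmin D hD)⟩

/-- Opposite corners of crossing optimal cuts cannot separate the two pairs. -/
lemma IsOptCut.false_of_corners {d : E → V × V} {P : Set (Ultrafilter V × Ultrafilter V)}
    (hfin : ∀ C ∈ minCuts d P, (crossing d P C).Finite)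
    {α β : Ultrafilter V × Ultrafilter V} (hα : α ∈ P) (hβ : β ∈ P) {C D : Set V}
    (hC : IsOptCut d P α C) (hD : IsOptCut d P β D) (hCD : Crosses C D)
    (h₁ : Separates α (C ∩ D)) (h₂ : Separates β (Cᶜ ∩ Dᶜ)) : False := by
  have hle := ncard_coboundary_corners hC.isMinCut.finite hD.isMinCut.finite
  have hf₁ := coboundary_corners_finite hC.isMinCut.finite hD.isMinCut.finite
  have hf₂ := coboundary_corners_finite hC.compl.isMinCut.finite hD.compl.isMinCut.finite
  have hl₁ := hC.isMinCut.le _ h₁ hf₁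
  have hl₂ := hD.isMinCut.le _ h₂ hf₂
  have hm₁ : IsMinCut d α (C ∩ D) :=
    ⟨h₁, hf₁, fun X hX hX' => by have := hC.isMinCut.le X hX hX'; omega⟩
  have hm₂ : IsMinCut d β (Cᶜ ∩ Dᶜ) :=
    ⟨h₂, hf₂, fun X hX hX' => by have := hD.isMinCut.le X hX hX'; omega⟩
  have hlt := ncard_add_ncard_lt (hfin C ⟨α, hα, hC.isMinCut⟩) (hfin D ⟨β, hβ, hD.isMinCut⟩)
    (crossing_corners d P hCD ⟨β, hβ, hD.isMinCut⟩).1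
    (crossing_corners d P hCD ⟨β, hβ, hD.isMinCut⟩).2
  have := hC.le _ hm₁
  have := hD.le _ hm₂
  omega

/-- If opposite corners of crossing optimal cuts both separate `α`, and the first cut is the one
for `α`, then the second pair has the larger crossing number (and the sizes agree when the second
cut is no larger). -/
lemma IsOptCut.lt_of_corners {d : E → V × V} {P : Set (Ultrafilter V × Ultrafilter V)}
    (hfin : ∀ C ∈ minCuts d P, (crossing d P C).Finite)
    {α β : Ultrafilter V × Ultrafilter V} (hα : α ∈ P) (hβ : β ∈ P) {C D : Set V}
    (hC : IsOptCut d P α C) (hD : IsOptCut d P β D) (hCD : Crosses C D)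
    (hsep : Separates β C)
    (h₁ : Separates α (C ∩ D)) (h₂ : Separates α (Cᶜ ∩ Dᶜ)) :
    (crossing d P C).ncard < (crossing d P D).ncard := by
  have hle := ncard_coboundary_corners hC.isMinCut.finite hD.isMinCut.finite
  have hf₁ := coboundary_corners_finite hC.isMinCut.finite hD.isMinCut.finite
  have hf₂ := coboundary_corners_finite hC.compl.isMinCut.finite hD.compl.isMinCut.finite
  have hl₁ := hC.isMinCut.le _ h₁ hf₁
  have hl₂ := hC.isMinCut.le _ h₂ hf₂
  have hl₃ := hD.isMinCut.le _ hsep hC.isMinCut.finite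
  have hm₁ : IsMinCut d α (C ∩ D) :=
    ⟨h₁, hf₁, fun X hX hX' => by have := hC.isMinCut.le X hX hX'; omega⟩
  have hm₂ : IsMinCut d α (Cᶜ ∩ Dᶜ) :=
    ⟨h₂, hf₂, fun X hX hX' => by have := hC.isMinCut.le X hX hX'; omega⟩
  have hlt := ncard_add_ncard_lt (hfin C ⟨α, hα, hC.isMinCut⟩) (hfin D ⟨β, hβ, hD.isMinCut⟩)
    (crossing_corners d P hCD ⟨β, hβ, hD.isMinCut⟩).1
    (crossing_corners d P hCD ⟨β, hβ, hD.isMinCut⟩).2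
  have := hC.le _ hm₁
  have := hC.le _ hm₂
  omega

lemma IsOptCut.not_crosses {d : E → V × V} {P : Set (Ultrafilter V × Ultrafilter V)}
    (hfin : ∀ C ∈ minCuts d P, (crossing d P C).Finite)
    {α β : Ultrafilter V × Ultrafilter V} (hα : α ∈ P) (hβ : β ∈ P) {C D : Set V}
    (hC : IsOptCut d P α C) (hD : IsOptCut d P β D) : ¬ Crosses C D := by
  intro hCD
  have hCD₁ : Crosses Cᶜ D := crosses_compl_left_iff.2 hCD
  have hCD₂ : Crosses C Dᶜ := crosses_compl_right_iff.2 hCD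
  have hCD₃ : Crosses Cᶜ Dᶜ := crosses_compl_left_iff.2 hCD₂
  have f₁ := hC.false_of_corners hfin hα hβ hD hCD
  have f₂ := hC.compl.false_of_corners hfin hα hβ hD hCD₁
  have f₃ := hC.false_of_corners hfin hα hβ hD.compl hCD₂
  have f₄ := hC.compl.false_of_corners hfin hα hβ hD.compl hCD₃
  have g₁ := hC.lt_of_corners hfin hα hβ hD hCD
  have g₂ := hC.lt_of_corners hfin hα hβ hD.compl hCD₂
  have g₃ := hD.lt_of_corners hfin hβ hα hC hCD.symm
  have g₄ := hD.compl.lt_of_corners hfin hβ hα hC hCD₂.symm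
  have sα := hC.isMinCut.separates
  have sβ := hD.isMinCut.separates
  simp only [crossing_compl] at g₂ g₄
  have hinter : ∀ (u : Ultrafilter V) (A B : Set V), A ∩ B ∈ u ↔ A ∈ u ∧ B ∈ u := fun u A B =>
    Filter.inter_mem_iff (f := (u : Filter V))
  have hm : ¬ ((crossing d P C).ncard < (crossing d P D).ncard ∧
    (crossing d P D).ncard < (crossing d P C).ncard) := by omega
  simp only [Separates, hinter, Ultrafilter.compl_mem_iff_notMem] at *
  generalize ((crossing d P C).ncard < (crossing d P D).ncard) = m at *
  generalize ((crossing d P D).ncard < (crossing d P C).ncard) = m' at *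
  clear hfin hCD hCD₁ hCD₂ hCD₃ hC hD hinter
  generalize (C ∈ α.1) = a₁ at *
  generalize (D ∈ α.1) = a₂ at *
  generalize (C ∈ α.2) = a₃ at *
  generalize (D ∈ α.2) = a₄ at *
  generalize (C ∈ β.1) = b₁ at *
  generalize (D ∈ β.1) = b₂ at *
  generalize (C ∈ β.2) = b₃ at *
  generalize (D ∈ β.2) = b₄ at *
  clear hα hβ
  by_cases h₁ : a₁ <;> by_cases h₃ : a₃ <;> simp only [h₁, h₃, not_true_eq_false, iff_self] at sα
  all_goals
    by_cases h₂ : b₂ <;> by_cases h₄ : b₄ <;> simp only [h₂, h₄, not_true_eq_false, iff_self] at sβ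
  all_goals
    simp only [h₁, h₂, h₃, h₄, true_and, false_and, and_true, and_false, not_true_eq_false,
      not_false_eq_true, iff_false, false_iff, not_not] at f₁ f₂ f₃ f₄ g₁ g₂ g₃ g₄
    by_cases a₂ <;> by_cases a₄ <;> by_cases b₁ <;> by_cases b₃ <;> simp_all

end Cuts

section FreeGroupWords

variable {X : Type*} [DecidableEq X]

lemma toWord_mk_of_isReduced {L : List (X × Bool)} (h : FreeGroup.IsReduced L) :
    (FreeGroup.mk L).toWord = L := by
  rw [FreeGroup.toWord_mk, h.reduce_eq]

/-- Multiplying a reduced word by a letter either deletes the last letter or adds one. -/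
lemma toWord_mul_letter (w : FreeGroup X) (c : X × Bool) :
    (∃ L, w.toWord = L ++ [(c.1, !c.2)] ∧ (w * FreeGroup.mk [c]).toWord = L) ∨
      (w * FreeGroup.mk [c]).toWord = w.toWord ++ [c] := by
  have hw : FreeGroup.IsReduced w.toWord := FreeGroup.isReduced_toWord
  have hmul : w * FreeGroup.mk [c] = FreeGroup.mk (w.toWord ++ [c]) := by
    rw [← FreeGroup.mul_mk, FreeGroup.mk_toWord]
  rcases List.eq_nil_or_concat w.toWord with h | ⟨L, b, h⟩
  · right
    rw [hmul, h]
    exact toWord_mk_of_isReduced (by simp)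
  · rw [h] at hw hmul ⊢
    by_cases hbc : b = (c.1, !c.2)
    · subst hbc
      refine .inl ⟨L, by simp, ?_⟩
      have : w * FreeGroup.mk [c] = FreeGroup.mk L := by
        rw [hmul]
        refine Quot.sound ?_
        have := @FreeGroup.Red.Step.not X L [] c.1 (!c.2)
        simpa using this
      rw [this]
      rw [List.concat_eq_append] at hw
      exact toWord_mk_of_isReduced (List.IsChain.left_of_append hw)
    · right
      rw [hmul]
      refine toWord_mk_of_isReduced ?_
      rw [List.concat_eq_append] at hw ⊢
      refine List.IsChain.append hw (by simp) ?_
      rintro x hx y hy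
      simp only [List.getLast?_append, List.getLast?_singleton, Option.some_or,
        Option.mem_some_iff] at hx
      simp only [List.head?_cons, Option.mem_some_iff] at hy
      subst hx hy
      intro h₁
      by_contra h₂
      exact hbc (Prod.ext h₁ (by cases hb : b.2 <;> cases hc : c.2 <;> simp_all))

lemma finite_head_ne (a : X × Bool) (v : FreeGroup X) :
    {w : FreeGroup X |
      ¬ (w.toWord.head? = some a ↔ (w * v).toWord.head? = some a)}.Finite := by
  have hletter : ∀ c : X × Bool, {w : FreeGroup X |
      ¬ (w.toWord.head? = some a ↔ (w * FreeGroup.mk [c]).toWord.head? = some a)}.Finite := by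
    intro c
    refine (Set.toFinite {1, FreeGroup.mk [(c.1, !c.2)]}).subset ?_
    intro w hw
    by_contra hne
    simp only [Set.mem_insert_iff, Set.mem_singleton_iff, not_or] at hne
    refine hw ?_
    rcases toWord_mul_letter w c with ⟨L, h₁, h₂⟩ | h
    · rw [h₁, h₂]
      cases L with
      | nil =>
        refine absurd ?_ hne.2
        rw [← FreeGroup.mk_toWord (x := w), h₁]
        rfl
      | cons b L => simp
    · rw [h]
      cases hL : w.toWord with
      | nil => exact absurd (FreeGroup.toWord_eq_nil_iff.1 hL) hne.1
      | cons b L => simp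
  have hmul : ∀ v₁ v₂ : FreeGroup X,
      {w : FreeGroup X | ¬ (w.toWord.head? = some a ↔ (w * v₁).toWord.head? = some a)}.Finite →
      {w : FreeGroup X | ¬ (w.toWord.head? = some a ↔ (w * v₂).toWord.head? = some a)}.Finite →
      {w : FreeGroup X |
        ¬ (w.toWord.head? = some a ↔ (w * (v₁ * v₂)).toWord.head? = some a)}.Finite := by
    intro v₁ v₂ h₁ h₂
    refine (h₁.union (h₂.preimage (mul_left_injective v₁).injOn)).subset ?_
    intro w hw
    simp only [Set.mem_union, Set.mem_preimage, Set.mem_ofPred_eq] at hw ⊢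
    rw [← mul_assoc] at hw
    tauto
  induction v using FreeGroup.induction_on with
  | C1 => simp
  | of x => exact hletter (x, true)
  | inv_of x _ => exact hletter (x, false)
  | mul v₁ v₂ h₁ h₂ => exact hmul v₁ v₂ h₁ h₂

/-- A nontrivial element of a free group is conjugate to one whose positive powers all start with
a letter with which no negative power starts. -/
lemma exists_conj_head (f : FreeGroup X) (hf : f ≠ 1) :
    ∃ (u c : FreeGroup X) (a : X × Bool), f = u * c * u⁻¹ ∧
      (∀ k : ℕ, k ≠ 0 → (c ^ k).toWord.head? = some a) ∧
      ∀ k : ℕ, (c⁻¹ ^ k).toWord.head? ≠ some a := by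
  set L := FreeGroup.reduceCyclically f.toWord with hL
  set U := FreeGroup.reduceCyclically.conjugator f.toWord with hU
  have hconj : U ++ L ++ FreeGroup.invRev U = f.toWord :=
    FreeGroup.reduceCyclically.conj_conjugator_reduceCyclically f.toWord
  have hf' : f = FreeGroup.mk U * FreeGroup.mk L * (FreeGroup.mk U)⁻¹ := by
    rw [FreeGroup.inv_mk, FreeGroup.mul_mk, FreeGroup.mul_mk, hconj, FreeGroup.mk_toWord]
  have hcyc : FreeGroup.IsCyclicallyReduced L :=
    FreeGroup.reduceCyclically.isCyclicallyReduced FreeGroup.isReduced_toWord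
  have hne : L ≠ [] := by
    intro h
    rw [h] at hf'
    refine hf ?_
    rw [hf', show FreeGroup.mk ([] : List (X × Bool)) = 1 from rfl,
      mul_one, mul_inv_cancel]
  have hpow : ∀ k, (FreeGroup.mk L ^ k).toWord = (List.replicate k L).flatten := by
    intro k
    rw [FreeGroup.pow_mk]
    exact toWord_mk_of_isReduced (hcyc.flatten_replicate k).isReduced
  obtain ⟨a, ha⟩ : ∃ a, L.head? = some a := ⟨L.head hne, List.head?_eq_some_head hne⟩
  obtain ⟨b, hb⟩ : ∃ b, L.getLast? = some b := ⟨L.getLast hne, List.getLast?_eq_some_getLast hne⟩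
  refine ⟨FreeGroup.mk U, FreeGroup.mk L, a, hf', fun k hk => ?_, fun k h => ?_⟩
  · rw [hpow, List.head?_flatten_replicate hk, ha]
  · rw [inv_pow, FreeGroup.toWord_inv, hpow, FreeGroup.invRev, List.head?_reverse,
      List.getLast?_map] at h
    rcases eq_or_ne k 0 with rfl | hk
    · simp at h
    · rw [List.getLast?_flatten_replicate hk, hb] at h
      simp only [Option.map_some, Option.some.injEq] at h
      have := hcyc.2 b hb a ha
      subst h
      simp at this

end FreeGroupWords

section GroupCuts

variable {E : Type*} [Group E]

/-- A subset of a group that is right invariant up to finite sets. -/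
def AlmostInvariant (C : Set E) : Prop := ∀ c, {x | ¬ (x ∈ C ↔ x * c ∈ C)}.Finite

lemma almostInvariant_of_closure {S : Set E} (hS : Subgroup.closure S = ⊤) {C : Set E}
    (h : ∀ s ∈ S, {x | ¬ (x ∈ C ↔ x * s ∈ C)}.Finite) : AlmostInvariant C := by
  intro c
  have hc : c ∈ Subgroup.closure S := hS ▸ Subgroup.mem_top c
  induction hc using Subgroup.closure_induction with
  | mem s hs => exact h s hs
  | one => simp
  | mul a b _ _ ha hb =>
    refine (ha.union (hb.preimage (mul_left_injective a).injOn)).subset ?_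
    intro w hw
    simp only [Set.mem_union, Set.mem_preimage, Set.mem_ofPred_eq] at hw ⊢
    rw [← mul_assoc] at hw
    tauto
  | inv a _ ha =>
    refine (ha.preimage (mul_left_injective a⁻¹).injOn).subset ?_
    intro w hw
    simp only [Set.mem_preimage, Set.mem_ofPred_eq, inv_mul_cancel_right] at hw ⊢
    tauto

/-- The endpoint map of the Cayley graph. -/
def cayley (S : Set E) (e : E × S) : E × E := (e.1, e.1 * e.2)

lemma mem_coboundary_cayley {S : Set E} {C : Set E} {e : E × S} :
    e ∈ coboundary (cayley S) C ↔ ¬ (e.1 ∈ C ↔ e.1 * e.2 ∈ C) := Iff.rfl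

lemma almostInvariant_of_finite {S : Set E} (hS : Subgroup.closure S = ⊤) {C : Set E}
    (h : (coboundary (cayley S) C).Finite) : AlmostInvariant C := by
  refine almostInvariant_of_closure hS fun s hs => ?_
  refine (h.image Prod.fst).subset fun x hx => ⟨(x, ⟨s, hs⟩), hx, rfl⟩

lemma AlmostInvariant.finite_coboundary {S : Set E} (hS : S.Finite) {C : Set E}
    (h : AlmostInvariant C) : (coboundary (cayley S) C).Finite := by
  have : Finite S := hS
  have hfin : (⋃ s : S, (fun x : E => (x, s)) '' {x | ¬ (x ∈ C ↔ x * (s : E) ∈ C)}).Finite :=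
    Set.finite_iUnion fun s => (h s).image _
  refine hfin.subset fun e he => ?_
  exact Set.mem_iUnion.2 ⟨e.2, e.1, he, rfl⟩

lemma cayley_connected {S : Set E} (hS : Subgroup.closure S = ⊤) (C : Set E)
    (h : coboundary (cayley S) C = ∅) : C = ∅ ∨ C = Set.univ := by
  have key : ∀ c x, x ∈ C ↔ x * c ∈ C := by
    intro c
    have hc : c ∈ Subgroup.closure S := hS ▸ Subgroup.mem_top c
    induction hc using Subgroup.closure_induction with
    | mem s hs =>
      intro x
      by_contra hx
      have : (x, (⟨s, hs⟩ : S)) ∈ coboundary (cayley S) C := hx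
      rw [h] at this
      exact this
    | one => simp
    | mul a b _ _ ha hb => intro x; rw [ha x, hb (x * a), mul_assoc]
    | inv a _ ha => intro x; rw [ha (x * a⁻¹), inv_mul_cancel_right]
  rcases C.eq_empty_or_nonempty with h' | ⟨y, hy⟩
  · exact .inl h'
  · refine .inr (Set.eq_univ_of_forall fun x => ?_)
    have := (key (y⁻¹ * x) y).1 hy
    rwa [mul_inv_cancel_left] at this

lemma coboundary_cayley_smul (S : Set E) (g : E) (C : Set E) :
    coboundary (cayley S) (g • C) =
      (fun e : E × S => (g * e.1, e.2)) '' coboundary (cayley S) C := by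
  ext ⟨x, s⟩
  constructor
  · intro h
    refine ⟨(g⁻¹ * x, s), ?_, by simp⟩
    simpa [mem_coboundary_cayley, Set.mem_smul_set_iff_inv_smul_mem, mul_assoc] using h
  · rintro ⟨⟨y, t⟩, h, heq⟩
    obtain ⟨rfl, rfl⟩ := Prod.ext_iff.1 heq
    simpa [mem_coboundary_cayley, Set.mem_smul_set_iff_inv_smul_mem, mul_assoc] using h

lemma ncard_coboundary_cayley_smul (S : Set E) (g : E) (C : Set E) :
    (coboundary (cayley S) (g • C)).ncard = (coboundary (cayley S) C).ncard := by
  rw [coboundary_cayley_smul]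
  refine Set.ncard_image_of_injective _ fun a b h => ?_
  simp only [Prod.mk.injEq, mul_right_inj] at h
  exact Prod.ext h.1 h.2

lemma finite_coboundary_cayley_smul {S : Set E} {g : E} {C : Set E} :
    (coboundary (cayley S) (g • C)).Finite ↔ (coboundary (cayley S) C).Finite := by
  rw [coboundary_cayley_smul]
  refine Set.finite_image_iff (Function.Injective.injOn fun a b h => ?_)
  simp only [Prod.mk.injEq, mul_right_inj] at h
  exact Prod.ext h.1 h.2

/-- The pair of limits of `x ^ k * g` for `k → ∞` and `k → -∞`. -/
noncomputable def endPair (x g : E) : Ultrafilter E × Ultrafilter E :=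
  ((Filter.hyperfilter ℕ).map fun k => x ^ k * g, (Filter.hyperfilter ℕ).map fun k => x⁻¹ ^ k * g)

/-- The pairs of limits of powers of nontrivial elements of `F`. -/
def endPairs (F : Subgroup E) : Set (Ultrafilter E × Ultrafilter E) :=
  {α | ∃ x ∈ F, x ≠ 1 ∧ ∃ g, α = endPair x g}

/-- Translation of pairs of ultrafilters. -/
def translatePair (h : E) (α : Ultrafilter E × Ultrafilter E) : Ultrafilter E × Ultrafilter E :=
  (α.1.map (h * ·), α.2.map (h * ·))

lemma translatePair_endPair (h x g : E) :
    translatePair h (endPair x g) = endPair (h * x * h⁻¹) (h * g) := by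
  have key : ∀ y : E, ((Filter.hyperfilter ℕ).map fun k => y ^ k * g).map (h * ·) =
      (Filter.hyperfilter ℕ).map fun k => (h * y * h⁻¹) ^ k * (h * g) := by
    intro y
    rw [Ultrafilter.map_map]
    congr 1
    ext k
    rw [conj_pow]
    simp [mul_assoc]
  refine Prod.ext (key x) ?_
  have := key x⁻¹
  rw [← conj_inv] at this
  exact this

lemma translatePair_mem {F : Subgroup E} [F.Normal] (h : E) {α : Ultrafilter E × Ultrafilter E}
    (hα : α ∈ endPairs F) : translatePair h α ∈ endPairs F := by
  obtain ⟨x, hx, hx1, g, rfl⟩ := hα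
  exact ⟨h * x * h⁻¹, ‹F.Normal›.conj_mem x hx h, by simpa using hx1, h * g,
    translatePair_endPair h x g⟩

lemma translatePair_inv (h : E) (α : Ultrafilter E × Ultrafilter E) :
    translatePair h⁻¹ (translatePair h α) = α := by
  have : ((fun x => h⁻¹ * x) ∘ fun x => h * x) = id := by ext; simp
  refine Prod.ext ?_ ?_ <;> simp [translatePair, Ultrafilter.map_map, this]

lemma separates_translatePair {h : E} {α : Ultrafilter E × Ultrafilter E} {C : Set E} :
    Separates (translatePair h α) (h • C) ↔ Separates α C := by
  have : (fun x => h * x) ⁻¹' (h • C) = C := by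
    ext x
    exact Set.smul_mem_smul_set_iff
  simp [Separates, translatePair, Ultrafilter.mem_map, this]

lemma crosses_smul {g : E} {C D : Set E} : Crosses (g • C) (g • D) ↔ Crosses C D := by
  simp only [Crosses, ← Set.smul_set_compl, ← Set.smul_set_inter, Set.smul_set_nonempty]

lemma IsMinCut.smul {S : Set E} {α : Ultrafilter E × Ultrafilter E} {C : Set E}
    (h : IsMinCut (cayley S) α C) (g : E) : IsMinCut (cayley S) (translatePair g α) (g • C) := by
  refine ⟨separates_translatePair.2 h.separates, finite_coboundary_cayley_smul.2 h.finite,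
    fun D hD hD' => ?_⟩
  have h₁ : Separates α (g⁻¹ • D) := by
    rw [← separates_translatePair (h := g), smul_inv_smul]
    exact hD
  have := h.le _ h₁ (finite_coboundary_cayley_smul.2 hD')
  rwa [ncard_coboundary_cayley_smul] at this ⊢

lemma smul_mem_minCuts {S : Set E} {F : Subgroup E} [F.Normal] {C : Set E} (g : E)
    (h : C ∈ minCuts (cayley S) (endPairs F)) : g • C ∈ minCuts (cayley S) (endPairs F) := by
  obtain ⟨α, hα, hC⟩ := h
  exact ⟨_, translatePair_mem g hα, hC.smul g⟩

lemma ncard_crossing_smul (S : Set E) (F : Subgroup E) [F.Normal] (g : E) (C : Set E) :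
    (crossing (cayley S) (endPairs F) (g • C)).ncard =
      (crossing (cayley S) (endPairs F) C).ncard := by
  have : crossing (cayley S) (endPairs F) (g • C) =
      (fun X => g • X) '' crossing (cayley S) (endPairs F) C := by
    ext X
    constructor
    · rintro ⟨hX, hc⟩
      refine ⟨g⁻¹ • X, ⟨smul_mem_minCuts _ hX, ?_⟩, smul_inv_smul g X⟩
      rwa [← crosses_smul (g := g), smul_inv_smul]
    · rintro ⟨Y, ⟨hY, hc⟩, rfl⟩
      exact ⟨smul_mem_minCuts _ hY, crosses_smul.2 hc⟩
  rw [this]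
  exact Set.ncard_image_of_injective _ (MulAction.injective g)

lemma IsOptCut.smul {S : Set E} {F : Subgroup E} [F.Normal] {α : Ultrafilter E × Ultrafilter E}
    {C : Set E} (h : IsOptCut (cayley S) (endPairs F) α C) (g : E) :
    IsOptCut (cayley S) (endPairs F) (translatePair g α) (g • C) := by
  refine ⟨h.isMinCut.smul g, fun D hD => ?_⟩
  have h₁ := hD.smul g⁻¹
  rw [translatePair_inv] at h₁
  have := h.le _ h₁
  rwa [ncard_crossing_smul] at this ⊢

/-- A family of subsets of a group `E` that is invariant, nested and discrete, together with enough
dynamics of a normal subgroup `F` on it. -/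
structure CutSystem (F : Subgroup E) where
  cuts : Set (Set E)
  smul_mem : ∀ (g : E) {W : Set E}, W ∈ cuts → g • W ∈ cuts
  compl_mem : ∀ {W : Set E}, W ∈ cuts → Wᶜ ∈ cuts
  nested : ∀ {W W' : Set E}, W ∈ cuts → W' ∈ cuts → ¬ Crosses W W'
  finite : ∀ x y : E, {W | W ∈ cuts ∧ x ∈ W ∧ y ∉ W}.Finite
  nonempty : ∀ {W : Set E}, W ∈ cuts → W.Nonempty
  eq_one_of_smul_eq : ∀ {W : Set E}, W ∈ cuts → ∀ f ∈ F, f • W = W → f = 1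
  exists_ssubset : ∀ f ∈ F, f ≠ 1 → ∃ W ∈ cuts, f • W ⊂ W ∨ W ⊂ f • W
  exists_smul_ssubset : ∀ {W : Set E}, W ∈ cuts → ∃ f ∈ F, f • W ⊂ W

/-- If `C` separates the two limits of `x ^ k * g`, then `x` shifts `C`, provided that `C` and
`x • C` are nested. -/
lemma shift_of_separates {x g : E} (hx : ∀ k : ℕ, x ^ k = 1 → k = 0) {C : Set E}
    (hC : AlmostInvariant C) (hsep : Separates (endPair x g) C) (hne : x • C ≠ C)
    (hcross : ¬ Crosses C (x • C)) : x • C ⊂ C ∨ C ⊂ x • C := by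
  have hinter : ∀ (u : Ultrafilter E) (A B : Set E), A ∩ B ∈ u ↔ A ∈ u ∧ B ∈ u := fun u A B =>
    Filter.inter_mem_iff (f := (u : Filter E))
  have key : ∀ y : E, (∀ k : ℕ, y ^ k = 1 → k = 0) → (∃ c : E, ∀ k : ℕ,
      x⁻¹ * (y ^ k * g) = y ^ k * g * c) →
      (x • C ∈ (Filter.hyperfilter ℕ).map (fun k => y ^ k * g) ↔
        C ∈ (Filter.hyperfilter ℕ).map (fun k => y ^ k * g)) := by
    rintro y hy ⟨c, hc⟩
    have hinj : Function.Injective fun k : ℕ => y ^ k * g := by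
      intro a b hab
      simp only [mul_left_inj] at hab
      wlog h : a ≤ b generalizing a b
      · exact (this hab.symm (le_of_not_ge h)).symm
      obtain ⟨m, rfl⟩ := Nat.exists_eq_add_of_le h
      rw [pow_add, left_eq_mul] at hab
      rw [hy m hab, add_zero]
    have hfin : {k : ℕ | ¬ (y ^ k * g ∈ C ↔ y ^ k * g * c ∈ C)}.Finite :=
      (hC c).preimage hinj.injOn
    have hev : ∀ᶠ k in (Filter.hyperfilter ℕ : Filter ℕ), (y ^ k * g ∈ C ↔ y ^ k * g * c ∈ C) := by
      have := Filter.compl_mem_hyperfilter_of_finite hfin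
      filter_upwards [this] with k hk
      by_contra h
      exact hk h
    rw [Ultrafilter.mem_map, Ultrafilter.mem_map]
    refine Filter.eventually_congr (f := (Filter.hyperfilter ℕ : Filter ℕ)) ?_
    filter_upwards [hev] with k hk
    rw [Set.mem_smul_set_iff_inv_smul_mem, smul_eq_mul, hc k]
    exact hk.symm
  have key₁ := key x hx ⟨g⁻¹ * x⁻¹ * g, fun k => by
    have : x⁻¹ * x ^ k = x ^ k * x⁻¹ := ((Commute.refl x).pow_left k).inv_right.eq.symm
    rw [← mul_assoc, this]; group⟩
  have key₂ := key x⁻¹ (fun k hk => hx k (by rwa [inv_pow, inv_eq_one] at hk))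
    ⟨g⁻¹ * x⁻¹ * g, fun k => by
      have : x⁻¹ * x⁻¹ ^ k = x⁻¹ ^ k * x⁻¹ := ((Commute.refl x⁻¹).pow_left k).eq.symm
      rw [← mul_assoc, this]; group⟩
  set u := (Filter.hyperfilter ℕ).map (fun k => x ^ k * g) with hu
  set v := (Filter.hyperfilter ℕ).map (fun k => x⁻¹ ^ k * g) with hv
  have hsep' : ¬ (C ∈ u ↔ C ∈ v) := hsep
  have hboth : (C ∩ x • C).Nonempty ∧ (Cᶜ ∩ (x • C)ᶜ).Nonempty := by
    by_cases hCu : C ∈ u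
    · have hCv : C ∉ v := by tauto
      exact ⟨u.nonempty_of_mem ((hinter _ _ _).2 ⟨hCu, key₁.2 hCu⟩),
        v.nonempty_of_mem ((hinter _ _ _).2 ⟨Ultrafilter.compl_mem_iff_notMem.2 hCv,
          Ultrafilter.compl_mem_iff_notMem.2 fun h => hCv (key₂.1 h)⟩)⟩
    · have hCv : C ∈ v := by tauto
      exact ⟨v.nonempty_of_mem ((hinter _ _ _).2 ⟨hCv, key₂.2 hCv⟩),
        u.nonempty_of_mem ((hinter _ _ _).2 ⟨Ultrafilter.compl_mem_iff_notMem.2 hCu,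
          Ultrafilter.compl_mem_iff_notMem.2 fun h => hCu (key₁.1 h)⟩)⟩
  obtain ⟨⟨a, ha, ha'⟩, ⟨b, hb, hb'⟩⟩ := hboth
  rcases subset_cases_of_not_crosses hcross with h | h | h | h
  · exact absurd ha' (h ha)
  · exact .inr (h.ssubset_of_ne hne.symm)
  · exact .inl (h.ssubset_of_ne hne)
  · exact absurd (h hb') hb

lemma eq_one_of_smul_eq_of_finite {S : Set E} (hS : Subgroup.closure S = ⊤) {f : E}
    (hf : ∀ k : ℕ, f ^ k = 1 → k ≠ 0 → f = 1) {W : Set E} (hW : W ≠ ∅) (hW' : W ≠ Set.univ)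
    (hfin : (coboundary (cayley S) W).Finite) (h : f • W = W) : f = 1 := by
  have hne : (coboundary (cayley S) W).Nonempty := by
    rw [Set.nonempty_iff_ne_empty]
    intro h'
    rcases cayley_connected hS W h' with h | h
    · exact hW h
    · exact hW' h
  obtain ⟨⟨x, s⟩, hxs⟩ := hne
  have hpow : ∀ k : ℕ, f ^ k • W = W := by
    intro k
    induction k with
    | zero => simp
    | succ k ih => rw [pow_succ, mul_smul, h, ih]
  have hmem : ∀ k : ℕ, (f ^ k * x, s) ∈ coboundary (cayley S) W := by
    intro k
    rw [← hpow k, coboundary_cayley_smul]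
    exact ⟨(x, s), hxs, rfl⟩
  obtain ⟨a, -, b, -, hab, heq⟩ := Set.infinite_univ.exists_ne_map_eq_of_mapsTo
    (f := fun k : ℕ => (f ^ k * x, s)) (fun k _ => hmem k) hfin
  simp only [Prod.mk.injEq, mul_left_inj, and_true] at heq
  wlog hlt : a < b generalizing a b
  · exact this b a hab.symm heq.symm (lt_of_le_of_ne (not_lt.1 hlt) hab.symm)
  obtain ⟨m, rfl⟩ := Nat.exists_eq_add_of_le hlt.le
  rw [pow_add, left_eq_mul] at heq
  exact hf m heq (by omega)

end GroupCuts

section Existence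

lemma smul_set_ssubset_iff {E : Type*} [Group E] {g : E} {A B : Set E} :
    g • A ⊂ g • B ↔ A ⊂ B := by
  simp only [Set.ssubset_def, Set.smul_set_subset_smul_set_iff]

variable {E : Type*} [Group E] {X : Type*}

lemma pow_eq_one_of_mem_range {ι : FreeGroup X →* E} (hι : Function.Injective ι) {x : E}
    (hx : x ∈ ι.range) {k : ℕ} (h : x ^ k = 1) (hk : k ≠ 0) : x = 1 := by
  obtain ⟨f, rfl⟩ := hx
  rw [← map_pow, ← map_one ι] at h
  have : f ^ k = 1 := hι h
  rw [(pow_eq_one_iff_left hk).1 this, map_one]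

/-- A group containing a finitely generated free group as a normal subgroup of finite index
is generated by a finite set. -/
lemma exists_finite_closure_eq_top (ι : FreeGroup X →* E) [Finite X] [ι.range.Normal]
    [Finite (E ⧸ ι.range)] :
    ∃ S : Set E, S.Finite ∧ Subgroup.closure S = ⊤ := by
  refine ⟨Set.range (fun x => ι (FreeGroup.of x)) ∪ Set.range (Quotient.out : E ⧸ ι.range → E),
    (Set.finite_range _).union (Set.finite_range _), ?_⟩
  rw [eq_top_iff]
  intro e _
  have h₁ : ι.range ≤ Subgroup.closure (Set.range (fun x => ι (FreeGroup.of x)) ∪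
      Set.range (Quotient.out : E ⧸ ι.range → E)) := by
    rw [MonoidHom.range_eq_map, ← FreeGroup.closure_range_of, MonoidHom.map_closure]
    refine Subgroup.closure_mono (Set.subset_union_of_subset_left ?_ _)
    rintro - ⟨-, ⟨x, rfl⟩, rfl⟩
    exact ⟨x, rfl⟩
  have h₂ : (Quotient.out (e : E ⧸ ι.range))⁻¹ * e ∈ ι.range := by
    rw [← QuotientGroup.eq]
    exact Quotient.out_eq _
  have h₃ : Quotient.out (e : E ⧸ ι.range) ∈ Subgroup.closure
      (Set.range (fun x => ι (FreeGroup.of x)) ∪ Set.range (Quotient.out : E ⧸ ι.range → E)) :=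
    Subgroup.subset_closure (Or.inr ⟨_, rfl⟩)
  have := mul_mem h₃ (h₁ h₂)
  rwa [mul_inv_cancel_left] at this

/-- Every pair of limits of powers is separated by one of finitely many sets up to translation. -/
lemma exists_separating_family [DecidableEq X] {ι : FreeGroup X →* E} (hι : Function.Injective ι)
    [ι.range.Normal] [Finite (E ⧸ ι.range)] :
    ∃ H : X × Bool → Set E, (∀ a, AlmostInvariant (H a)) ∧
      ∀ α ∈ endPairs ι.range, ∃ (a : X × Bool) (g : E), Separates α (g • H a) := by
  have hw : ∀ e : E, ∃ w, ι w = e * (Quotient.out (e : E ⧸ ι.range))⁻¹ := by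
    intro e
    have : e * (Quotient.out (e : E ⧸ ι.range))⁻¹ ∈ ι.range := by
      rw [← QuotientGroup.eq_one_iff, QuotientGroup.mk_mul, QuotientGroup.mk_inv,
        QuotientGroup.out_eq', mul_inv_cancel]
    exact this
  choose w hw using hw
  refine ⟨fun a => {e | (w e).toWord.head? = some a}, fun a c => ?_, ?_⟩
  · have hv : ∀ q : E ⧸ ι.range, ∃ v, ι v = Quotient.out q * c *
        (Quotient.out (q * (c : E ⧸ ι.range)))⁻¹ := by
      intro q
      have : Quotient.out q * c * (Quotient.out (q * (c : E ⧸ ι.range)))⁻¹ ∈ ι.range := by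
        rw [← QuotientGroup.eq_one_iff, QuotientGroup.mk_mul, QuotientGroup.mk_mul,
          QuotientGroup.mk_inv, QuotientGroup.out_eq', QuotientGroup.out_eq', mul_inv_cancel]
      exact this
    choose v hv using hv
    have hmul : ∀ e : E, w (e * c) = w e * v e := by
      intro e
      apply hι
      rw [map_mul, hw, hw, hv, QuotientGroup.mk_mul]
      group
    have hfin : (⋃ q : E ⧸ ι.range, (fun z => ι z * Quotient.out q) ''
        {z : FreeGroup X | ¬ (z.toWord.head? = some a ↔ (z * v q).toWord.head? = some a)}).Finite :=
      Set.finite_iUnion fun q => (finite_head_ne a (v q)).image _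
    refine hfin.subset fun e he => ?_
    refine Set.mem_iUnion.2 ⟨e, w e, ?_, by simp [hw]⟩
    simp only [Set.mem_ofPred_eq, hmul] at he ⊢
    exact he
  · rintro - ⟨-, ⟨f, rfl⟩, hf, g, rfl⟩
    have hf' : f ≠ 1 := fun h => hf (by rw [h, map_one])
    obtain ⟨u, c, a, rfl, hc, hc'⟩ := exists_conj_head f hf'
    refine ⟨a, ι u, ?_⟩
    have hc1 : c ≠ 1 := by
      rintro rfl
      simp at hf'
    have hmul : ∀ (z : FreeGroup X) (e : E), w (ι z * e) = z * w e := by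
      intro z e
      apply hι
      have : ((ι z * e : E) : E ⧸ ι.range) = e := by
        rw [QuotientGroup.mk_mul, (QuotientGroup.eq_one_iff (N := ι.range) (ι z)).2 ⟨z, rfl⟩,
          one_mul]
      rw [hw, map_mul, hw, this, mul_assoc]
    have key : ∀ y : FreeGroup X, y ≠ 1 → ∀ᶠ k in (Filter.hyperfilter ℕ : Filter ℕ),
        (ι (u * y * u⁻¹) ^ k * g ∈ ι u • {e | (w e).toWord.head? = some a} ↔
          (y ^ k).toWord.head? = some a) := by
      intro y hy
      have hinj : Function.Injective fun k : ℕ => y ^ k := by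
        refine injective_pow_iff_not_isOfFinOrder.2 fun h => ?_
        obtain ⟨k, hk, hk'⟩ := isOfFinOrder_iff_pow_eq_one.1 h
        exact hy ((pow_eq_one_iff_left hk.ne').1 hk')
      have hfin := (finite_head_ne a (w ((ι u)⁻¹ * g))).preimage (f := fun k : ℕ => y ^ k)
        hinj.injOn
      filter_upwards [Filter.compl_mem_hyperfilter_of_finite hfin] with k hk
      have hk' : ((y ^ k).toWord.head? = some a ↔
          (y ^ k * w ((ι u)⁻¹ * g)).toWord.head? = some a) := by
        by_contra h
        exact hk h
      rw [hk', Set.mem_smul_set_iff_inv_smul_mem, smul_eq_mul, ← hmul, Set.mem_ofPred_eq]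
      have : (ι u)⁻¹ * (ι (u * y * u⁻¹) ^ k * g) = ι (y ^ k) * ((ι u)⁻¹ * g) := by
        rw [← map_pow, conj_pow, map_mul, map_mul, map_inv]
        group
      rw [this]
    have hpos : ι u • {e | (w e).toWord.head? = some a} ∈ (endPair (ι (u * c * u⁻¹)) g).1 := by
      rw [endPair, Ultrafilter.mem_map]
      have hk0 : ∀ᶠ k in (Filter.hyperfilter ℕ : Filter ℕ), k ≠ 0 :=
        Filter.compl_mem_hyperfilter_of_finite (Set.finite_singleton 0)
      filter_upwards [key c hc1, hk0] with k hk hk0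
      exact hk.2 (hc k hk0)
    have hneg : ι u • {e | (w e).toWord.head? = some a} ∉ (endPair (ι (u * c * u⁻¹)) g).2 := by
      rw [endPair, Ultrafilter.mem_map]
      intro hmem
      obtain ⟨k, hk, hk'⟩ := (Filter.Eventually.and (key c⁻¹ (by simpa using hc1)) hmem).exists
      refine hc' k (hk.1 ?_)
      rw [← conj_inv, map_inv]
      exact hk'
    intro h
    exact hneg (h.1 hpos)

/-- A group containing a finitely generated free group as a normal subgroup of finite index
has a cut system. -/
theorem exists_cutSystem [DecidableEq X] {ι : FreeGroup X →* E} (hι : Function.Injective ι)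
    [Finite X] [ι.range.Normal] [Finite (E ⧸ ι.range)] : Nonempty (CutSystem ι.range) := by
  obtain ⟨S, hSfin, hS⟩ := exists_finite_closure_eq_top ι
  obtain ⟨H, hH, hsep⟩ := exists_separating_family hι
  obtain ⟨K, hK⟩ : ∃ K, ∀ a, (coboundary (cayley S) (H a)).ncard ≤ K := by
    obtain ⟨K, hK⟩ := (Set.finite_range fun a => (coboundary (cayley S) (H a)).ncard).bddAbove
    exact ⟨K, fun a => hK ⟨a, rfl⟩⟩
  set P := endPairs ι.range with hP
  have hcut : ∀ α ∈ P, ∃ C, Separates α C ∧ (coboundary (cayley S) C).Finite ∧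
      (coboundary (cayley S) C).ncard ≤ K := by
    intro α hα
    obtain ⟨a, g, h⟩ := hsep α hα
    exact ⟨_, h, finite_coboundary_cayley_smul.2 ((hH a).finite_coboundary hSfin),
      by rw [ncard_coboundary_cayley_smul]; exact hK a⟩
  have hbond : ∀ C ∈ minCuts (cayley S) P, IsBond (cayley S) K C := by
    rintro C ⟨α, hα, hC⟩
    obtain ⟨D, hD, hD', hDK⟩ := hcut α hα
    exact hC.isBond (cayley_connected hS) ((hC.le D hD hD').trans hDK)
  have hcross : ∀ C ∈ minCuts (cayley S) P, (crossing (cayley S) P C).Finite := by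
    intro C hC
    refine (finite_bonds_crossing (cayley S) K (hbond C hC).finite).subset ?_
    rintro Y ⟨hY, hYC⟩
    exact ⟨hbond Y hY, hYC⟩
  have hne : ∀ {W : Set E} {α}, IsOptCut (cayley S) P α W → W ≠ ∅ ∧ W ≠ Set.univ := by
    intro W α hW
    have := hW.isMinCut.separates
    constructor <;> rintro rfl
    · simp [Separates] at this
    · exact this ⟨fun _ => Filter.univ_mem, fun _ => Filter.univ_mem⟩
  have hone : ∀ {W : Set E} {α}, IsOptCut (cayley S) P α W → ∀ f ∈ ι.range, f • W = W → f = 1 :=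
    fun hW f hf h => eq_one_of_smul_eq_of_finite hS
      (fun _ hk hk0 => pow_eq_one_of_mem_range hι hf hk hk0) (hne hW).1 (hne hW).2
      hW.isMinCut.finite h
  have hshift : ∀ {W : Set E} {x g : E}, x ∈ ι.range → x ≠ 1 →
      IsOptCut (cayley S) P (endPair x g) W → x • W ⊂ W ∨ W ⊂ x • W := by
    intro W x g hx hx1 hW
    have hα : endPair x g ∈ P := ⟨x, hx, hx1, g, rfl⟩
    refine shift_of_separates (g := g) (fun k hk => ?_)
      (almostInvariant_of_finite hS hW.isMinCut.finite) hW.isMinCut.separates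
      (fun h => hx1 (hone hW x hx h))
      (hW.not_crosses hcross hα (translatePair_mem x hα) (hW.smul x))
    by_contra hk0
    exact hx1 (pow_eq_one_of_mem_range hι hx hk hk0)
  refine ⟨⟨{W | ∃ α ∈ P, IsOptCut (cayley S) P α W}, ?_, ?_, ?_, ?_, ?_, ?_, ?_, ?_⟩⟩
  · rintro g W ⟨α, hα, hW⟩
    exact ⟨_, translatePair_mem g hα, hW.smul g⟩
  · rintro W ⟨α, hα, hW⟩
    exact ⟨α, hα, hW.compl⟩
  · rintro W W' ⟨α, hα, hW⟩ ⟨β, hβ, hW'⟩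
    exact hW.not_crosses hcross hα hβ hW'
  · intro x y
    refine (finite_bonds_separating (cayley S) K x y).subset ?_
    rintro W ⟨⟨α, hα, hW⟩, hx, hy⟩
    exact ⟨hbond W ⟨α, hα, hW.isMinCut⟩, hx, hy⟩
  · rintro W ⟨α, hα, hW⟩
    exact Set.nonempty_iff_ne_empty.2 (hne hW).1
  · rintro W ⟨α, hα, hW⟩ f hf h
    exact hone hW f hf h
  · intro f hf hf1
    have hα : endPair f 1 ∈ P := ⟨f, hf, hf1, 1, rfl⟩
    obtain ⟨C, hC, hC', -⟩ := hcut _ hα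
    obtain ⟨W, hW⟩ := exists_isOptCut (cayley S) P ⟨C, hC, hC'⟩
    exact ⟨W, ⟨_, hα, hW⟩, hshift hf hf1 hW⟩
  · rintro W ⟨-, ⟨x, hx, hx1, g, rfl⟩, hW⟩
    rcases hshift hx hx1 hW with h | h
    · exact ⟨x, hx, h⟩
    · refine ⟨x⁻¹, inv_mem hx, ?_⟩
      have := (smul_set_ssubset_iff (g := x⁻¹)).2 h
      rwa [inv_smul_smul] at this

end Existence

section Nested

variable {V : Type*}

/-- A nested discrete family of subsets, closed under complements. -/
structure IsNested (O : Set (Set V)) : Prop where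
  compl_mem : ∀ {W : Set V}, W ∈ O → Wᶜ ∈ O
  nested : ∀ {W W' : Set V}, W ∈ O → W' ∈ O → ¬ Crosses W W'
  finite : ∀ x y : V, {W | W ∈ O ∧ x ∈ W ∧ y ∉ W}.Finite
  nonempty : ∀ {W : Set V}, W ∈ O → W.Nonempty

/-- Two members of a nested family are adjacent if they point to the same vertex of the
associated tree. -/
def Adj (O : Set (Set V)) (A B : Set V) : Prop :=
  A = B ∨ (A ⊂ Bᶜ ∧ ∀ W ∈ O, A ⊂ W → ¬ W ⊂ Bᶜ)

variable {O : Set (Set V)}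

lemma Adj.refl (A : Set V) : Adj O A A := .inl rfl

lemma Adj.eq_or_subset_compl {A B : Set V} (h : Adj O A B) : A = B ∨ A ⊆ Bᶜ :=
  h.imp id fun h => h.1.subset

lemma IsNested.adj_symm (hO : IsNested O) {A B : Set V} (h : Adj O A B) : Adj O B A := by
  rcases h with h | ⟨h, h'⟩
  · exact .inl h.symm
  · refine .inr ⟨?_, fun W hW h₁ h₂ => h' Wᶜ (hO.compl_mem hW) ?_ ?_⟩
    · have := compl_lt_compl_iff_lt.2 h
      rwa [compl_compl] at this
    · have := compl_lt_compl_iff_lt.2 h₂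
      rwa [compl_compl] at this
    · exact compl_lt_compl_iff_lt.2 h₁

lemma IsNested.not_subset_compl (hO : IsNested O) {A B : Set V} (hA : A ∈ O) (h : A ⊆ B) :
    ¬ A ⊆ Bᶜ := by
  intro h'
  obtain ⟨x, hx⟩ := hO.nonempty hA
  exact h' hx (h hx)

lemma IsNested.subset_cases (hO : IsNested O) {A B : Set V} (hA : A ∈ O) (hB : B ∈ O) :
    A ⊆ Bᶜ ∨ A ⊆ B ∨ B ⊆ A ∨ Bᶜ ⊆ A :=
  subset_cases_of_not_crosses (hO.nested hA hB)

lemma IsNested.adj_trans (hO : IsNested O) {A B C : Set V} (hA : A ∈ O) (hB : B ∈ O) (hC : C ∈ O)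
    (h : Adj O A B) (h' : Adj O B C) : Adj O A C := by
  by_cases hAC : A = C
  · exact .inl hAC
  have hs := hO.adj_symm h
  have hs' := hO.adj_symm h'
  rcases h with rfl | ⟨h₁, h₂⟩
  · exact h'
  rcases hs with rfl | ⟨hs₁, -⟩
  · exact h'
  rcases h' with rfl | ⟨h₁', h₂'⟩
  · exact .inr ⟨h₁, h₂⟩
  rcases hs' with rfl | ⟨hs₁', hs₂'⟩
  · exact .inr ⟨h₁, h₂⟩
  rcases hO.subset_cases hA hC with h | h | h | h
  · refine .inr ⟨h.ssubset_of_ne ?_, fun W hW hAW hWC => ?_⟩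
    · rintro rfl
      exact hO.not_subset_compl hB h₁'.subset hs₁.subset
    · rcases hO.subset_cases hW hB with hWB | hWB | hWB | hWB
      · rcases eq_or_ne W Bᶜ with rfl | hne
        · exact hO.not_subset_compl hC (compl_le_compl_iff_le.1 hWC.subset) hs₁'.subset
        · exact h₂ W hW hAW (hWB.ssubset_of_ne hne)
      · exact hO.not_subset_compl hA (hAW.subset.trans hWB) h₁.subset
      · rcases eq_or_ne B W with rfl | hne
        · exact hO.not_subset_compl hA hAW.subset h₁.subset
        · exact h₂' W hW (hWB.ssubset_of_ne hne) hWC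
      · exact hO.not_subset_compl hC (compl_le_compl_iff_le.1 (hWB.trans hWC.subset))
          hs₁'.subset
  · exact absurd hs₁' (h₂ C hC (h.ssubset_of_ne hAC))
  · exact absurd h₁ (hs₂' A hA (h.ssubset_of_ne (Ne.symm hAC)))
  · exact absurd hs₁.subset (hO.not_subset_compl hB (h₁'.subset.trans h))

lemma IsNested.finite_Icc (hO : IsNested O) {A B : Set V} (hA : A ∈ O) (hB : B ∈ O) :
    {W | W ∈ O ∧ A ⊆ W ∧ W ⊆ B}.Finite := by
  obtain ⟨x, hx⟩ := hO.nonempty hA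
  obtain ⟨y, hy⟩ := hO.nonempty (hO.compl_mem hB)
  exact (hO.finite x y).subset fun W hW => ⟨hW.1, hW.2.1 hx, fun h => hy (hW.2.2 h)⟩

/-- The member next to `A` on the way from `A` to `B`. -/
lemma IsNested.exists_next (hO : IsNested O) {A B : Set V} (hA : A ∈ O) (hB : B ∈ O)
    (h : A ⊂ B) : ∃ Y ∈ O, A ⊂ Y ∧ Y ⊆ B ∧ Adj O A Yᶜ := by
  obtain ⟨Y, hY⟩ := Set.Finite.exists_minimal (s := {W | W ∈ O ∧ A ⊂ W ∧ W ⊆ B})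
    ((hO.finite_Icc hA hB).subset fun W hW => ⟨hW.1, hW.2.1.subset, hW.2.2⟩) ⟨B, hB, h, le_rfl⟩
  obtain ⟨⟨h₁, h₂, h₃⟩, hmin⟩ := hY
  refine ⟨Y, h₁, h₂, h₃, .inr ⟨by rwa [compl_compl], fun W hW hAW hWY => ?_⟩⟩
  rw [compl_compl] at hWY
  exact hWY.2 (hmin ⟨hW, hAW, hWY.subset.trans h₃⟩ hWY.subset)

lemma IsNested.exists_adj_of_subset (hO : IsNested O) {C W : Set V} (hC : C ∈ O) (hW : W ∈ O)
    (h : W ⊂ Cᶜ) : ∃ Y ∈ O, W ⊆ Y ∧ Adj O Y C := by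
  have h' : C ⊂ Wᶜ := by
    have := compl_lt_compl_iff_lt.2 h
    rwa [compl_compl] at this
  obtain ⟨Y, hY, -, h₂, h₃⟩ := hO.exists_next hC (hO.compl_mem hW) h'
  refine ⟨Yᶜ, hO.compl_mem hY, Set.subset_compl_comm.1 h₂, hO.adj_symm h₃⟩

/-- Every member of the family lies, up to complement, behind a member adjacent to `C`. -/
lemma IsNested.exists_adj (hO : IsNested O) {C W : Set V} (hC : C ∈ O) (hW : W ∈ O) :
    ∃ Y ∈ O, Adj O Y C ∧ (W ⊆ Y ∨ Wᶜ ⊆ Y) := by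
  have key : ∀ W ∈ O, W ⊆ Cᶜ → ∃ Y ∈ O, Adj O Y C ∧ (W ⊆ Y ∨ Wᶜ ⊆ Y) := by
    intro W hW h
    rcases eq_or_ne W Cᶜ with rfl | hne
    · exact ⟨C, hC, Adj.refl C, .inr (by rw [compl_compl])⟩
    · obtain ⟨Y, hY, h₁, h₂⟩ := hO.exists_adj_of_subset hC hW (h.ssubset_of_ne hne)
      exact ⟨Y, hY, h₂, .inl h₁⟩
  rcases hO.subset_cases hW hC with h | h | h | h
  · exact key W hW h
  · exact ⟨C, hC, Adj.refl C, .inl h⟩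
  · obtain ⟨Y, hY, h₁, h₂⟩ := key Wᶜ (hO.compl_mem hW) (Set.compl_subset_compl.2 h)
    rw [compl_compl] at h₂
    exact ⟨Y, hY, h₁, h₂.symm⟩
  · exact ⟨C, hC, Adj.refl C, .inr (Set.compl_subset_comm.1 h)⟩

lemma Adj.smul {E : Type*} [Group E] {O : Set (Set E)}
    (hO : ∀ (g : E) {W : Set E}, W ∈ O → g • W ∈ O) {A B : Set E}
    (h : Adj O A B) (g : E) : Adj O (g • A) (g • B) := by
  rcases h with rfl | ⟨h₁, h₂⟩
  · exact Adj.refl _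
  · rw [Adj, ← Set.smul_set_compl]
    refine .inr ⟨smul_set_ssubset_iff.2 h₁, fun W hW h h' => h₂ (g⁻¹ • W) (hO _ hW) ?_ ?_⟩
    · rwa [← smul_set_ssubset_iff (g := g), smul_inv_smul]
    · rwa [← smul_set_ssubset_iff (g := g), smul_inv_smul]

end Nested

section TrivialStabilizer

variable {E : Type*} [Group E] {F : Subgroup E}

lemma CutSystem.isNested (cs : CutSystem F) : IsNested cs.cuts :=
  ⟨cs.compl_mem, cs.nested, cs.finite, cs.nonempty⟩

lemma CutSystem.eq_one_of_adj (cs : CutSystem F) {C : Set E} (hC : C ∈ cs.cuts) {f : E}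
    (hf : f ∈ F) (h : Adj cs.cuts (f • C) C) : f = 1 := by
  by_contra hf1
  have hO := cs.isNested
  obtain ⟨W, hW, hfW⟩ : ∃ W ∈ cs.cuts, f • W ⊂ W := by
    obtain ⟨W, hW, h | h⟩ := cs.exists_ssubset f hf hf1
    · exact ⟨W, hW, h⟩
    · exact ⟨Wᶜ, cs.compl_mem hW, by rw [Set.smul_set_compl]; exact compl_lt_compl_iff_lt.2 h⟩
  obtain ⟨Y, hY, hYC, hWY⟩ := hO.exists_adj hC hW
  have hfY : Adj cs.cuts (f • Y) Y :=
    hO.adj_trans (cs.smul_mem f hY) hC hY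
      (hO.adj_trans (cs.smul_mem f hY) (cs.smul_mem f hC) hC (hYC.smul cs.smul_mem f) h)
      (hO.adj_symm hYC)
  rcases hfY.eq_or_subset_compl with h' | h'
  · exact hf1 (cs.eq_one_of_smul_eq hY f hf h')
  · rcases hWY with hWY | hWY
    · exact hO.not_subset_compl (cs.smul_mem f hW) (hfW.subset.trans hWY)
        ((Set.smul_set_mono hWY).trans h')
    · refine hO.not_subset_compl (cs.compl_mem hW) hWY (Set.Subset.trans ?_ h')
      refine (compl_le_compl_iff_le.2 hfW.subset).trans ?_
      rw [← Set.smul_set_compl]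
      exact Set.smul_set_mono hWY

/-- A cut system for a normal subgroup of prime index that contains its centralizer has a member
with trivial stabilizer. -/
theorem CutSystem.exists_trivial_stabilizer (cs : CutSystem F) [F.Normal] (hF : ∃ f ∈ F, f ≠ 1)
    (hcyc : ∀ s s' : E, s' ∉ F → ∃ k : ℕ, s⁻¹ * s' ^ k ∈ F)
    (hcent : ∀ s, s ∉ F → ∃ f ∈ F, f * s ≠ s * f) :
    ∃ C ∈ cs.cuts, ∀ g : E, g • C = C → g = 1 := by
  by_contra! hno
  have hO := cs.isNested
  have hstab : ∀ C ∈ cs.cuts, ∃ g : E, g ∉ F ∧ g • C = C := by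
    intro C hC
    obtain ⟨g, hg, hg1⟩ := hno C hC
    exact ⟨g, fun hgF => hg1 (cs.eq_one_of_smul_eq hC g hgF hg), hg⟩
  obtain ⟨f₀, hf₀, hf₀1⟩ := hF
  obtain ⟨C, hC, -⟩ := cs.exists_ssubset f₀ hf₀ hf₀1
  obtain ⟨s, hsF, hsC⟩ := hstab C hC
  have key : ∀ C ∈ cs.cuts, s • C = C → ∀ D ∈ cs.cuts, C ⊂ D → s • D = D := by
    intro C hC hsC D hD hCD
    by_contra hsD
    obtain ⟨C', ⟨hC', hCC', hC'D, hsC'⟩, hmax⟩ := Set.Finite.exists_maximal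
      (s := {W | W ∈ cs.cuts ∧ C ⊆ W ∧ W ⊆ D ∧ s • W = W})
      ((hO.finite_Icc hC hD).subset fun W hW => ⟨hW.1, hW.2.1, hW.2.2.1⟩)
      ⟨C, hC, le_rfl, hCD.subset, hsC⟩
    have hne : C' ≠ D := by
      rintro rfl
      exact hsD hsC'
    obtain ⟨Y, hY, hC'Y, hYD, hadj⟩ := hO.exists_next hC' hD (hC'D.ssubset_of_ne hne)
    have hsY : s • Y ≠ Y := fun h =>
      hC'Y.2 (hmax ⟨hY, hCC'.trans hC'Y.subset, hYD, h⟩ hC'Y.subset)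
    obtain ⟨s', hs'F, hs'Y⟩ := hstab Y hY
    obtain ⟨k, hk⟩ := hcyc s s' hs'F
    have hpow : s' ^ k • Y = Y := by
      have : ∀ k : ℕ, s' ^ k • Y = Y := by
        intro k
        induction k with
        | zero => simp
        | succ k ih => rw [pow_succ, mul_smul, hs'Y, ih]
      exact this k
    have hf1 : s⁻¹ * s' ^ k ≠ 1 := by
      intro h
      rw [inv_mul_eq_one] at h
      exact hsY (h ▸ hpow)
    refine hf1 (cs.eq_one_of_adj hC' hk ?_)
    have h₁ : Adj cs.cuts ((s⁻¹ * s' ^ k) • C') (s⁻¹ • Yᶜ) := by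
      have := hadj.smul cs.smul_mem (s⁻¹ * s' ^ k)
      rwa [mul_smul s⁻¹ _ (Yᶜ), Set.smul_set_compl (a := s' ^ k), hpow] at this
    have h₂ : Adj cs.cuts (s⁻¹ • Yᶜ) C' := by
      have := (hO.adj_symm hadj).smul cs.smul_mem s⁻¹
      rwa [inv_smul_eq_iff.2 hsC'.symm] at this
    exact hO.adj_trans (cs.smul_mem _ hC') (cs.smul_mem _ (cs.compl_mem hY)) hC' h₁ h₂
  have key' : ∀ C ∈ cs.cuts, s • C = C → ∀ D ∈ cs.cuts, C ⊆ D → s • D = D := by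
    intro C hC hsC D hD h
    rcases eq_or_ne C D with rfl | hne
    · exact hsC
    · exact key C hC hsC D hD (h.ssubset_of_ne hne)
  have hcompl : ∀ {D : Set E}, s • Dᶜ = Dᶜ → s • D = D := by
    intro D h
    rwa [Set.smul_set_compl, compl_inj_iff] at h
  have hsC' : s • Cᶜ = Cᶜ := by rw [Set.smul_set_compl, hsC]
  have hall : ∀ D ∈ cs.cuts, s • D = D := by
    intro D hD
    rcases hO.subset_cases hC hD with h | h | h | h
    · exact hcompl (key' C hC hsC _ (cs.compl_mem hD) h)
    · exact key' C hC hsC D hD h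
    · exact hcompl (key' _ (cs.compl_mem hC) hsC' _ (cs.compl_mem hD)
        (Set.compl_subset_compl.2 h))
    · exact key' _ (cs.compl_mem hC) hsC' D hD (Set.compl_subset_comm.1 h)
  obtain ⟨f, hf, hfs⟩ := hcent s hsF
  have h1 : f * s * f⁻¹ * s⁻¹ = 1 := by
    refine cs.eq_one_of_smul_eq hC _ ?_ ?_
    · have h₂ : s * f⁻¹ * s⁻¹ ∈ F := ‹F.Normal›.conj_mem _ (inv_mem hf) s
      have := mul_mem hf h₂
      rwa [← mul_assoc, ← mul_assoc] at this
    · have h₁ : s⁻¹ • C = C := inv_smul_eq_iff.2 hsC.symm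
      rw [mul_smul, h₁, mul_smul, mul_smul, hall _ (cs.smul_mem f⁻¹ hC), smul_inv_smul]
  refine hfs ?_
  rw [mul_inv_eq_one, mul_inv_eq_iff_eq_mul] at h1
  exact h1

end TrivialStabilizer

section FreeSplitting

variable {E : Type*} [Group E]

/-- `E` is the free product of its nontrivial subgroups `A` and `B`. -/
structure IsFreeProd {E : Type*} [Group E] (A B : Subgroup E) : Prop where
  left_ne_bot : A ≠ ⊥
  right_ne_bot : B ≠ ⊥
  sup_eq_top : A ⊔ B = ⊤
  exists_lift : ∀ {H : Type} [Group H] (α : A →* H) (β : B →* H),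
    ∃ γ : E →* H, (∀ a : A, γ a = α a) ∧ ∀ b : B, γ b = β b

lemma IsFreeProd.symm {A B : Subgroup E} (h : IsFreeProd A B) : IsFreeProd B A :=
  ⟨h.right_ne_bot, h.left_ne_bot, by rw [sup_comm, h.sup_eq_top], fun α β => by
    obtain ⟨γ, h₁, h₂⟩ := h.exists_lift β α
    exact ⟨γ, h₂, h₁⟩⟩

lemma three_le_card_of_no_involution {A : Subgroup E} (hA : A ≠ ⊥)
    (h2 : ∀ g : E, g * g = 1 → g = 1) : 3 ≤ Cardinal.mk A := by
  obtain ⟨a, ha⟩ := Subgroup.ne_bot_iff_exists_ne_one.1 hA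
  have haa : a * a ≠ 1 := fun h => ha (Subtype.ext (h2 _ (congrArg Subtype.val h)))
  have hv : Function.Injective ![1, a, a * a] := by
    intro i j hij
    fin_cases i <;> fin_cases j <;>
      first | rfl | (exfalso; revert hij; simp [ha, haa, ha.symm, haa.symm])
  have := Cardinal.mk_le_of_injective
    (hv.comp (g := ![1, a, a * a]) (Equiv.ulift (α := Fin 3)).injective)
  simpa using this

/-- The ping-pong lemma for two subgroups, one of which has no involutions. -/
lemma isFreeProd_of_ping_pong {A B : Subgroup E} (hA : A ≠ ⊥) (hB : B ≠ ⊥) (hAB : A ⊔ B = ⊤)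
    (h2 : ∀ g : E, g * g = 1 → g = 1) {X Y : Set E} (hX : X.Nonempty) (hY : Y.Nonempty)
    (hXY : Disjoint X Y) (hAX : ∀ a ∈ A, a ≠ 1 → a • Y ⊆ X) (hBY : ∀ b ∈ B, b ≠ 1 → b • X ⊆ Y) :
    IsFreeProd A B := by
  refine ⟨hA, hB, hAB, fun {H} _ α β => ?_⟩
  let S : Bool → Subgroup E := fun i => if i then A else B
  let f : ∀ i, S i →* E := fun i => (S i).subtype
  have hinj : Function.Injective (Monoid.CoprodI.lift f) := by
    apply Monoid.CoprodI.lift_injective_of_ping_pong f (X := fun i : Bool => if i then X else Y)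
    · refine .inr ⟨true, ?_⟩
      exact three_le_card_of_no_involution hA h2
    · intro i; cases i <;> simp [hX, hY]
    · intro i j hij
      cases i <;> cases j <;> simp_all [Function.onFun, hXY.symm]
    · intro i j hij
      cases i <;> cases j <;> simp_all [f, S]
  have hsurj : Function.Surjective (Monoid.CoprodI.lift f) := by
    rw [← MonoidHom.range_eq_top, eq_top_iff, ← hAB, sup_le_iff]
    exact ⟨fun a ha => ⟨Monoid.CoprodI.of (i := true) ⟨a, ha⟩, by simp [f]⟩,
      fun b hb => ⟨Monoid.CoprodI.of (i := false) ⟨b, hb⟩, by simp [f]⟩⟩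
  let e := MulEquiv.ofBijective _ ⟨hinj, hsurj⟩
  let δ : ∀ i, S i →* H := fun i => match i with
    | true => α
    | false => β
  have key : ∀ i (x : S i), e.symm x = Monoid.CoprodI.of (M := fun i => S i) x := by
    intro i x
    rw [MulEquiv.symm_apply_eq]
    exact (Monoid.CoprodI.lift_of f x).symm
  refine ⟨(Monoid.CoprodI.lift δ).comp e.symm.toMonoidHom, fun a => ?_, fun b => ?_⟩
  · have := key true a
    simp only [MonoidHom.comp_apply, MulEquiv.coe_toMonoidHom]
    erw [this]
    simp [δ]
  · have := key false b
    simp only [MonoidHom.comp_apply, MulEquiv.coe_toMonoidHom]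
    erw [this]
    simp [δ]

/-- The orbit of a cut and its complement. -/
def cutOrbit (K : Subgroup E) (C : Set E) : Set (Set E) :=
  {W | ∃ g ∈ K, W = g • C ∨ W = g • Cᶜ}

lemma compl_mem_cutOrbit {K : Subgroup E} {C W : Set E} (h : W ∈ cutOrbit K C) :
    Wᶜ ∈ cutOrbit K C := by
  obtain ⟨g, hg, rfl | rfl⟩ := h
  · exact ⟨g, hg, .inr (Set.smul_set_compl).symm⟩
  · exact ⟨g, hg, .inl (by rw [← Set.smul_set_compl, compl_compl])⟩

lemma smul_mem_cutOrbit {K : Subgroup E} {C W : Set E} (h : W ∈ cutOrbit K C) {k : E}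
    (hk : k ∈ K) : k • W ∈ cutOrbit K C := by
  obtain ⟨g, hg, rfl | rfl⟩ := h
  · exact ⟨k * g, K.mul_mem hk hg, .inl (by rw [mul_smul])⟩
  · exact ⟨k * g, K.mul_mem hk hg, .inr (by rw [mul_smul])⟩

lemma self_mem_cutOrbit (K : Subgroup E) (C : Set E) : C ∈ cutOrbit K C :=
  ⟨1, K.one_mem, .inl (one_smul _ _).symm⟩

lemma mem_cutOrbit_of_adj {K : Subgroup E} {C : Set E} (hO : IsNested (cutOrbit ⊤ C))
    (h₁ : ∀ X ∈ cutOrbit ⊤ C, Adj (cutOrbit ⊤ C) X C → X ∈ cutOrbit K C)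
    (h₂ : ∀ X ∈ cutOrbit ⊤ C, Adj (cutOrbit ⊤ C) X Cᶜ → X ∈ cutOrbit K C)
    {X : Set E} (hX : X ∈ cutOrbit ⊤ C) : X ∈ cutOrbit K C := by
  have hsub : cutOrbit K C ⊆ cutOrbit ⊤ C := fun W ⟨g, _, h⟩ => ⟨g, Subgroup.mem_top g, h⟩
  have hsmul : ∀ (g : E) {W : Set E}, W ∈ cutOrbit ⊤ C → g • W ∈ cutOrbit ⊤ C :=
    fun g W hW => smul_mem_cutOrbit hW (Subgroup.mem_top g)
  have step : ∀ Y ∈ cutOrbit K C, ∀ X ∈ cutOrbit ⊤ C, Adj (cutOrbit ⊤ C) X Y →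
      X ∈ cutOrbit K C := by
    rintro Y ⟨k, hk, hY⟩ X hX hXY
    have hXk : k⁻¹ • X ∈ cutOrbit K C := by
      have := hXY.smul hsmul k⁻¹
      rcases hY with rfl | rfl
      · rw [inv_smul_smul] at this
        exact h₁ _ (hsmul _ hX) this
      · rw [inv_smul_smul] at this
        exact h₂ _ (hsmul _ hX) this
    simpa using smul_mem_cutOrbit hXk hk
  have key : ∀ X ∈ cutOrbit ⊤ C, ∀ D ∈ cutOrbit K C, X ⊆ D → X ∈ cutOrbit K C := by
    intro X hX D hD hXD
    obtain ⟨Y, ⟨hY, hXY, hYD⟩, hmin⟩ := Set.Finite.exists_minimal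
      (s := {W | W ∈ cutOrbit K C ∧ X ⊆ W ∧ W ⊆ D})
      ((hO.finite_Icc hX (hsub hD)).subset fun W hW => ⟨hsub hW.1, hW.2.1, hW.2.2⟩)
      ⟨D, hD, hXD, le_rfl⟩
    rcases hXY.eq_or_ssubset with rfl | hss
    · exact hY
    exfalso
    obtain ⟨Z, hZ, h₁, h₂, h₃⟩ := hO.exists_next (hsub (compl_mem_cutOrbit hY))
      (hO.compl_mem hX) (compl_lt_compl_iff_lt.2 hss)
    have hZK := step _ (compl_mem_cutOrbit hY) _ (hO.compl_mem hZ) (hO.adj_symm h₃)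
    have hZY : Zᶜ ⊂ Y := by
      have := compl_lt_compl_iff_lt.2 h₁
      rwa [compl_compl] at this
    exact hZY.2 (hmin ⟨hZK, Set.subset_compl_comm.1 h₂, hZY.subset.trans hYD⟩ hZY.subset)
  have hC := self_mem_cutOrbit K C
  have hC' := compl_mem_cutOrbit hC
  have hcompl : Xᶜ ∈ cutOrbit K C → X ∈ cutOrbit K C := fun h => by
    simpa using compl_mem_cutOrbit h
  rcases hO.subset_cases hX (hsub hC) with h | h | h | h
  · exact key X hX _ hC' h
  · exact key X hX _ hC h
  · exact hcompl (key _ (hO.compl_mem hX) _ hC' (Set.compl_subset_compl.2 h))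
  · exact hcompl (key _ (hO.compl_mem hX) _ hC (Set.compl_subset_comm.1 h))

lemma eq_top_of_cutOrbit {K : Subgroup E} {C : Set E} (hO : IsNested (cutOrbit ⊤ C))
    (hstab : ∀ g : E, g • C = C → g = 1) (hinv : ∀ g : E, g • C ≠ Cᶜ)
    (h₁ : ∀ X ∈ cutOrbit ⊤ C, Adj (cutOrbit ⊤ C) X C → X ∈ cutOrbit K C)
    (h₂ : ∀ X ∈ cutOrbit ⊤ C, Adj (cutOrbit ⊤ C) X Cᶜ → X ∈ cutOrbit K C) : K = ⊤ := by
  refine (Subgroup.eq_top_iff' K).2 fun g => ?_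
  obtain ⟨k, hk, h | h⟩ := mem_cutOrbit_of_adj hO h₁ h₂ ⟨g, Subgroup.mem_top g, .inl rfl⟩
  · have := hstab (k⁻¹ * g) (by rw [mul_smul, h, inv_smul_smul])
    rwa [inv_mul_eq_one.1 this] at hk
  · exact absurd (by rw [mul_smul, h, inv_smul_smul]) (hinv (k⁻¹ * g))

/-- The stabilizer of the vertex of the tree to which `C` points. -/
def vertexStab (C : Set E) (hO : IsNested (cutOrbit ⊤ C)) {D : Set E} (hD : D ∈ cutOrbit ⊤ C) :
    Subgroup E where
  carrier := {g | Adj (cutOrbit ⊤ C) (g • D) D}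
  one_mem' := by
    rw [Set.mem_ofPred_eq, one_smul]
    exact Adj.refl _
  mul_mem' {a b} ha hb := by
    have hs : ∀ (g : E) {W : Set E}, W ∈ cutOrbit ⊤ C → g • W ∈ cutOrbit ⊤ C :=
      fun g W hW => smul_mem_cutOrbit hW (Subgroup.mem_top g)
    rw [Set.mem_ofPred_eq, mul_smul]
    exact hO.adj_trans (hs _ (hs _ hD)) (hs _ hD) hD (hb.smul hs a) ha
  inv_mem' {a} ha := by
    have hs : ∀ (g : E) {W : Set E}, W ∈ cutOrbit ⊤ C → g • W ∈ cutOrbit ⊤ C :=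
      fun g W hW => smul_mem_cutOrbit hW (Subgroup.mem_top g)
    have := Adj.smul hs ha a⁻¹
    rw [inv_smul_smul] at this
    exact hO.adj_symm this

lemma mem_vertexStab {C : Set E} {hO : IsNested (cutOrbit ⊤ C)} {D : Set E}
    {hD : D ∈ cutOrbit ⊤ C} {g : E} :
    g ∈ vertexStab C hO hD ↔ Adj (cutOrbit ⊤ C) (g • D) D := Iff.rfl

theorem exists_isFreeProd {C : Set E} (hO : IsNested (cutOrbit ⊤ C))
    (hstab : ∀ g : E, g • C = C → g = 1) (h2 : ∀ g : E, g * g = 1 → g = 1)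
    (hshift : ∃ f : E, f • C ⊂ C) (hcomm : ∃ x y : E, x * y ≠ y * x) :
    ∃ A B : Subgroup E, IsFreeProd A B := by
  have hC := self_mem_cutOrbit ⊤ C
  have hC' := compl_mem_cutOrbit hC
  have hs : ∀ (g : E) {W : Set E}, W ∈ cutOrbit ⊤ C → g • W ∈ cutOrbit ⊤ C :=
    fun g W hW => smul_mem_cutOrbit hW (Subgroup.mem_top g)
  have hinv : ∀ g : E, g • C ≠ Cᶜ := by
    intro g hg
    have h1 : g = 1 := h2 g (hstab _ (by rw [mul_smul, hg, Set.smul_set_compl, hg, compl_compl]))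
    rw [h1, one_smul] at hg
    exact hO.not_subset_compl hC le_rfl hg.subset
  have hstab' : ∀ g : E, g • Cᶜ = Cᶜ → g = 1 := fun g hg => hstab g (by
    rwa [Set.smul_set_compl, compl_inj_iff] at hg)
  have hinv' : ∀ g : E, g • Cᶜ ≠ C := fun g hg => hinv g (by
    rwa [Set.smul_set_compl, compl_eq_comm, eq_comm] at hg)
  let A := vertexStab C hO hC
  let B := vertexStab C hO hC'
  have hA : ∀ a ∈ A, a ≠ 1 → a • C ⊆ Cᶜ := fun a ha ha1 =>
    (Adj.eq_or_subset_compl ha).resolve_left fun h => ha1 (hstab a h)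
  have hB : ∀ b ∈ B, b ≠ 1 → b • Cᶜ ⊆ C := fun b hb hb1 => by
    simpa using (Adj.eq_or_subset_compl hb).resolve_left fun h => hb1 (hstab' b h)
  have hne := hO.nonempty hC
  have hne' := hO.nonempty hC'
  by_cases hloop : ∃ t : E, Adj (cutOrbit ⊤ C) (t • C) Cᶜ
  · obtain ⟨t, ht⟩ := hloop
    have htC : t • C ⊂ C := by
      rcases ht with h | ⟨h, -⟩
      · exact absurd h (hinv t)
      · rwa [compl_compl] at h
    have ht1 : t ≠ 1 := by
      rintro rfl
      rw [one_smul] at htC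
      exact htC.2 le_rfl
    have hzt := Subgroup.mem_zpowers t
    have htop : A ⊔ Subgroup.zpowers t = ⊤ := by
      have hAK : A ≤ A ⊔ Subgroup.zpowers t := le_sup_left
      have htK : t ∈ A ⊔ Subgroup.zpowers t := (le_sup_right : Subgroup.zpowers t ≤ _) hzt
      have key : ∀ (u g v : E), u ∈ A ⊔ Subgroup.zpowers t → v ∈ A ⊔ Subgroup.zpowers t →
          u * g * v ∈ A → g ∈ A ⊔ Subgroup.zpowers t := by
        intro u g v hu hv h
        have := Subgroup.mul_mem _ (Subgroup.mul_mem _ (inv_mem hu) (hAK h)) (inv_mem hv)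
        simpa [mul_assoc] using this
      refine eq_top_of_cutOrbit hO hstab hinv ?_ ?_
      · rintro X ⟨g, -, rfl | rfl⟩ h
        · exact ⟨g, hAK h, .inl rfl⟩
        · refine ⟨g, key 1 g t (one_mem _) htK ?_, .inr rfl⟩
          rw [one_mul, mem_vertexStab, mul_smul]
          exact hO.adj_trans (hs _ (hs _ hC)) (hs _ hC') hC (ht.smul hs g) h
      · rintro X ⟨g, -, rfl | rfl⟩ h
        · refine ⟨g, key t⁻¹ g 1 (inv_mem htK) (one_mem _) ?_, .inl rfl⟩
          have := (hO.adj_trans (hs _ hC) hC' (hs _ hC) h (hO.adj_symm ht)).smul hs t⁻¹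
          rwa [inv_smul_smul, smul_smul, ← mul_one (t⁻¹ * g)] at this
        · refine ⟨g, key t⁻¹ g t (inv_mem htK) htK ?_, .inr rfl⟩
          have := (hO.adj_trans (hs _ (hs _ hC)) (hs _ hC') (hs _ hC) (ht.smul hs g)
            (hO.adj_trans (hs _ hC') hC' (hs _ hC) h (hO.adj_symm ht))).smul hs t⁻¹
          rwa [inv_smul_smul, smul_smul, smul_smul] at this
    have hAbot : A ≠ ⊥ := by
      intro h
      rw [h, bot_sup_eq] at htop
      obtain ⟨x, y, hxy⟩ := hcomm
      obtain ⟨i, rfl⟩ := Subgroup.mem_zpowers_iff.1 (htop ▸ Subgroup.mem_top x)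
      obtain ⟨j, rfl⟩ := Subgroup.mem_zpowers_iff.1 (htop ▸ Subgroup.mem_top y)
      exact hxy ((Commute.refl t).zpow_zpow i j)
    have ht' : Adj (cutOrbit ⊤ C) C (t⁻¹ • Cᶜ) := by
      have := ht.smul hs t⁻¹
      rwa [inv_smul_smul] at this
    have hdisj : ∀ a ∈ A, a ≠ 1 → a • (C ∪ t⁻¹ • Cᶜ) ⊆ (C ∪ t⁻¹ • Cᶜ)ᶜ := by
      intro a ha ha1
      have h₁ : a • C ⊆ Cᶜ := hA a ha ha1
      have hat := hO.adj_symm (ht'.smul hs a)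
      have h₂ : a • t⁻¹ • Cᶜ ⊆ Cᶜ :=
        (hO.adj_trans (hs _ (hs _ hC')) (hs _ hC) hC hat ha).eq_or_subset_compl.resolve_left
          fun h => hinv' _ ((smul_smul a t⁻¹ Cᶜ).symm.trans h)
      have h₃ : a • C ⊆ (t⁻¹ • Cᶜ)ᶜ := by
        refine (hO.adj_trans (hs _ hC) hC (hs _ hC') ha ht').eq_or_subset_compl.resolve_left
          fun h => hinv (t * a) ?_
        rw [mul_smul, h, smul_inv_smul]
      have h₄ : a • t⁻¹ • Cᶜ ⊆ (t⁻¹ • Cᶜ)ᶜ := by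
        refine (hO.adj_trans (hs _ (hs _ hC')) (hs _ hC) (hs _ hC') hat (hO.adj_trans (hs _ hC) hC
          (hs _ hC') ha ht')).eq_or_subset_compl.resolve_left fun h => ha1 ?_
        have := hstab' (t * a * t⁻¹) (by rw [mul_smul, mul_smul, h, smul_inv_smul])
        simpa using this
      rw [Set.smul_set_union, Set.compl_union]
      exact Set.union_subset (Set.subset_inter h₁ h₃) (Set.subset_inter h₂ h₄)
    have hpos : ∀ k : ℕ, t ^ (k + 1) • (C ∪ t⁻¹ • Cᶜ)ᶜ ⊆ C := by
      intro k
      induction k with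
      | zero =>
        rw [Set.compl_union, zero_add, pow_one, Set.smul_set_compl, compl_compl, Set.smul_set_inter,
          smul_inv_smul]
        exact Set.inter_subset_right
      | succ k ih =>
        rw [pow_succ', mul_smul]
        exact (Set.smul_set_mono ih).trans htC.subset
    have hneg : ∀ k : ℕ, (t⁻¹) ^ (k + 1) • (C ∪ t⁻¹ • Cᶜ)ᶜ ⊆ t⁻¹ • Cᶜ := by
      intro k
      induction k with
      | zero =>
        rw [Set.compl_union, zero_add, pow_one]
        exact Set.smul_set_mono Set.inter_subset_left
      | succ k ih =>
        rw [pow_succ', mul_smul]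
        refine Set.smul_set_mono (ih.trans ?_)
        rw [← Set.subset_smul_set_iff, Set.smul_set_compl]
        exact Set.compl_subset_compl.2 htC.subset
    refine ⟨A, Subgroup.zpowers t, isFreeProd_of_ping_pong (X := (C ∪ t⁻¹ • Cᶜ)ᶜ)
      (Y := C ∪ t⁻¹ • Cᶜ) hAbot (by simpa using ht1) htop h2 ?_ (hne.mono Set.subset_union_left)
      disjoint_compl_left hdisj ?_⟩
    · obtain ⟨a, ha⟩ := Subgroup.ne_bot_iff_exists_ne_one.1 hAbot
      exact ((hne.mono Set.subset_union_left).smul_set (a := (a : E))).mono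
        (hdisj a a.2 fun h => ha (Subtype.ext h))
    · rintro _ ⟨k, rfl⟩ hk
      obtain ⟨m, rfl | rfl⟩ := k.eq_nat_or_neg
      · obtain _ | m := m
        · simp at hk
        · refine Set.Subset.trans ?_ ((hpos m).trans Set.subset_union_left)
          exact (congrArg (· • (C ∪ t⁻¹ • Cᶜ)ᶜ) (zpow_natCast t (m + 1))).subset
      · obtain _ | m := m
        · simp at hk
        · refine Set.Subset.trans ?_ ((hneg m).trans Set.subset_union_right)
          refine (congrArg (· • (C ∪ t⁻¹ • Cᶜ)ᶜ) (?_ : t ^ (-((m + 1 : ℕ) : ℤ)) = _)).subset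
          rw [_root_.zpow_neg, zpow_natCast, inv_pow]
  · have htop : A ⊔ B = ⊤ := by
      push Not at hloop
      refine eq_top_of_cutOrbit hO hstab hinv ?_ ?_
      · rintro X ⟨g, -, rfl | rfl⟩ h
        · exact ⟨g, (le_sup_left : A ≤ _) h, .inl rfl⟩
        · refine absurd ?_ (hloop g⁻¹)
          have := h.smul hs g⁻¹
          rw [inv_smul_smul] at this
          exact hO.adj_symm this
      · rintro X ⟨g, -, rfl | rfl⟩ h
        · exact absurd h (hloop g)
        · exact ⟨g, (le_sup_right : B ≤ _) h, .inr rfl⟩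
    obtain ⟨f, hf⟩ := hshift
    have hf1 : f ≠ 1 := by
      rintro rfl
      rw [one_smul] at hf
      exact hf.2 le_rfl
    refine ⟨A, B, isFreeProd_of_ping_pong (X := Cᶜ) (Y := C) ?_ ?_ htop h2 hne' hne
      disjoint_compl_left hA hB⟩
    · intro h
      rw [h, bot_sup_eq] at htop
      have := hB f (htop ▸ Subgroup.mem_top f) hf1
      rw [Set.smul_set_compl, Set.compl_subset_comm] at this
      exact hO.not_subset_compl hC' (this.trans hf.subset) le_rfl
    · intro h
      rw [h, sup_bot_eq] at htop
      exact hO.not_subset_compl (hs f hC) hf.subset (hA f (htop ▸ Subgroup.mem_top f) hf1)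

/-- A group containing a free group of finite rank as a normal subgroup of odd prime index which
is not centralized by an outside element splits as a free product. -/
theorem exists_isFreeProd_of_prime_index {X : Type*} [DecidableEq X] [Finite X]
    {ι : FreeGroup X →* E} (hι : Function.Injective ι) {p : ℕ} [Fact p.Prime] (hp : p ≠ 2)
    {φ : E →* Multiplicative (ZMod p)} (hφ : Function.Surjective φ) (hker : φ.ker = ι.range)
    (hcent : ∀ s, s ∉ φ.ker → ∃ f ∈ φ.ker, f * s ≠ s * f) :
    ∃ A B : Subgroup E, IsFreeProd A B := by
  have hprime : p.Prime := Fact.out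
  have hcard : Nat.card (Multiplicative (ZMod p)) = p := by simp
  have h2 : ∀ g : E, g * g = 1 → g = 1 := by
    intro g hg
    refine pow_eq_one_of_mem_range hι (hker ▸ ?_) (by rw [pow_two, hg]) two_ne_zero
    rw [MonoidHom.mem_ker, ← orderOf_eq_one_iff, ← Nat.dvd_one]
    have h1 : orderOf (φ g) ∣ 2 :=
      orderOf_dvd_of_pow_eq_one (by rw [pow_two, ← map_mul, hg, map_one])
    have h2 : orderOf (φ g) ∣ p := (orderOf_dvd_natCard (φ g)).trans hcard.dvd
    rw [← (Nat.coprime_primes Nat.prime_two hprime).2 hp.symm]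
    exact Nat.dvd_gcd h1 h2
  obtain ⟨s, hs⟩ : ∃ s, s ∉ φ.ker := by
    obtain ⟨s, hs⟩ := hφ (Multiplicative.ofAdd 1)
    refine ⟨s, fun h => ?_⟩
    rw [MonoidHom.mem_ker.1 h] at hs
    exact one_ne_zero (Multiplicative.ofAdd.injective hs).symm
  obtain ⟨f, hf, hfs⟩ := hcent s hs
  have : ι.range.Normal := hker ▸ inferInstance
  have : Finite (E ⧸ ι.range) := by
    rw [← hker]
    exact Finite.of_injective _ (QuotientGroup.kerLift_injective φ)
  obtain ⟨cs⟩ := exists_cutSystem hι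
  obtain ⟨C, hC, hstab⟩ := cs.exists_trivial_stabilizer
    ⟨f, hker ▸ hf, fun h => hfs (by rw [h, one_mul, mul_one])⟩ (fun x y hy => by
      obtain ⟨k, hk⟩ := mem_powers_of_prime_card hcard (g := φ y) (g' := φ x)
        (by rwa [← hker] at hy)
      exact ⟨k, hker ▸ MonoidHom.mem_ker.2 (by simp [← hk])⟩) (hker ▸ hcent)
  have hsub : cutOrbit ⊤ C ⊆ cs.cuts := by
    rintro W ⟨g, -, rfl | rfl⟩
    · exact cs.smul_mem g hC
    · exact cs.smul_mem g (cs.compl_mem hC)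
  refine exists_isFreeProd (C := C) ⟨compl_mem_cutOrbit, fun h h' => cs.nested (hsub h) (hsub h'),
    fun x y => (cs.finite x y).subset fun W hW => ⟨hsub hW.1, hW.2⟩,
    fun h => cs.nonempty (hsub h)⟩ hstab h2 ((cs.exists_smul_ssubset hC).imp fun f h => h.2)
    ⟨f, s, hfs⟩

end FreeSplitting

section Kurosh

variable {E : Type*} [Group E] {Q : Type} [Group Q] {H : Type} [Group H]

/-- `c` is a crossed homomorphism from `E` to the functions `Q → H`. -/
def IsCocycle {E Q H : Type*} [Group E] [Group Q] [Group H] (φ : E →* Q) (c : E → Q → H) : Prop :=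
  ∀ a b q, c (a * b) q = c a q * c b ((φ a)⁻¹ * q)

lemma IsCocycle.map_one {φ : E →* Q} {c : E → Q → H} (hc : IsCocycle φ c) (q : Q) :
    c 1 q = 1 := by
  have := hc 1 1 q
  simpa using this

lemma IsFreeProd.exists_cocycle {A B : Subgroup E} (h : IsFreeProd A B) (φ : E →* Q)
    {cA : A → Q → H} {cB : B → Q → H} (hA : IsCocycle (φ.comp A.subtype) cA)
    (hB : IsCocycle (φ.comp B.subtype) cB) :
    ∃ c : E → Q → H, IsCocycle φ c ∧ (∀ a : A, c a = cA a) ∧ ∀ b : B, c b = cB b := by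
  let α : A →* RegularWreathProduct H Q :=
    { toFun := fun a => ⟨cA a, φ a⟩
      map_one' := by
        refine RegularWreathProduct.ext (funext fun q => hA.map_one q) (by simp)
      map_mul' := fun a b => RegularWreathProduct.ext (funext fun q => hA a b q) (by simp) }
  let β : B →* RegularWreathProduct H Q :=
    { toFun := fun a => ⟨cB a, φ a⟩
      map_one' := by
        refine RegularWreathProduct.ext (funext fun q => hB.map_one q) (by simp)
      map_mul' := fun a b => RegularWreathProduct.ext (funext fun q => hB a b q) (by simp) }
  obtain ⟨γ, hγA, hγB⟩ := h.exists_lift α β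
  have hright : RegularWreathProduct.rightHom.comp γ = φ := by
    refine MonoidHom.eq_of_eqOn_top ?_
    rw [← h.sup_eq_top]
    have hle : A ⊔ B ≤ (RegularWreathProduct.rightHom.comp γ).eqLocus φ := by
      refine sup_le (fun a ha => ?_) fun b hb => ?_
      · change RegularWreathProduct.rightHom (γ a) = φ a
        rw [hγA ⟨a, ha⟩]
        rfl
      · change RegularWreathProduct.rightHom (γ b) = φ b
        rw [hγB ⟨b, hb⟩]
        rfl
    exact hle
  have hr : ∀ x, (γ x).right = φ x := fun x => DFunLike.congr_fun hright x
  refine ⟨fun x => (γ x).left, fun a b q => ?_, fun a => ?_, fun b => ?_⟩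
  · simp [hr]
  · simp [hγA, α]
  · simp [hγB, β]

lemma mem_of_schreier {A B K : Subgroup E} (hAB : A ⊔ B = ⊤) {φ : E →* Q} {σ : Q → E}
    (hσ1 : σ 1 = 1) (hA : ∀ a ∈ A, ∀ q, (σ (φ a * q))⁻¹ * a * σ q ∈ K)
    (hB : ∀ b ∈ B, ∀ q, (σ (φ b * q))⁻¹ * b * σ q ∈ K) {x : E} (hx : x ∈ φ.ker) : x ∈ K := by
  let S : Subgroup E :=
    { carrier := {x | ∀ q, (σ (φ x * q))⁻¹ * x * σ q ∈ K}
      one_mem' := fun q => by simp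
      mul_mem' := fun {a b} ha hb q => by
        have := K.mul_mem (ha (φ b * q)) (hb q)
        simpa [mul_assoc] using this
      inv_mem' := fun {a} ha q => by
        have := K.inv_mem (ha (φ a⁻¹ * q))
        simpa [mul_assoc] using this }
  have hS : S = ⊤ := by
    rw [eq_top_iff, ← hAB]
    exact sup_le hA hB
  have : x ∈ S := hS ▸ Subgroup.mem_top x
  have := this 1
  simpa [MonoidHom.mem_ker.1 hx, hσ1] using this

lemma exists_basis_of_cocycle {J : Type} {φ : E →* Q} {c : E → Q → FreeGroup J}
    (hc : IsCocycle φ c) {g : J → E} (hg : ∀ j, g j ∈ φ.ker)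
    (hcg : ∀ j, c (g j) 1 = FreeGroup.of j)
    (hgen : ∀ x ∈ φ.ker, x ∈ (FreeGroup.lift g).range) :
    ∃ e : FreeGroup J ≃* φ.ker, ∀ j, (e (FreeGroup.of j) : E) = g j := by
  let f : FreeGroup J →* φ.ker := FreeGroup.lift fun j => ⟨g j, hg j⟩
  have hf : ∀ x, (f x : E) = FreeGroup.lift g x := by
    have : φ.ker.subtype.comp f = FreeGroup.lift g := by ext; simp [f]
    exact fun x => DFunLike.congr_fun this x
  let ψ : φ.ker →* FreeGroup J :=
    { toFun := fun x => c x 1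
      map_one' := hc.map_one 1
      map_mul' := fun x y => by
        have := hc x y 1
        rw [MonoidHom.mem_ker.1 x.2] at this
        simpa using this }
  have hψ : ψ.comp f = MonoidHom.id _ := by
    ext j
    simp [ψ, f, hcg]
  have hinj : Function.Injective f :=
    Function.LeftInverse.injective (g := ψ) fun x => DFunLike.congr_fun hψ x
  have hsurj : Function.Surjective f := by
    rintro ⟨x, hx⟩
    obtain ⟨y, hy⟩ := hgen x hx
    exact ⟨y, Subtype.ext ((hf y).trans hy)⟩
  refine ⟨MulEquiv.ofBijective f ⟨hinj, hsurj⟩, fun j => ?_⟩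
  change (f (FreeGroup.of j) : E) = g j
  simp [f]

lemma range_le_of_equiv {I : Type*} {D : Subgroup E} (e : FreeGroup I ≃* D) {K : Subgroup E}
    (h : ∀ i, (e (FreeGroup.of i) : E) ∈ K) : D ≤ K := by
  intro x hx
  have : (FreeGroup.lift fun i => (e (FreeGroup.of i) : E)).range ≤ K := by
    exact FreeGroup.range_lift_le fun _ ⟨i, hi⟩ => hi ▸ h i
  have hcomp : D.subtype.comp e.toMonoidHom = FreeGroup.lift fun i => (e (FreeGroup.of i) : E) := by
    ext; simp
  refine this ⟨e.symm ⟨x, hx⟩, ?_⟩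
  rw [← hcomp]
  simp

/-- If `A` lies in the kernel of `φ`, then the kernel is the free product of conjugates of `A`
and of the kernel of the restriction of `φ` to `B`. -/
theorem IsFreeProd.exists_basis_of_le_ker {A B : Subgroup E} (h : IsFreeProd A B) {φ : E →* Q}
    (hA : A ≤ φ.ker) {σ : Q → E} (hσB : ∀ q, σ q ∈ B) (hσ : ∀ q, φ (σ q) = q) (hσ1 : σ 1 = 1)
    {I I' : Type} (eA : FreeGroup I ≃* A) (eB : FreeGroup I' ≃* (B ⊓ φ.ker : Subgroup E)) :
    ∃ e : FreeGroup ((Q × I) ⊕ I') ≃* φ.ker,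
      (∀ q i, (e (FreeGroup.of (.inl (q, i))) : E) = (σ q)⁻¹ * eA (FreeGroup.of i) * σ q) ∧
      ∀ i, (e (FreeGroup.of (.inr i)) : E) = eB (FreeGroup.of i) := by
  let α : Q → FreeGroup I →* FreeGroup ((Q × I) ⊕ I') := fun q =>
    FreeGroup.map fun i => .inl (q, i)
  let β : FreeGroup I' →* FreeGroup ((Q × I) ⊕ I') := FreeGroup.map .inr
  have hmem : ∀ (b : B) (q : Q), (σ q)⁻¹ * b * σ ((φ b)⁻¹ * q) ∈ B ⊓ φ.ker := fun b q =>
    ⟨B.mul_mem (B.mul_mem (B.inv_mem (hσB _)) b.2) (hσB _), by simp [hσ]⟩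
  obtain ⟨c, hc, hcA, hcB⟩ := h.exists_cocycle φ (cA := fun a q => α q (eA.symm a))
    (cB := fun b q => β (eB.symm ⟨_, hmem b q⟩))
    (fun a b q => by simp [MonoidHom.mem_ker.1 (hA a.2)]) (fun a b q => by
      beta_reduce
      rw [← map_mul, ← map_mul]
      refine congrArg (fun x => β (eB.symm x)) (Subtype.ext ?_)
      simp only [Subgroup.coe_mul, MonoidHom.comp_apply, Subgroup.coe_subtype]
      simp [mul_assoc])
  have hcB' : ∀ b (hb : b ∈ B) (q : Q), c b q = β (eB.symm ⟨_, hmem ⟨b, hb⟩ q⟩) :=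
    fun b hb q => congrFun (hcB ⟨b, hb⟩) q
  have hcA' : ∀ a : A, ∀ q, c a q = α q (eA.symm a) := fun a q => congrFun (hcA a) q
  have hβ1 : ∀ x (hx : x ∈ B ⊓ φ.ker), x = 1 → β (eB.symm ⟨x, hx⟩) = 1 := by
    rintro x hx rfl
    exact (congrArg _ (map_one eB.symm)).trans (map_one β)
  let g : (Q × I) ⊕ I' → E := Sum.elim (fun x => (σ x.1)⁻¹ * eA (FreeGroup.of x.2) * σ x.1)
    fun i => eB (FreeGroup.of i)
  have hg : ∀ j, g j ∈ φ.ker := by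
    rintro (⟨q, i⟩ | i)
    · have := hA (eA (FreeGroup.of i)).2
      simp [g, MonoidHom.mem_ker, MonoidHom.mem_ker.1 this]
    · exact (eB (FreeGroup.of i)).2.2
  have hK : ∀ j, g j ∈ (FreeGroup.lift g).range := fun j => ⟨FreeGroup.of j, by simp⟩
  obtain ⟨e, he⟩ := exists_basis_of_cocycle hc (g := g) hg (by
    rintro (⟨q, i⟩ | i)
    · have h₁ := hcB' (σ q)⁻¹ (B.inv_mem (hσB q)) 1
      have h₂ := hcB' (σ q) (hσB q) q
      rw [hβ1 _ _ (by simp [hσ, hσ1])] at h₁ h₂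
      simp [g, hc _ _ _, hσ, h₁, h₂, hcA', α, MonoidHom.mem_ker.1 (hA (eA (FreeGroup.of i)).2)]
    · have := hcB' (eB (FreeGroup.of i)) (eB (FreeGroup.of i)).2.1 1
      refine this.trans ?_
      rw [show (⟨_, hmem ⟨_, (eB (FreeGroup.of i)).2.1⟩ 1⟩ : (B ⊓ φ.ker : Subgroup E)) =
        eB (FreeGroup.of i) from Subtype.ext (by
          simp [hσ1, MonoidHom.mem_ker.1 (eB (FreeGroup.of i)).2.2])]
      simp [β]) (by
    refine fun x hx => mem_of_schreier h.sup_eq_top hσ1 (fun a ha q => ?_) (fun b hb q => ?_) hx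
    · rw [MonoidHom.mem_ker.1 (hA ha), one_mul]
      have : A ≤ (FreeGroup.lift g).range.comap (MulAut.conj (σ q)⁻¹).toMonoidHom :=
        range_le_of_equiv eA fun i => by
          have := hK (.inl (q, i))
          simpa [g, Subgroup.mem_comap] using this
      have := this ha
      simpa [Subgroup.mem_comap] using this
    · exact range_le_of_equiv eB (fun i => hK (.inr i))
        ⟨B.mul_mem (B.mul_mem (B.inv_mem (hσB _)) hb) (hσB _), by simp [hσ]⟩)
  exact ⟨e, fun q i => he (.inl (q, i)), fun i => he (.inr i)⟩

/-- If both factors surject onto the range of `φ`, then its kernel is the free product of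
the kernels of the restrictions of `φ` and a free group on the elements `(σ q)⁻¹ * υ q`. -/
theorem IsFreeProd.exists_basis_of_surjective {A B : Subgroup E} (h : IsFreeProd A B) {φ : E →* Q}
    {σ υ : Q → E} (hσA : ∀ q, σ q ∈ A) (hσ : ∀ q, φ (σ q) = q) (hσ1 : σ 1 = 1)
    (hυB : ∀ q, υ q ∈ B) (hυ : ∀ q, φ (υ q) = q) (hυ1 : υ 1 = 1)
    {I I' : Type} (eA : FreeGroup I ≃* (A ⊓ φ.ker : Subgroup E))
    (eB : FreeGroup I' ≃* (B ⊓ φ.ker : Subgroup E)) :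
    ∃ e : FreeGroup ((I ⊕ I') ⊕ {q : Q // q ≠ 1}) ≃* φ.ker,
      (∀ i, (e (FreeGroup.of (.inl (.inl i))) : E) = eA (FreeGroup.of i)) ∧
      (∀ i, (e (FreeGroup.of (.inl (.inr i))) : E) = eB (FreeGroup.of i)) ∧
      ∀ q, (e (FreeGroup.of (.inr q)) : E) = (σ q)⁻¹ * υ q := by
  classical
  let α : FreeGroup I →* FreeGroup ((I ⊕ I') ⊕ {q : Q // q ≠ 1}) :=
    FreeGroup.map fun i => .inl (.inl i)
  let β : FreeGroup I' →* FreeGroup ((I ⊕ I') ⊕ {q : Q // q ≠ 1}) :=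
    FreeGroup.map fun i => .inl (.inr i)
  let τ : Q → FreeGroup ((I ⊕ I') ⊕ {q : Q // q ≠ 1}) := fun q =>
    if hq : q = 1 then 1 else FreeGroup.of (.inr ⟨q, hq⟩)
  have hτ1 : τ 1 = 1 := by simp [τ]
  have hmemA : ∀ (a : A) (q : Q), (σ q)⁻¹ * a * σ ((φ a)⁻¹ * q) ∈ A ⊓ φ.ker := fun a q =>
    ⟨A.mul_mem (A.mul_mem (A.inv_mem (hσA _)) a.2) (hσA _), by simp [hσ]⟩
  have hmemB : ∀ (b : B) (q : Q), (υ q)⁻¹ * b * υ ((φ b)⁻¹ * q) ∈ B ⊓ φ.ker := fun b q =>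
    ⟨B.mul_mem (B.mul_mem (B.inv_mem (hυB _)) b.2) (hυB _), by simp [hυ]⟩
  obtain ⟨c, hc, hcA, hcB⟩ := h.exists_cocycle φ (cA := fun a q => α (eA.symm ⟨_, hmemA a q⟩))
    (cB := fun b q => τ q * β (eB.symm ⟨_, hmemB b q⟩) * (τ ((φ b)⁻¹ * q))⁻¹)
    (fun a b q => by
      beta_reduce
      rw [← map_mul, ← map_mul]
      refine congrArg (fun x => α (eA.symm x)) (Subtype.ext ?_)
      simp only [Subgroup.coe_mul, MonoidHom.comp_apply, Subgroup.coe_subtype]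
      simp [mul_assoc]) (fun a b q => by
      have : (⟨_, hmemB (a * b) q⟩ : (B ⊓ φ.ker : Subgroup E)) =
          ⟨_, hmemB a q⟩ * ⟨_, hmemB b ((φ a)⁻¹ * q)⟩ := Subtype.ext (by simp [mul_assoc])
      beta_reduce
      rw [this, map_mul, map_mul]
      simp only [MonoidHom.comp_apply, Subgroup.coe_subtype, Subgroup.coe_mul, map_mul,
        _root_.mul_inv_rev, mul_assoc, inv_mul_cancel_left])
  have hcA' : ∀ a (ha : a ∈ A) (q : Q), c a q = α (eA.symm ⟨_, hmemA ⟨a, ha⟩ q⟩) :=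
    fun a ha q => congrFun (hcA ⟨a, ha⟩) q
  have hcB' : ∀ b (hb : b ∈ B) (q : Q),
      c b q = τ q * β (eB.symm ⟨_, hmemB ⟨b, hb⟩ q⟩) * (τ ((φ b)⁻¹ * q))⁻¹ :=
    fun b hb q => congrFun (hcB ⟨b, hb⟩) q
  have hα1 : ∀ x (hx : x ∈ A ⊓ φ.ker), x = 1 → α (eA.symm ⟨x, hx⟩) = 1 := by
    rintro x hx rfl
    exact (congrArg _ (map_one eA.symm)).trans (map_one α)
  have hβ1 : ∀ x (hx : x ∈ B ⊓ φ.ker), x = 1 → β (eB.symm ⟨x, hx⟩) = 1 := by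
    rintro x hx rfl
    exact (congrArg _ (map_one eB.symm)).trans (map_one β)
  let g : (I ⊕ I') ⊕ {q : Q // q ≠ 1} → E := Sum.elim
    (Sum.elim (fun i => eA (FreeGroup.of i)) fun i => eB (FreeGroup.of i)) fun q => (σ q)⁻¹ * υ q
  have hg : ∀ j, g j ∈ φ.ker := by
    rintro ((i | i) | q)
    · exact (eA (FreeGroup.of i)).2.2
    · exact (eB (FreeGroup.of i)).2.2
    · simp [g, hσ, hυ]
  have hK : ∀ j, g j ∈ (FreeGroup.lift g).range := fun j => ⟨FreeGroup.of j, by simp⟩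
  obtain ⟨e, he⟩ := exists_basis_of_cocycle hc (g := g) hg (by
    rintro ((i | i) | q)
    · refine (hcA' (eA (FreeGroup.of i)) (eA (FreeGroup.of i)).2.1 1).trans ?_
      rw [show (⟨_, hmemA ⟨_, (eA (FreeGroup.of i)).2.1⟩ 1⟩ : (A ⊓ φ.ker : Subgroup E)) =
        eA (FreeGroup.of i) from Subtype.ext (by
          simp [hσ1, MonoidHom.mem_ker.1 (eA (FreeGroup.of i)).2.2])]
      simp [α]
    · refine (hcB' (eB (FreeGroup.of i)) (eB (FreeGroup.of i)).2.1 1).trans ?_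
      rw [show (⟨_, hmemB ⟨_, (eB (FreeGroup.of i)).2.1⟩ 1⟩ : (B ⊓ φ.ker : Subgroup E)) =
        eB (FreeGroup.of i) from Subtype.ext (by
          simp [hυ1, MonoidHom.mem_ker.1 (eB (FreeGroup.of i)).2.2])]
      simp [β, hτ1, MonoidHom.mem_ker.1 (eB (FreeGroup.of i)).2.2]
    · have h₁ := hcA' (σ q)⁻¹ (A.inv_mem (hσA q)) 1
      have h₂ := hcB' (υ q) (hυB q) q
      rw [hα1 _ _ (by simp [hσ, hσ1])] at h₁
      rw [hβ1 _ _ (by simp [hυ, hυ1])] at h₂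
      simp [g, hc _ _ _, hσ, h₁, h₂, hυ, hτ1, τ, q.2]) (by
    refine fun x hx => mem_of_schreier h.sup_eq_top hσ1 (fun a ha q => ?_) (fun b hb q => ?_) hx
    · exact range_le_of_equiv eA (fun i => hK (.inl (.inl i)))
        ⟨A.mul_mem (A.mul_mem (A.inv_mem (hσA _)) ha) (hσA _), by simp [hσ]⟩
    · have hτ : ∀ q, (σ q)⁻¹ * υ q ∈ (FreeGroup.lift g).range := fun q => by
        by_cases hq : q = 1
        · simp [hq, hσ1, hυ1, one_mem]
        · exact hK (.inr ⟨q, hq⟩)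
      have hb' : (υ (φ b * q))⁻¹ * b * υ q ∈ (FreeGroup.lift g).range :=
        range_le_of_equiv eB (fun i => hK (.inl (.inr i)))
          ⟨B.mul_mem (B.mul_mem (B.inv_mem (hυB _)) hb) (hυB _), by simp [hυ]⟩
      have := Subgroup.mul_mem _ (Subgroup.mul_mem _ (hτ (φ b * q)) hb') (inv_mem (hτ q))
      simpa [mul_assoc] using this)
  exact ⟨e, fun i => he (.inl (.inl i)), fun i => he (.inl (.inr i)), fun q => he (.inr q)⟩

end Kurosh

section Transvections

variable {J : Type*}

lemma mulAut_ext {f g : MulAut (FreeGroup J)}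
    (h : ∀ j, f (FreeGroup.of j) = g (FreeGroup.of j)) : f = g := by
  have : f.toMonoidHom = g.toMonoidHom := FreeGroup.ext_hom _ _ h
  exact MulEquiv.ext fun x => DFunLike.congr_fun this x

/-- The automorphism with prescribed values and prescribed values of its inverse. -/
def autMk (f g : J → FreeGroup J) (hfg : ∀ j, FreeGroup.lift f (g j) = FreeGroup.of j)
    (hgf : ∀ j, FreeGroup.lift g (f j) = FreeGroup.of j) : MulAut (FreeGroup J) :=
  MonoidHom.toMulEquiv (FreeGroup.lift f) (FreeGroup.lift g)
    (by ext j; simp [hgf]) (by ext j; simp [hfg])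

lemma autMk_of (f g : J → FreeGroup J) (hfg hgf) (j : J) :
    autMk f g hfg hgf (FreeGroup.of j) = f j :=
  FreeGroup.lift_apply_of

lemma autMk_inv_of (f g : J → FreeGroup J) (hfg hgf) (j : J) :
    (autMk f g hfg hgf)⁻¹ (FreeGroup.of j) = g j :=
  FreeGroup.lift_apply_of

/-- The automorphism permuting the generators. -/
def permAut (π : Equiv.Perm J) : MulAut (FreeGroup J) := FreeGroup.freeGroupCongr π

lemma permAut_of (π : Equiv.Perm J) (k : J) :
    permAut π (FreeGroup.of k) = FreeGroup.of (π k) := by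
  simp [permAut]

lemma permAut_mul (π π' : Equiv.Perm J) : permAut (π * π') = permAut π * permAut π' :=
  mulAut_ext fun k => by simp [permAut_of]

variable [DecidableEq J]

/-- The automorphism mapping `x i` to `x i * x j` and fixing the other generators. -/
def rtransv {i j : J} (h : i ≠ j) : MulAut (FreeGroup J) :=
  autMk (fun k => if k = i then FreeGroup.of i * FreeGroup.of j else FreeGroup.of k)
    (fun k => if k = i then FreeGroup.of i * (FreeGroup.of j)⁻¹ else FreeGroup.of k)
    (fun k => by by_cases hk : k = i <;> simp [hk, h.symm])
    (fun k => by by_cases hk : k = i <;> simp [hk, h.symm])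

/-- The automorphism mapping `x i` to `x j * x i` and fixing the other generators. -/
def ltransv {i j : J} (h : i ≠ j) : MulAut (FreeGroup J) :=
  autMk (fun k => if k = i then FreeGroup.of j * FreeGroup.of i else FreeGroup.of k)
    (fun k => if k = i then (FreeGroup.of j)⁻¹ * FreeGroup.of i else FreeGroup.of k)
    (fun k => by by_cases hk : k = i <;> simp [hk, h.symm])
    (fun k => by by_cases hk : k = i <;> simp [hk, h.symm])

lemma rtransv_of {i j : J} (h : i ≠ j) (k : J) : rtransv h (FreeGroup.of k) =
    if k = i then FreeGroup.of i * FreeGroup.of j else FreeGroup.of k := autMk_of _ _ _ _ _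

lemma rtransv_symm_of {i j : J} (h : i ≠ j) (k : J) : MulEquiv.symm (rtransv h) (FreeGroup.of k) =
    if k = i then FreeGroup.of i * (FreeGroup.of j)⁻¹ else FreeGroup.of k := autMk_inv_of _ _ _ _ _

lemma ltransv_of {i j : J} (h : i ≠ j) (k : J) : ltransv h (FreeGroup.of k) =
    if k = i then FreeGroup.of j * FreeGroup.of i else FreeGroup.of k := autMk_of _ _ _ _ _

lemma ltransv_symm_of {i j : J} (h : i ≠ j) (k : J) : MulEquiv.symm (ltransv h) (FreeGroup.of k) =
    if k = i then (FreeGroup.of j)⁻¹ * FreeGroup.of i else FreeGroup.of k := autMk_inv_of _ _ _ _ _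

lemma permAut_mul_rtransv (π : Equiv.Perm J) {i j : J} (h : i ≠ j) :
    permAut π * rtransv h = rtransv (π.injective.ne h) * permAut π := by
  refine mulAut_ext fun k => ?_
  by_cases hk : k = i <;> simp [rtransv_of, permAut_of, hk]

variable {N : Subgroup (MulAut (FreeGroup J))} [N.Normal]

lemma rtransv_mem_of_three_cycle {π : Equiv.Perm J} (hπ : permAut π ∈ N) {i j k : J} (hij : i ≠ j)
    (hjk : j ≠ k) (hik : i ≠ k) (hi : π i = j) (hj : π j = k) : rtransv hik ∈ N := by
  subst hi hj
  have hconj : ((rtransv hjk : MulAut (FreeGroup J)) : MulAut (FreeGroup J) ⧸ N) = rtransv hij := by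
    have := congrArg (QuotientGroup.mk (s := N)) (permAut_mul_rtransv π hij)
    rw [QuotientGroup.mk_mul, QuotientGroup.mk_mul, (QuotientGroup.eq_one_iff _).2 hπ] at this
    simpa using this.symm
  have hcomm : rtransv hjk * rtransv hij = rtransv hij * rtransv hjk * rtransv hik := by
    refine mulAut_ext fun k => ?_
    by_cases h1 : k = i
    · subst h1
      simp [rtransv_of, hij, hik.symm, hjk.symm, mul_assoc]
    · by_cases h2 : k = π i
      · simp [rtransv_of, hij.symm, hik.symm, h2]
      · simp [rtransv_of, h1, h2]
  have := congrArg (QuotientGroup.mk (s := N)) hcomm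
  rw [QuotientGroup.mk_mul, QuotientGroup.mk_mul, QuotientGroup.mk_mul, hconj] at this
  rw [← QuotientGroup.eq_one_iff]
  simpa using this.symm

lemma ltransv_mem_of_order_three {κ : MulAut (FreeGroup J)} (hκ : κ ∈ N) {i j k : J}
    (hij : i ≠ j) (hki : k ≠ i) (hkj : k ≠ j)
    (hκi : κ (FreeGroup.of i) = FreeGroup.of j * (FreeGroup.of i)⁻¹)
    (hκj : κ (FreeGroup.of j) = (FreeGroup.of i)⁻¹)
    (hκk : ∀ l, l ≠ i → l ≠ j → κ (FreeGroup.of l) = FreeGroup.of l ∨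
      κ (FreeGroup.of l) = FreeGroup.of l * (FreeGroup.of i)⁻¹ ∨
      κ (FreeGroup.of l) = FreeGroup.of i * FreeGroup.of l * (FreeGroup.of i)⁻¹) :
    ltransv hkj ∈ N := by
  have hN : (κ : MulAut (FreeGroup J) ⧸ N) = 1 := (QuotientGroup.eq_one_iff _).2 hκ
  suffices H : ∃ δ : MulAut (FreeGroup J),
      κ * ltransv hki = δ * ltransv hkj * δ⁻¹ * ltransv hki * κ by
    obtain ⟨δ, hδ⟩ := H
    have := congrArg (QuotientGroup.mk (s := N)) hδ
    simp only [QuotientGroup.mk_mul, hN, one_mul, mul_one] at this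
    rw [← QuotientGroup.eq_one_iff]
    have h := mul_eq_right.1 this.symm
    simpa [mul_inv_eq_one] using h
  have hji := hij.symm
  by_cases hk : κ (FreeGroup.of k) = FreeGroup.of i * FreeGroup.of k * (FreeGroup.of i)⁻¹
  · refine ⟨(ltransv hji)⁻¹ * (ltransv hji)⁻¹, mulAut_ext fun l => ?_⟩
    by_cases hli : l = i
    · subst hli
      simp [ltransv_of, ltransv_symm_of, hκi, hij, hki.symm, hkj.symm, mul_assoc]
    by_cases hlj : l = j
    · subst hlj
      simp [ltransv_of, ltransv_symm_of, hκj, hij, hki.symm, hkj.symm, mul_assoc]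
    by_cases hlk : l = k
    · subst hlk
      simp [ltransv_of, ltransv_symm_of, hκi, hij, hkj, hki.symm, hk, mul_assoc]
    · rcases hκk l hli hlj with h | h | h <;>
        simp [ltransv_of, ltransv_symm_of, hij, hki.symm, hlj, hlk, h, mul_assoc]
  · refine ⟨(ltransv hji)⁻¹ * (rtransv hji)⁻¹, mulAut_ext fun l => ?_⟩
    by_cases hli : l = i
    · subst hli
      simp [ltransv_of, ltransv_symm_of, rtransv_of, rtransv_symm_of, hκi, hij,
        hki.symm, hkj.symm, mul_assoc]
    by_cases hlj : l = j
    · subst hlj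
      simp [ltransv_of, ltransv_symm_of, rtransv_of, rtransv_symm_of, hκj, hij,
        hki.symm, hkj.symm, mul_assoc]
    by_cases hlk : l = k
    · subst hlk
      rcases (hκk l hli hlj).imp_right fun h => h.resolve_right hk with h | h <;>
        simp [ltransv_of, ltransv_symm_of, rtransv_of, rtransv_symm_of, hκi, hij, hkj,
          hki.symm, h, mul_assoc]
    · rcases hκk l hli hlj with h | h | h <;>
        simp [ltransv_of, ltransv_symm_of, rtransv_of, rtransv_symm_of, hij, hki.symm,
          hlj, hlk, h, mul_assoc]

end Transvections

section PrimeExtension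

variable {E : Type*} [Group E] {p : ℕ} {φ : E →* Multiplicative (ZMod p)}

lemma hom_eq_of_mem {G I J : Type*} [Group G] {K D : Subgroup E} (e : FreeGroup J ≃* K)
    (e' : FreeGroup I ≃* D) {g : I → J}
    (hg : ∀ i, (e (FreeGroup.of (g i)) : E) = e' (FreeGroup.of i)) {α β : FreeGroup J →* G}
    (hαβ : ∀ i, α (FreeGroup.of (g i)) = β (FreeGroup.of (g i))) {y : FreeGroup J}
    (hy : (e y : E) ∈ D) : α y = β y := by
  have hle : D ≤ (α.eqLocus β).map (K.subtype.comp e.toMonoidHom) :=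
    range_le_of_equiv e' fun i => ⟨FreeGroup.of (g i), hαβ i, hg i⟩
  obtain ⟨z, hz, hzy⟩ := hle hy
  have : z = y := e.injective (Subtype.ext hzy)
  exact this ▸ hz

lemma exists_freeGroup_equiv {X : Type} {ι : FreeGroup X →* E} (hι : Function.Injective ι)
    {D : Subgroup E} (hD : D ≤ ι.range) :
    ∃ I : Type, Nonempty (FreeGroup I ≃* D) := by
  have e1 : (D.comap ι) ≃* D :=
    (((D.comap ι).equivMapOfInjective ι hι).trans
      (MulEquiv.subgroupCongr (Subgroup.map_comap_eq_self hD)))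
  exact ⟨_, ⟨(IsFreeGroup.mulEquiv (D.comap ι)).trans e1⟩⟩

variable [Fact p.Prime]

lemma map_pow_val {s : E} (hs : φ s = Multiplicative.ofAdd 1) (q : Multiplicative (ZMod p)) :
    φ (s ^ q.toAdd.val) = q := by
  rw [map_pow, hs, ← ofAdd_nsmul]
  simp

lemma pow_mem_ker (s : E) : s ^ p ∈ φ.ker := by
  rw [MonoidHom.mem_ker, map_pow, ← ofAdd_toAdd (φ s), ← ofAdd_nsmul]
  simp

lemma ofAdd_natCast_val {k : ℕ} (hk : k < p) :
    (Multiplicative.ofAdd (k : ZMod p)).toAdd.val = k := by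
  simp [ZMod.val_natCast, Nat.mod_eq_of_lt hk]

lemma ofAdd_natCast_inj {k l : ℕ} (hk : k < p) (hl : l < p) :
    Multiplicative.ofAdd (k : ZMod p) = Multiplicative.ofAdd (l : ZMod p) ↔ k = l :=
  ⟨fun h => by rw [← ofAdd_natCast_val hk, h, ofAdd_natCast_val hl], fun h => h ▸ rfl⟩

lemma exists_ofAdd_natCast (q : Multiplicative (ZMod p)) :
    ∃ k < p, Multiplicative.ofAdd (k : ZMod p) = q :=
  ⟨q.toAdd.val, ZMod.val_lt _, by simp⟩

lemma le_ker_or_exists (A : Subgroup E) (φ : E →* Multiplicative (ZMod p)) :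
    A ≤ φ.ker ∨ ∃ s ∈ A, φ s = Multiplicative.ofAdd 1 := by
  by_contra! h
  obtain ⟨a, ha, hφ⟩ := SetLike.not_le_iff_exists.1 h.1
  have h0 : (φ a).toAdd ≠ 0 := fun h => hφ (toAdd_eq_zero.1 h)
  refine h.2 (a ^ ((φ a).toAdd)⁻¹.val) (A.pow_mem ha _) ?_
  rw [map_pow, ← ofAdd_toAdd (φ a), ← ofAdd_nsmul]
  simp [h0]

/-- The group of automorphisms of the kernel of `φ`, in some basis, has the property that each
normal subgroup containing conjugation by some fixed element contains a transvection. -/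
def HasTransvections (φ : E →* Multiplicative (ZMod p)) : Prop :=
  ∃ (J : Type) (_ : DecidableEq J) (e : FreeGroup J ≃* φ.ker) (s : E),
    ∀ θ : MulAut (FreeGroup J), (∀ x, (e (θ x) : E) = s⁻¹ * e x * s) →
      ∀ N : Subgroup (MulAut (FreeGroup J)), N.Normal → θ ∈ N →
        ∃ (i j : J) (h : i ≠ j), rtransv h ∈ N ∨ ltransv h ∈ N

lemma IsFreeProd.hasTransvections_of_le_ker {A B : Subgroup E} (h : IsFreeProd A B) {X : Type}
    {ι : FreeGroup X →* E} (hι : Function.Injective ι) (hker : φ.ker = ι.range) (hp : p ≠ 2)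
    (hA : A ≤ φ.ker) {s : E} (hsB : s ∈ B) (hs : φ s = Multiplicative.ofAdd 1) :
    HasTransvections φ := by
  classical
  have hp3 : 3 ≤ p := by have := (Fact.out : p.Prime).two_le; omega
  obtain ⟨I, ⟨eA⟩⟩ := exists_freeGroup_equiv hι (hA.trans hker.le)
  obtain ⟨I', ⟨eB⟩⟩ := exists_freeGroup_equiv hι ((inf_le_right (a := B)).trans hker.le)
  obtain ⟨e, heA, heB⟩ := h.exists_basis_of_le_ker hA (σ := fun q => s ^ q.toAdd.val)
    (fun q => B.pow_mem hsB _) (map_pow_val hs) (by simp) eA eB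
  obtain ⟨a⟩ : Nonempty I := by
    by_contra hI
    rw [not_nonempty_iff] at hI
    have := eA.symm.injective.subsingleton
    exact h.left_ne_bot (Subgroup.eq_bot_of_subsingleton A)
  refine ⟨_, inferInstance, e, s, fun θ hθ N hN hθN => ?_⟩
  let x : ℕ → I → (Multiplicative (ZMod p) × I) ⊕ I' := fun k i =>
    .inl (Multiplicative.ofAdd (k : ZMod p), i)
  have hx : ∀ k i, k < p → (e (FreeGroup.of (x k i)) : E) =
      (s ^ k)⁻¹ * eA (FreeGroup.of i) * s ^ k := fun k i hk => by
    rw [heA]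
    simp only [ofAdd_natCast_val hk]
  have hxinj : ∀ {k l i j}, k < p → l < p → (x k i = x l j ↔ k = l ∧ i = j) := fun hk hl => by
    rw [← ofAdd_natCast_inj hk hl]
    simp [x]
  have hθx : ∀ k i, k + 1 < p → θ (FreeGroup.of (x k i)) = FreeGroup.of (x (k + 1) i) :=
    fun k i hk => e.injective <| Subtype.ext <| by
      rw [hθ, hx _ _ hk, hx _ _ (by omega)]
      group
  have h0 : (0 : ℕ) < p := by omega
  have h1 : (1 : ℕ) < p := by omega
  have h2 : (2 : ℕ) < p := by omega
  let π := Equiv.swap (x 0 a) (x 1 a)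
  let π' := Equiv.swap (x 1 a) (x 2 a)
  have hfix : ∀ {y}, (e y : E) ∈ B ⊓ φ.ker → permAut π' y = y := fun {y} hy =>
    hom_eq_of_mem e eB (g := Sum.inr) heB (α := (permAut π').toMonoidHom) (β := MonoidHom.id _)
      (fun i => by simp [permAut_of, π', x, Equiv.swap_apply_of_ne_of_ne]) hy
  have hrel : θ * permAut π = permAut π' * θ := by
    refine mulAut_ext fun j => ?_
    rw [MulAut.mul_apply, MulAut.mul_apply, permAut_of]
    rcases j with ⟨q, i⟩ | i
    · obtain ⟨k, hk, rfl⟩ := exists_ofAdd_natCast q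
      change θ (FreeGroup.of (π (x k i))) = permAut π' (θ (FreeGroup.of (x k i)))
      rcases (show k + 1 < p ∨ k + 1 = p by omega) with hk1 | hk1
      · rw [hθx _ _ hk1, permAut_of]
        by_cases hi : i = a
        · subst hi
          rcases k with _ | _ | k
          · simp only [π, π', Equiv.swap_apply_left, hθx _ _ h2, zero_add]
          · simp only [π, π', Equiv.swap_apply_right, hθx _ _ h1, zero_add]
          · rw [Equiv.swap_apply_of_ne_of_ne, Equiv.swap_apply_of_ne_of_ne, hθx _ _ hk1] <;>
            simp [*]
        · rw [Equiv.swap_apply_of_ne_of_ne, Equiv.swap_apply_of_ne_of_ne, hθx _ _ hk1] <;>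
          simp [*]
      · have hw : s ^ p ∈ B ⊓ φ.ker :=
          ⟨B.pow_mem hsB _, pow_mem_ker s⟩
        obtain ⟨w, hw'⟩ := e.surjective ⟨_, hw.2⟩
        have hw' : (e w : E) = s ^ p := congrArg Subtype.val hw'
        have hθk : θ (FreeGroup.of (x k i)) = w⁻¹ * FreeGroup.of (x 0 i) * w :=
          e.injective <| Subtype.ext <| by
            simp only [_root_.map_mul, _root_.map_inv, Subgroup.coe_mul, Subgroup.coe_inv, hw', hθ]
            rw [hx _ _ hk, hx _ _ h0, ← hk1]
            group
        have hne : ∀ l < p, l < k → x k i ≠ x l a := fun l hl hlk => by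
          simp [hxinj hk hl, hlk.ne']
        rw [Equiv.swap_apply_of_ne_of_ne (hne 0 h0 (by omega)) (hne 1 h1 (by omega)), hθk]
        simp only [_root_.map_mul, _root_.map_inv, hfix (hw'.symm ▸ hw), permAut_of]
        rw [Equiv.swap_apply_of_ne_of_ne] <;> simp [hxinj, h0, h1, h2]
    · rw [Equiv.swap_apply_of_ne_of_ne (by simp [x]) (by simp [x]), hfix]
      rw [hθ, heB]
      exact ⟨B.mul_mem (B.mul_mem (B.inv_mem hsB) (eB _).2.1) hsB,
        by simpa using (φ.normal_ker.conj_mem _ (eB (FreeGroup.of i)).2.2 s⁻¹)⟩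
  have hmem : permAut (π' * π) ∈ N := by
    have : permAut (π' * π) = θ * (permAut π * θ⁻¹ * (permAut π)⁻¹) := by
      have hππ : permAut π * permAut π = 1 := by
        rw [← permAut_mul, Equiv.swap_mul_self]
        exact mulAut_ext fun k => by simp [permAut_of]
      rw [← mul_assoc, ← mul_assoc, hrel, permAut_mul, mul_inv_cancel_right,
        eq_mul_inv_iff_mul_eq, mul_assoc, hππ, mul_one]
    rw [this]
    exact N.mul_mem hθN (hN.conj_mem _ (N.inv_mem hθN) _)
  have h01 : x 0 a ≠ x 1 a := by simp [*]
  have h02 : x 0 a ≠ x 2 a := by simp [*]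
  have h12 : x 1 a ≠ x 2 a := by simp [*]
  exact ⟨_, _, h01, .inl (rtransv_mem_of_three_cycle hmem h02 h12.symm h01 (by simp [π, π'])
    (by simp [π, π', Equiv.swap_apply_of_ne_of_ne, h02.symm, h12.symm]))⟩

lemma IsFreeProd.hasTransvections_of_surjective {A B : Subgroup E} (h : IsFreeProd A B) {X : Type}
    {ι : FreeGroup X →* E} (hι : Function.Injective ι) (hker : φ.ker = ι.range) (hp : p ≠ 2)
    (hrank : ∀ J : Type, Nonempty (FreeGroup J ≃* φ.ker) → ∀ i j : J, ∃ k, k ≠ i ∧ k ≠ j)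
    {s : E} (hsA : s ∈ A) (hs : φ s = Multiplicative.ofAdd 1)
    {u : E} (huB : u ∈ B) (hu : φ u = Multiplicative.ofAdd 1) :
    HasTransvections φ := by
  classical
  have hp3 : 3 ≤ p := by have := (Fact.out : p.Prime).two_le; omega
  obtain ⟨I, ⟨eA⟩⟩ := exists_freeGroup_equiv hι ((inf_le_right (a := A)).trans hker.le)
  obtain ⟨I', ⟨eB⟩⟩ := exists_freeGroup_equiv hι ((inf_le_right (a := B)).trans hker.le)
  obtain ⟨e, heA, heB, heT⟩ := h.exists_basis_of_surjective (σ := fun q => s ^ q.toAdd.val)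
    (υ := fun q => u ^ q.toAdd.val)
    (fun q => A.pow_mem hsA _) (map_pow_val hs) (by simp)
    (fun q => B.pow_mem huB _) (map_pow_val hu) (by simp) eA eB
  refine ⟨_, inferInstance, e, s, fun θ hθ N hN hθN => ?_⟩
  have ht0 : ∀ k, 0 < k → k < p → Multiplicative.ofAdd (k : ZMod p) ≠ 1 := fun k h0 hk => by
    have := (ofAdd_natCast_inj hk (h0.trans hk)).not.2 h0.ne'
    simpa using this
  have h1 : 1 < p := by omega
  have h2 : 2 < p := by omega
  let t₁ : (I ⊕ I') ⊕ {q : Multiplicative (ZMod p) // q ≠ 1} := .inr ⟨_, ht0 1 one_pos h1⟩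
  let t₂ : (I ⊕ I') ⊕ {q : Multiplicative (ZMod p) // q ≠ 1} := .inr ⟨_, ht0 2 two_pos h2⟩
  have ht12 : t₁ ≠ t₂ := by
    have := (ofAdd_natCast_inj h1 h2).not.2 (by omega)
    simpa [t₁, t₂] using this
  have het : ∀ k (h0 : 0 < k) (hk : k < p), (e (FreeGroup.of (.inr ⟨_, ht0 k h0 hk⟩)) : E) =
      (s ^ k)⁻¹ * u ^ k := fun k h0 hk => by
    rw [heT]
    simp only [ofAdd_natCast_val hk]
  have het₁ : (e (FreeGroup.of t₁) : E) = s⁻¹ * u :=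
    (het 1 one_pos h1).trans (by simp)
  have het₂ : (e (FreeGroup.of t₂) : E) = (s ^ 2)⁻¹ * u ^ 2 := het 2 two_pos h2
  let f : (I ⊕ I') ⊕ {q : Multiplicative (ZMod p) // q ≠ 1} → FreeGroup _ :=
    Sum.elim (Sum.elim (fun i => FreeGroup.of (.inl (.inl i)))
      (fun i => FreeGroup.of t₁ * FreeGroup.of (.inl (.inr i)) * (FreeGroup.of t₁)⁻¹))
      (fun q => if Sum.inr q = t₁ then (FreeGroup.of t₁)⁻¹ else
        FreeGroup.of (.inr q) * (FreeGroup.of t₁)⁻¹)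
  have hff : ∀ j, FreeGroup.lift f (f j) = FreeGroup.of j := by
    rintro ((i | i) | q)
    · simp [f]
    · simp [f, t₁, mul_assoc]
    · by_cases hq : Sum.inr q = t₁
      · simp [f, hq]
        simp [t₁]
      · simp [f, hq]
        simp [t₁]
  let η := autMk f f hff hff
  have hη : ∀ j, η (FreeGroup.of j) = f j := autMk_of _ _ _ _
  let π := permAut (Equiv.swap t₁ t₂)
  have hθA : ∀ {y}, (e y : E) ∈ A ⊓ φ.ker → π y = y := fun {y} hy =>
    hom_eq_of_mem e eA (g := .inl ∘ .inl) heA (α := π.toMonoidHom) (β := MonoidHom.id _)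
      (fun i => by simp [π, permAut_of, t₁, t₂, Equiv.swap_apply_of_ne_of_ne]) hy
  have hθB : ∀ {y}, (e y : E) ∈ B ⊓ φ.ker → π y = y := fun {y} hy =>
    hom_eq_of_mem e eB (g := .inl ∘ .inr) heB (α := π.toMonoidHom) (β := MonoidHom.id _)
      (fun i => by simp [π, permAut_of, t₁, t₂, Equiv.swap_apply_of_ne_of_ne]) hy
  have hθt₁ : θ (FreeGroup.of t₁) = FreeGroup.of t₂ * (FreeGroup.of t₁)⁻¹ :=
    e.injective <| Subtype.ext <| by
      simp only [_root_.map_mul, _root_.map_inv, Subgroup.coe_mul, Subgroup.coe_inv, hθ, het₁, het₂]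
      group
  have hπ₁ : π (FreeGroup.of t₁) = FreeGroup.of t₂ := by simp [π, permAut_of]
  have hπ₂ : π (FreeGroup.of t₂) = FreeGroup.of t₁ := by simp [π, permAut_of]
  have hπ : ∀ j, j ≠ t₁ → j ≠ t₂ → π (FreeGroup.of j) = FreeGroup.of j := fun j hj hj' => by
    simp [π, permAut_of, Equiv.swap_apply_of_ne_of_ne hj hj']
  have hrel : θ * η = π * θ := by
    refine mulAut_ext fun j => ?_
    rw [MulAut.mul_apply, MulAut.mul_apply, hη]
    rcases j with (i | i) | ⟨q, hq⟩
    · rw [hθA]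
      · rfl
      rw [hθ, heA]
      exact ⟨A.mul_mem (A.mul_mem (A.inv_mem hsA) (eA _).2.1) hsA,
        by simpa using (φ.normal_ker.conj_mem _ (eA (FreeGroup.of i)).2.2 s⁻¹)⟩
    · have hb : u⁻¹ * eB (FreeGroup.of i) * u ∈ B ⊓ φ.ker :=
        ⟨B.mul_mem (B.mul_mem (B.inv_mem huB) (eB _).2.1) huB,
          by simpa using (φ.normal_ker.conj_mem _ (eB (FreeGroup.of i)).2.2 u⁻¹)⟩
      obtain ⟨b, hb'⟩ := e.surjective ⟨_, hb.2⟩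
      have hb' : (e b : E) = u⁻¹ * eB (FreeGroup.of i) * u := congrArg Subtype.val hb'
      have hθb : θ (FreeGroup.of (.inl (.inr i))) = FreeGroup.of t₁ * b * (FreeGroup.of t₁)⁻¹ :=
        e.injective <| Subtype.ext <| by
          simp only [_root_.map_mul, _root_.map_inv, Subgroup.coe_mul, Subgroup.coe_inv, hθ, het₁,
            hb', heB]
          group
      simp only [f, Sum.elim_inl, Sum.elim_inr, _root_.map_mul, _root_.map_inv, hθb, hθt₁, hπ₁,
        hθB (hb'.symm ▸ hb)]
      group
    · obtain ⟨k, hk, rfl⟩ := exists_ofAdd_natCast q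
      have hk0 : 0 < k := by
        rcases Nat.eq_zero_or_pos k with rfl | h
        · simp at hq
        · exact h
      rcases Nat.eq_or_lt_of_le hk0 with rfl | hk1
      · change θ (f t₁) = π (θ (FreeGroup.of t₁))
        have hft : f t₁ = (FreeGroup.of t₁)⁻¹ := if_pos rfl
        simp [hft, hθt₁, hπ₁, hπ₂]
      have hne : ∀ l (h0 : 0 < l) (hl : l < p) k (hk0 : 0 < k) (hk : k < p), l ≠ k →
          (Sum.inr ⟨_, ht0 k hk0 hk⟩ : (I ⊕ I') ⊕ {q : Multiplicative (ZMod p) // q ≠ 1}) ≠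
            .inr ⟨_, ht0 l h0 hl⟩ := fun l h0 hl k hk0 hk hlk => by
        have := (ofAdd_natCast_inj hk hl).not.2 hlk.symm
        simpa using this
      have hfk : f (.inr ⟨_, hq⟩) = FreeGroup.of (.inr ⟨_, hq⟩) * (FreeGroup.of t₁)⁻¹ := by
        simp only [f, Sum.elim_inr]
        rw [if_neg (hne 1 one_pos h1 k hk0 hk (by omega))]
      obtain ⟨y, hy, hyπ⟩ : ∃ y, (e y : E) = (s ^ (k + 1))⁻¹ * u ^ (k + 1) ∧ π y = y := by
        rcases (show k + 1 < p ∨ k + 1 = p by omega) with hkp | hkp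
        · exact ⟨_, het (k + 1) k.succ_pos hkp, hπ _
            (hne 1 one_pos h1 _ k.succ_pos hkp (by omega))
            (hne 2 two_pos h2 _ k.succ_pos hkp (by omega))⟩
        · obtain ⟨y, hy⟩ := e.surjective ⟨_, pow_mem_ker s⟩
          obtain ⟨z, hz⟩ := e.surjective ⟨_, pow_mem_ker u⟩
          have hy : (e y : E) = s ^ p := congrArg Subtype.val hy
          have hz : (e z : E) = u ^ p := congrArg Subtype.val hz
          refine ⟨y⁻¹ * z, by simp [hy, hz, hkp], ?_⟩
          rw [_root_.map_mul, _root_.map_inv, hθA, hθB]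
          · exact hz.symm ▸ ⟨B.pow_mem huB _, pow_mem_ker u⟩
          · exact hy.symm ▸ ⟨A.pow_mem hsA _, pow_mem_ker s⟩
      have hθk : θ (FreeGroup.of (.inr ⟨_, hq⟩)) = y * (FreeGroup.of t₁)⁻¹ :=
        e.injective <| Subtype.ext <| by
          simp only [_root_.map_mul, _root_.map_inv, Subgroup.coe_mul, Subgroup.coe_inv, hθ, het₁,
            hy, het k hk0 hk]
          group
      rw [hfk]
      simp only [_root_.map_mul, _root_.map_inv, hθk, hθt₁, hπ₁, hyπ]
      group
  have hmem : η * π ∈ N := by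
    have : η * π = (η * θ * η⁻¹) * θ⁻¹ := by
      have hηη : η⁻¹ = η := mulAut_ext fun j => by rw [hη]; exact autMk_inv_of _ _ _ _ _
      rw [hηη, mul_assoc η θ η, hrel]
      group
    rw [this]
    exact N.mul_mem (hN.conj_mem _ hθN _) (N.inv_mem hθN)
  obtain ⟨k, hk1, hk2⟩ := hrank _ ⟨e⟩ t₁ t₂
  refine ⟨_, _, hk2, .inr (ltransv_mem_of_order_three hmem ht12 hk1 hk2 ?_ ?_ ?_)⟩
  · rw [MulAut.mul_apply, hπ₁, hη]
    simp only [t₂, f, Sum.elim_inr]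
    rw [if_neg ht12.symm]
  · rw [MulAut.mul_apply, hπ₂, hη]
    simp only [f, t₁, Sum.elim_inr, if_true]
  · intro l hl1 hl2
    rw [MulAut.mul_apply, hπ l hl1 hl2, hη]
    rcases l with (i | i) | q
    · exact .inl rfl
    · exact .inr (.inr rfl)
    · exact .inr (.inl (if_neg hl1))

theorem hasTransvections {X : Type} [DecidableEq X] [Finite X]
    {ι : FreeGroup X →* E} (hι : Function.Injective ι) (hp : p ≠ 2) (hφ : Function.Surjective φ)
    (hker : φ.ker = ι.range) (hcent : ∀ s, s ∉ φ.ker → ∃ f ∈ φ.ker, f * s ≠ s * f)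
    (hrank : ∀ J : Type, Nonempty (FreeGroup J ≃* φ.ker) → ∀ i j : J, ∃ k, k ≠ i ∧ k ≠ j) :
    HasTransvections φ := by
  obtain ⟨A, B, h⟩ := exists_isFreeProd_of_prime_index hι hp hφ hker hcent
  rcases le_ker_or_exists A φ with hA | ⟨s, hsA, hs⟩ <;>
    rcases le_ker_or_exists B φ with hB | ⟨u, huB, hu⟩
  · have hle := sup_le hA hB
    rw [h.sup_eq_top, top_le_iff, MonoidHom.ker_eq_top_iff] at hle
    obtain ⟨s, hs⟩ := hφ (Multiplicative.ofAdd 1)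
    rw [hle] at hs
    exact absurd hs.symm (by simp)
  · exact h.hasTransvections_of_le_ker hι hker hp hA huB hu
  · exact h.symm.hasTransvections_of_le_ker hι hker hp hB hsA hs
  · exact h.hasTransvections_of_surjective hι hker hp hrank hsA hs huB hu

end PrimeExtension

section Cancellation

variable {J : Type*} [DecidableEq J]

lemma exists_common_initial {α : Type*} [DecidableEq α] (l l' : List α) :
    ∃ c a b, l = c ++ a ∧ l' = c ++ b ∧ ∀ x ∈ a.head?, ∀ y ∈ b.head?, x ≠ y := by
  induction l generalizing l' with
  | nil => exact ⟨[], [], l', by simp⟩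
  | cons x l ih =>
    rcases l' with _ | ⟨y, l'⟩
    · exact ⟨[], x :: l, [], by simp⟩
    · by_cases hxy : x = y
      · obtain ⟨c, a, b, rfl, rfl, h⟩ := ih l'
        exact ⟨x :: c, a, b, by simp [hxy], by simp [hxy], h⟩
      · exact ⟨[], x :: l, y :: l', by simp [hxy]⟩

lemma exists_cancellation (x y : FreeGroup J) :
    ∃ c a b, x.toWord = c ++ a ∧ y.toWord = c ++ b ∧
      (x⁻¹ * y).toWord = FreeGroup.invRev a ++ b ∧ ∀ s ∈ a.head?, ∀ t ∈ b.head?, s ≠ t := by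
  obtain ⟨c, a, b, hx, hy, h⟩ := exists_common_initial x.toWord y.toWord
  refine ⟨c, a, b, hx, hy, ?_, h⟩
  have hmk : x⁻¹ * y = FreeGroup.mk (FreeGroup.invRev a ++ b) := by
    rw [← FreeGroup.mk_toWord (x := x), ← FreeGroup.mk_toWord (x := y), hx, hy]
    simp only [← FreeGroup.mul_mk, ← FreeGroup.inv_mk]
    group
  rw [hmk, FreeGroup.toWord_mk]
  refine FreeGroup.IsReduced.reduce_eq ?_
  have ha : FreeGroup.IsReduced (FreeGroup.invRev a) := by
    have hred := FreeGroup.isReduced_toWord (x := x⁻¹)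
    rw [FreeGroup.toWord_inv, hx, FreeGroup.invRev_append] at hred
    exact List.IsChain.left_of_append hred
  have hb : FreeGroup.IsReduced b := by
    have hred := FreeGroup.isReduced_toWord (x := y)
    rw [hy] at hred
    exact List.IsChain.right_of_append hred
  refine List.IsChain.append ha hb fun s hs t ht hst => ?_
  have hs' : (s.1, !s.2) ∈ a.head? := by
    rcases a with _ | ⟨u, a⟩
    · simp at hs
    · simp [FreeGroup.invRev] at hs
      simp [← hs]
  have := h _ hs' _ ht
  by_contra hne
  refine this (Prod.ext hst ?_)
  simpa [Bool.eq_not] using hne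

/-- The length of the longest common prefix of the reduced words of `x` and `y`. -/
def overlap (x y : FreeGroup J) : ℕ := (x.norm + y.norm - (x⁻¹ * y).norm) / 2

lemma norm_inv_mul_add (x y : FreeGroup J) :
    (x⁻¹ * y).norm + 2 * overlap x y = x.norm + y.norm := by
  obtain ⟨c, a, b, hx, hy, h, -⟩ := exists_cancellation x y
  simp only [overlap, FreeGroup.norm, hx, hy, h, List.length_append, FreeGroup.invRev_length]
  omega

lemma le_overlap_iff {x y : FreeGroup J} {k : ℕ} :
    k ≤ overlap x y ↔ k ≤ x.norm ∧ k ≤ y.norm ∧ x.toWord.take k = y.toWord.take k := by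
  obtain ⟨c, a, b, hx, hy, h, hne⟩ := exists_cancellation x y
  have hc : overlap x y = c.length := by
    simp only [overlap, FreeGroup.norm, hx, hy, h, List.length_append, FreeGroup.invRev_length]
    omega
  simp only [hc, FreeGroup.norm, hx, hy, List.length_append]
  constructor
  · intro hk
    exact ⟨by omega, by omega, by rw [List.take_append_of_le_length hk,
      List.take_append_of_le_length hk]⟩
  · rintro ⟨h1, h2, h3⟩
    by_contra! hk
    obtain ⟨m, rfl⟩ := Nat.exists_eq_add_of_lt hk
    rcases a with _ | ⟨s, a⟩
    · simp at h1
    rcases b with _ | ⟨t, b⟩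
    · simp at h2
    rw [show c.length + m + 1 = c.length + (m + 1) by ring, List.take_length_add_append,
      List.take_length_add_append] at h3
    simp only [List.take_succ_cons, List.append_cancel_left_eq, List.cons.injEq] at h3
    exact hne s (by simp) t (by simp) h3.1

lemma overlap_comm (x y : FreeGroup J) : overlap x y = overlap y x :=
  eq_of_forall_le_iff fun k => by
    rw [le_overlap_iff, le_overlap_iff, eq_comm]
    tauto

lemma min_overlap_le (x y z : FreeGroup J) :
    min (overlap x y) (overlap y z) ≤ overlap x z := by
  have h1 := le_overlap_iff.1 (min_le_left (overlap x y) (overlap y z))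
  have h2 := le_overlap_iff.1 (min_le_right (overlap x y) (overlap y z))
  exact le_overlap_iff.2 ⟨h1.1, h2.2.1, h1.2.2.trans h2.2.2⟩

lemma norm_lt_norm_mul_self {y : FreeGroup J} (hy : y ≠ 1) : y.norm < (y * y).norm := by
  have h := FreeGroup.isReduced_toWord (x := y)
  have h1 := FreeGroup.reduceCyclically.reduce_flatten_replicate_succ h 0
  have h2 := FreeGroup.reduceCyclically.reduce_flatten_replicate_succ h 1
  simp only [List.replicate, List.flatten_cons, List.flatten_nil, List.append_nil,
    ← FreeGroup.toWord_mul, FreeGroup.reduce_toWord] at h1 h2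
  have h0 : FreeGroup.reduceCyclically y.toWord ≠ [] := by
    intro h0
    rw [h0, List.append_nil] at h1
    apply hy
    rw [← FreeGroup.mk_toWord (x := y), h1, ← FreeGroup.mul_mk, ← FreeGroup.inv_mk, mul_inv_cancel]
  have := List.length_pos_iff.2 h0
  have h1 := congrArg List.length h1
  have h2 := congrArg List.length h2
  simp only [List.length_append, FreeGroup.invRev_length] at h1 h2
  simp only [FreeGroup.norm]
  omega

lemma two_mul_overlap_inv_self_lt {y : FreeGroup J} (hy : y ≠ 1) :
    2 * overlap y⁻¹ y < y.norm := by
  have := norm_inv_mul_add y⁻¹ y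
  have := norm_lt_norm_mul_self hy
  simp only [inv_inv, FreeGroup.norm_inv_eq] at *
  omega

/-- A set of elements of a free group satisfying Nielsen's cancellation conditions. -/
structure IsNielsenReduced (S : Set (FreeGroup J)) : Prop where
  ne_one : ∀ x ∈ S, x ≠ 1
  overlap_le : ∀ x ∈ S, ∀ y ∈ S, x * y ≠ 1 → 2 * overlap x⁻¹ y ≤ y.norm
  overlap_add_lt : ∀ x ∈ S, ∀ y ∈ S, ∀ z ∈ S, x * y ≠ 1 → y * z ≠ 1 →
    overlap x⁻¹ y + overlap y⁻¹ z < y.norm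

lemma IsNielsenReduced.overlap_lt {S : Set (FreeGroup J)} (hS : IsNielsenReduced S)
    {y : FreeGroup J} (hy : y ∈ S) {L : List (FreeGroup J)} (hL : ∀ z ∈ L, z ∈ S)
    (hchain : (y :: L).IsChain fun a b => a * b ≠ 1) {x : FreeGroup J} (hx : x ∈ S)
    (hxy : x * y ≠ 1) :
    overlap x⁻¹ y < overlap (y :: L).prod y ∧
      overlap x⁻¹ y + (L.length + 1) ≤ (y :: L).prod.norm := by
  induction L generalizing x y with
  | nil =>
    have h0 : y.norm ≠ 0 := by simpa using hS.ne_one y hy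
    have h1 := hS.overlap_le x hx y hy hxy
    have h2 := norm_inv_mul_add y y
    simp only [List.prod_cons, List.prod_nil, mul_one, List.length_nil, zero_add,
      inv_mul_cancel, FreeGroup.norm_one] at *
    omega
  | cons z L ih =>
    rw [List.isChain_cons_cons] at hchain
    obtain ⟨ih1, ih2⟩ := ih (hL z (by simp)) (fun w hw => hL w (by simp [hw])) hchain.2 hy
      hchain.1
    have hN := hS.overlap_add_lt x hx y hy z (hL z (by simp)) hxy hchain.1
    rw [List.prod_cons (a := y), List.length_cons]
    set w := (z :: L).prod
    have h1 := min_overlap_le y⁻¹ z w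
    have h2 := min_overlap_le y⁻¹ w z
    rw [overlap_comm z w] at h1
    have h3 := norm_inv_mul_add y⁻¹ w
    have h4 := norm_inv_mul_add (y * w) y
    rw [show (y * w)⁻¹ * y = w⁻¹ by group, FreeGroup.norm_inv_eq] at h4
    rw [inv_inv, FreeGroup.norm_inv_eq] at h3
    omega

lemma IsNielsenReduced.length_le_norm_prod {S : Set (FreeGroup J)} (hS : IsNielsenReduced S)
    {L : List (FreeGroup J)} (hL : ∀ z ∈ L, z ∈ S) (hchain : L.IsChain fun a b => a * b ≠ 1) :
    L.length ≤ L.prod.norm := by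
  rcases L with _ | ⟨y, L⟩
  · simp
  · have hy := hL y (by simp)
    have hyy : y * y ≠ 1 := fun h => by
      have := norm_lt_norm_mul_self (hS.ne_one y hy)
      simp [h] at this
    have := (hS.overlap_lt hy (fun z hz => hL z (by simp [hz])) hchain hy hyy).2
    rw [List.length_cons]
    omega

end Cancellation

section Nielsen

variable {J : Type*}

/-- A numerical encoding of words, used to order words of equal length. -/
noncomputable def wordCode [Finite J] (l : List (J × Bool)) : ℕ :=
  Nat.ofDigits (Nat.card (J × Bool) + 2)
    (l.map fun a => (Finite.equivFin (J × Bool) a : ℕ)).reverse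

lemma wordCode_injective [Finite J] {l l' : List (J × Bool)} (hlen : l.length = l'.length)
    (h : wordCode l = wordCode l') : l = l' := by
  have hlt : ∀ l : List (J × Bool),
      ∀ k ∈ (l.map fun a => (Finite.equivFin (J × Bool) a : ℕ)).reverse,
        k < Nat.card (J × Bool) + 2 := by
    intro l k hk
    simp only [List.mem_reverse, List.mem_map] at hk
    obtain ⟨a, -, rfl⟩ := hk
    have := (Finite.equivFin (J × Bool) a).2
    omega
  have := Nat.ofDigits_inj_of_len_eq (by omega) (by simpa using hlen) (hlt l) (hlt l') h
  refine List.map_injective_iff.2 (fun a b hab => ?_) (List.reverse_injective this)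
  exact (Finite.equivFin (J × Bool)).injective (Fin.ext hab)

lemma wordCode_append_le_iff [Finite J] {l l' r : List (J × Bool)} :
    wordCode (l ++ r) ≤ wordCode (l' ++ r) ↔ wordCode l ≤ wordCode l' := by
  simp only [wordCode, List.map_append, List.reverse_append, Nat.ofDigits_append]
  rw [add_le_add_iff_left]
  exact Nat.mul_le_mul_left_iff (by positivity)

lemma mk_singleton_inv (a : J × Bool) : (FreeGroup.mk [a])⁻¹ = FreeGroup.mk [(a.1, !a.2)] := by
  simp [FreeGroup.inv_mk, FreeGroup.invRev]

lemma map_mk_eq_prod (f : MulAut (FreeGroup J)) (l : List (J × Bool)) :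
    f (FreeGroup.mk l) = (l.map fun a => f (FreeGroup.mk [a])).prod := by
  induction l with
  | nil => exact _root_.map_one f
  | cons a l ih =>
    rw [List.map_cons, List.prod_cons, ← ih, ← _root_.map_mul, FreeGroup.mul_mk]
    rfl

variable [DecidableEq J]

/-- The first half of the reduced word of `y`. -/
def firstHalf (y : FreeGroup J) : List (J × Bool) := y.toWord.take (y.norm / 2)

/-- The code of an element, invariant under inversion. -/
noncomputable def code [Finite J] (y : FreeGroup J) : ℕ :=
  wordCode (firstHalf y) + wordCode (firstHalf y⁻¹)

lemma code_inv [Finite J] (y : FreeGroup J) : code y⁻¹ = code y := by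
  rw [code, code, inv_inv, add_comm]

lemma wordCode_firstHalf_le [Finite J] {y z : FreeGroup J} (hyz : (y * z).norm = z.norm)
    (hle : y.norm ≤ z.norm) (hcode : code z ≤ code (y * z)) :
    wordCode (firstHalf y⁻¹) ≤ wordCode (firstHalf y) := by
  obtain ⟨c, a, b, hy, hz, h, -⟩ := exists_cancellation y⁻¹ z
  rw [inv_inv] at h
  have hy' : y.toWord = FreeGroup.invRev a ++ FreeGroup.invRev c := by
    rw [← inv_inv y, FreeGroup.toWord_inv, hy, FreeGroup.invRev_append]
  have hz' : z⁻¹.toWord = FreeGroup.invRev b ++ FreeGroup.invRev c := by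
    rw [FreeGroup.toWord_inv, hz, FreeGroup.invRev_append]
  have h' : (y * z)⁻¹.toWord = FreeGroup.invRev b ++ a := by
    rw [FreeGroup.toWord_inv, h, FreeGroup.invRev_append, FreeGroup.invRev_invRev]
  have hny : y.norm = a.length + c.length := by simp [FreeGroup.norm, hy']
  have hnz : z.norm = c.length + b.length := by simp [FreeGroup.norm, hz]
  have hnyz : (y * z).norm = a.length + b.length := by simp [FreeGroup.norm, h]
  have hac : a.length = c.length := by omega
  obtain ⟨m, hm⟩ : ∃ m, z.norm / 2 = c.length + m := ⟨z.norm / 2 - c.length, by omega⟩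
  have hbm : c.length + m ≤ b.length := by omega
  have hhy : firstHalf y = FreeGroup.invRev a := by
    rw [firstHalf, hy', hny, List.take_append_of_le_length (by simp; omega),
      List.take_of_length_le (by simp; omega)]
  have hhy' : firstHalf y⁻¹ = c := by
    rw [firstHalf, hy, FreeGroup.norm_inv_eq, hny, List.take_append_of_le_length (by omega),
      List.take_of_length_le (by omega)]
  have hhz : firstHalf z = c ++ b.take m := by
    rw [firstHalf, hz, hm, List.take_length_add_append]
  have hhyz : firstHalf (y * z) = FreeGroup.invRev a ++ b.take m := by
    rw [firstHalf, h, hyz, hm, ← hac, ← FreeGroup.invRev_length, List.take_length_add_append]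
  have hhz' : firstHalf z⁻¹ = firstHalf (y * z)⁻¹ := by
    rw [firstHalf, firstHalf, hz', h', FreeGroup.norm_inv_eq, FreeGroup.norm_inv_eq, hyz, hm,
      List.take_append_of_le_length (by simpa), List.take_append_of_le_length (by simpa)]
  rw [code, code, hhz', add_le_add_iff_right, hhz, hhyz, wordCode_append_le_iff] at hcode
  rwa [hhy, hhy']

lemma firstHalf_inv_ne {y : FreeGroup J} (hy : y ≠ 1) (heven : 2 ∣ y.norm) :
    firstHalf y⁻¹ ≠ firstHalf y := by
  intro h
  have h1 : y.norm / 2 ≤ overlap y⁻¹ y := by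
    rw [le_overlap_iff, FreeGroup.norm_inv_eq]
    refine ⟨by omega, by omega, ?_⟩
    simpa [firstHalf] using h
  have := two_mul_overlap_inv_self_lt hy
  omega

/-- The images of the letters under an automorphism. -/
def letterImages (f : MulAut (FreeGroup J)) : Set (FreeGroup J) :=
  Set.range fun a : J × Bool => f (FreeGroup.mk [a])

/-- No transvection decreases the complexity of the automorphism `f`. -/
def IsNielsenMinimal [Finite J] (f : MulAut (FreeGroup J)) : Prop :=
  ∀ a b : J × Bool, a.1 ≠ b.1 →
    (f (FreeGroup.mk [b])).norm ≤ (f (FreeGroup.mk [a]) * f (FreeGroup.mk [b])).norm ∧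
    ((f (FreeGroup.mk [a]) * f (FreeGroup.mk [b])).norm = (f (FreeGroup.mk [b])).norm →
      code (f (FreeGroup.mk [b])) ≤ code (f (FreeGroup.mk [a]) * f (FreeGroup.mk [b])))

lemma mk_singleton_ne_one (a : J × Bool) : FreeGroup.mk [a] ≠ 1 := by
  intro h
  have := congrArg FreeGroup.toWord h
  simp at this

lemma IsNielsenMinimal.isNielsenReduced [Finite J] {f : MulAut (FreeGroup J)}
    (hf : IsNielsenMinimal f) : IsNielsenReduced (letterImages f) := by
  have hne : ∀ a : J × Bool, f (FreeGroup.mk [a]) ≠ 1 := fun a => by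
    simpa using mk_singleton_ne_one a
  have hinv : ∀ a : J × Bool, (f (FreeGroup.mk [a]))⁻¹ = f (FreeGroup.mk [(a.1, !a.2)]) :=
    fun a => by rw [← _root_.map_inv, mk_singleton_inv]
  have hcases : ∀ a b : J × Bool, f (FreeGroup.mk [a]) * f (FreeGroup.mk [b]) ≠ 1 →
      a = b ∨ a.1 ≠ b.1 := by
    rintro ⟨i, ε⟩ ⟨j, δ⟩ hab
    by_cases hij : i = j
    · subst hij
      refine .inl (Prod.ext rfl ?_)
      by_contra hεδ
      apply hab
      rw [mul_eq_one_iff_eq_inv, hinv, show ε = !δ from Bool.eq_not.2 hεδ]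
    · exact .inr hij
  have hle : ∀ a b : J × Bool, f (FreeGroup.mk [a]) * f (FreeGroup.mk [b]) ≠ 1 →
      2 * overlap (f (FreeGroup.mk [a]))⁻¹ (f (FreeGroup.mk [b])) ≤ (f (FreeGroup.mk [b])).norm ∧
      2 * overlap (f (FreeGroup.mk [a]))⁻¹ (f (FreeGroup.mk [b])) ≤
        (f (FreeGroup.mk [a])).norm := by
    intro a b hab
    rcases hcases a b hab with rfl | h
    · exact ⟨(two_mul_overlap_inv_self_lt (hne a)).le, (two_mul_overlap_inv_self_lt (hne a)).le⟩
    · have h1 := (hf a b h).1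
      have h2 := (hf (b.1, !b.2) (a.1, !a.2) h.symm).1
      rw [← hinv, ← hinv, ← _root_.mul_inv_rev, FreeGroup.norm_inv_eq, FreeGroup.norm_inv_eq] at h2
      have h3 := norm_inv_mul_add (f (FreeGroup.mk [a]))⁻¹ (f (FreeGroup.mk [b]))
      rw [inv_inv, FreeGroup.norm_inv_eq] at h3
      omega
  have htie : ∀ a b : J × Bool, f (FreeGroup.mk [a]) * f (FreeGroup.mk [b]) ≠ 1 →
      2 * overlap (f (FreeGroup.mk [a]))⁻¹ (f (FreeGroup.mk [b])) = (f (FreeGroup.mk [a])).norm →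
      wordCode (firstHalf (f (FreeGroup.mk [a]))⁻¹) ≤
        wordCode (firstHalf (f (FreeGroup.mk [a]))) := by
    intro a b hab heq
    have h3 := norm_inv_mul_add (f (FreeGroup.mk [a]))⁻¹ (f (FreeGroup.mk [b]))
    rw [inv_inv, FreeGroup.norm_inv_eq] at h3
    have h4 := (hle a b hab).1
    rcases hcases a b hab with rfl | h
    · have := two_mul_overlap_inv_self_lt (hne a)
      omega
    · exact wordCode_firstHalf_le (by omega) (by omega) ((hf a b h).2 (by omega))
  refine ⟨?_, ?_, ?_⟩
  · rintro - ⟨a, rfl⟩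
    exact hne a
  · rintro - ⟨a, rfl⟩ - ⟨b, rfl⟩ hab
    exact (hle a b hab).1
  · rintro - ⟨a, rfl⟩ - ⟨b, rfl⟩ - ⟨c, rfl⟩ hab hbc
    by_contra! hge
    have h1 := (hle a b hab).1
    have h2 := (hle b c hbc).2
    dsimp only at hge hab hbc
    have hcode := htie b c hbc (by omega)
    have hba : f (FreeGroup.mk [(b.1, !b.2)]) * f (FreeGroup.mk [(a.1, !a.2)]) ≠ 1 := by
      rwa [← hinv, ← hinv, ← _root_.mul_inv_rev, Ne, inv_eq_one]
    have hcode' := htie _ _ hba (by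
      rw [← hinv, ← hinv, inv_inv, FreeGroup.norm_inv_eq, overlap_comm]
      omega)
    rw [← hinv, inv_inv] at hcode'
    refine firstHalf_inv_ne (hne b) (by omega) (wordCode_injective ?_ (hcode.antisymm hcode'))
    simp [firstHalf, FreeGroup.norm]

lemma IsNielsenMinimal.exists_inv_eq [Finite J] {f : MulAut (FreeGroup J)}
    (hf : IsNielsenMinimal f) (i : J) : ∃ a, f⁻¹ (FreeGroup.of i) = FreeGroup.mk [a] := by
  set w := f⁻¹ (FreeGroup.of i) with hw
  have hfw : f w = FreeGroup.of i := by simp [hw]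
  have hprod := map_mk_eq_prod f w.toWord
  rw [FreeGroup.mk_toWord, hfw] at hprod
  have hlen := hf.isNielsenReduced.length_le_norm_prod
    (L := w.toWord.map fun a => f (FreeGroup.mk [a])) ?_ ?_
  · rw [← hprod, FreeGroup.norm_of, List.length_map] at hlen
    have hw0 : w.toWord ≠ [] := by
      rw [Ne, FreeGroup.toWord_eq_nil_iff]
      rintro h
      rw [h, _root_.map_one] at hfw
      exact FreeGroup.of_ne_one i hfw.symm
    have := List.length_pos_iff.2 hw0
    obtain ⟨a, ha⟩ := List.length_eq_one_iff.1 (show w.toWord.length = 1 by omega)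
    exact ⟨a, by rw [← ha, FreeGroup.mk_toWord]⟩
  · intro z hz
    obtain ⟨a, -, rfl⟩ := List.mem_map.1 hz
    exact ⟨a, rfl⟩
  · rw [List.isChain_map]
    refine (FreeGroup.isReduced_toWord (x := w)).imp fun a b hab h => ?_
    rw [← _root_.map_mul, EmbeddingLike.map_eq_one_iff, mul_eq_one_iff_eq_inv,
      mk_singleton_inv] at h
    have := congrArg FreeGroup.toWord h
    simp only [FreeGroup.toWord_mk, FreeGroup.reduce_singleton, List.cons.injEq, and_true] at this
    subst this
    simp at hab

lemma exists_transvection_mul {T : Subgroup (MulAut (FreeGroup J))}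
    (hT : ∀ (i j : J) (h : i ≠ j), rtransv h ∈ T ∧ ltransv h ∈ T) {a b : J × Bool}
    (hab : a.1 ≠ b.1) :
    ∃ t ∈ T, t (FreeGroup.mk [b]) = FreeGroup.mk [a] * FreeGroup.mk [b] ∧
      ∀ k, k ≠ b.1 → t (FreeGroup.of k) = FreeGroup.of k := by
  obtain ⟨i, ε⟩ := a
  obtain ⟨j, δ⟩ := b
  have hf : ∀ i : J, FreeGroup.mk [(i, false)] = (FreeGroup.of i)⁻¹ := fun i => rfl
  have ht : ∀ i : J, FreeGroup.mk [(i, true)] = FreeGroup.of i := fun i => rfl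
  have hji : j ≠ i := hab.symm
  have h := hT j i hji
  rcases ε <;> rcases δ <;> simp only [hf, ht]
  · exact ⟨_, h.1, by simp [rtransv_of], fun k hk => by simp [rtransv_of, hk]⟩
  · exact ⟨_, T.inv_mem h.2, by simp [ltransv_symm_of], fun k hk => by simp [ltransv_symm_of, hk]⟩
  · exact ⟨_, T.inv_mem h.1, by simp [rtransv_symm_of], fun k hk => by simp [rtransv_symm_of, hk]⟩
  · exact ⟨_, h.2, by simp [ltransv_of], fun k hk => by simp [ltransv_of, hk]⟩

lemma norm_map_mk_singleton (f : MulAut (FreeGroup J)) (b : J × Bool) :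
    (f (FreeGroup.mk [b])).norm = (f (FreeGroup.of b.1)).norm := by
  obtain ⟨j, _ | _⟩ := b
  · change (f (FreeGroup.of j)⁻¹).norm = _
    rw [_root_.map_inv, FreeGroup.norm_inv_eq]
  · rfl

lemma code_map_mk_singleton [Finite J] (f : MulAut (FreeGroup J)) (b : J × Bool) :
    code (f (FreeGroup.mk [b])) = code (f (FreeGroup.of b.1)) := by
  obtain ⟨j, _ | _⟩ := b
  · change code (f (FreeGroup.of j)⁻¹) = _
    rw [_root_.map_inv, code_inv]
  · rfl

lemma exists_isNielsenMinimal [Finite J] {T : Subgroup (MulAut (FreeGroup J))}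
    (hT : ∀ (i j : J) (h : i ≠ j), rtransv h ∈ T ∧ ltransv h ∈ T) (f : MulAut (FreeGroup J)) :
    ∃ t ∈ T, IsNielsenMinimal (f * t) := by
  have := Fintype.ofFinite J
  let μ : T → ℕ ×ₗ ℕ := fun t => toLex
    (∑ i, ((f * t) (FreeGroup.of i)).norm, ∑ i, code ((f * t) (FreeGroup.of i)))
  obtain ⟨t, -, hmin⟩ := WellFounded.has_min (InvImage.wf μ wellFounded_lt) Set.univ ⟨1, trivial⟩
  refine ⟨t, t.2, fun a b hab => ?_⟩
  obtain ⟨s, hsT, hsb, hs⟩ := exists_transvection_mul hT hab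
  have hle : μ t ≤ μ (t * ⟨s, hsT⟩) := not_lt.1 (hmin _ trivial)
  set g := f * (t : MulAut (FreeGroup J)) with hg
  have hgs : g (FreeGroup.mk [a]) * g (FreeGroup.mk [b]) = (g * s) (FreeGroup.mk [b]) := by
    rw [MulAut.mul_apply _ g s, hsb, _root_.map_mul]
  have hne : ∀ k, k ≠ b.1 → (g * s) (FreeGroup.of k) = g (FreeGroup.of k) := fun k hk => by
    rw [MulAut.mul_apply _ g s, hs k hk]
  have hsum : ∀ F : FreeGroup J → ℕ,
      ∑ i, F (g (FreeGroup.of i)) = F (g (FreeGroup.of b.1)) +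
        ∑ i ∈ Finset.univ.erase b.1, F (g (FreeGroup.of i)) ∧
      ∑ i, F ((g * s) (FreeGroup.of i)) = F ((g * s) (FreeGroup.of b.1)) +
        ∑ i ∈ Finset.univ.erase b.1, F (g (FreeGroup.of i)) := fun F => by
    rw [← Finset.add_sum_erase _ _ (Finset.mem_univ b.1),
      ← Finset.add_sum_erase _ (fun i => F ((g * s) (FreeGroup.of i))) (Finset.mem_univ b.1)]
    refine ⟨rfl, congrArg _ (Finset.sum_congr rfl fun k hk => ?_)⟩
    rw [hne k (Finset.ne_of_mem_erase hk)]
  rw [hgs, norm_map_mk_singleton, norm_map_mk_singleton, code_map_mk_singleton,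
    code_map_mk_singleton]
  rw [Prod.Lex.le_iff] at hle
  simp only [μ, ofLex_toLex, Subgroup.coe_mul, ← mul_assoc, ← hg] at hle
  rw [(hsum FreeGroup.norm).1, (hsum FreeGroup.norm).2, (hsum code).1, (hsum code).2] at hle
  omega

lemma exists_mul_eq_letter [Finite J] {T : Subgroup (MulAut (FreeGroup J))}
    (hT : ∀ (i j : J) (h : i ≠ j), rtransv h ∈ T ∧ ltransv h ∈ T) (f : MulAut (FreeGroup J)) :
    ∃ t ∈ T, ∀ i, ∃ a, (t * f) (FreeGroup.of i) = FreeGroup.mk [a] := by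
  obtain ⟨t, ht, hmin⟩ := exists_isNielsenMinimal hT f⁻¹
  refine ⟨t⁻¹, T.inv_mem ht, fun i => ?_⟩
  obtain ⟨a, ha⟩ := hmin.exists_inv_eq i
  exact ⟨a, by rwa [_root_.mul_inv_rev, inv_inv] at ha⟩

end Nielsen

section NormalGeneration

variable {J : Type*} [DecidableEq J]

/-- The automorphism inverting the generator `x i` and fixing the other generators. -/
def signAut (i : J) : MulAut (FreeGroup J) :=
  autMk (fun k => if k = i then (FreeGroup.of i)⁻¹ else FreeGroup.of k)
    (fun k => if k = i then (FreeGroup.of i)⁻¹ else FreeGroup.of k)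
    (fun k => by by_cases hk : k = i <;> simp [hk])
    (fun k => by by_cases hk : k = i <;> simp [hk])

lemma signAut_of (i k : J) : signAut i (FreeGroup.of k) =
    if k = i then (FreeGroup.of i)⁻¹ else FreeGroup.of k := autMk_of _ _ _ _ _

lemma signAut_mul_self (i : J) : signAut i * signAut i = 1 :=
  mulAut_ext fun k => by by_cases hk : k = i <;> simp [signAut_of, hk]

lemma signAut_mul_rtransv {i j : J} (h : i ≠ j) :
    signAut i * rtransv h = (ltransv h)⁻¹ * signAut i :=
  mulAut_ext fun k => by
    by_cases hk : k = i <;> simp [signAut_of, rtransv_of, ltransv_symm_of, hk, h.symm]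

lemma permAut_swap_mul_signAut {i j : J} (h : i ≠ j) :
    permAut (Equiv.swap i j) * signAut j = ltransv h * (ltransv h.symm)⁻¹ * rtransv h :=
  mulAut_ext fun k => by
    by_cases hi : k = i
    · subst hi
      simp [signAut_of, rtransv_of, ltransv_of, ltransv_symm_of, permAut_of, h, h.symm]
    by_cases hj : k = j
    · subst hj
      simp [signAut_of, rtransv_of, ltransv_of, ltransv_symm_of, permAut_of, h.symm]
    · simp [signAut_of, rtransv_of, ltransv_of, ltransv_symm_of, permAut_of, hi, hj,
        Equiv.swap_apply_of_ne_of_ne]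

lemma rtransv_mem_iff_ltransv_mem (N : Subgroup (MulAut (FreeGroup J))) [hN : N.Normal] {i j : J}
    (h : i ≠ j) : rtransv h ∈ N ↔ ltransv h ∈ N := by
  rw [← inv_mem_iff (x := ltransv h), ← mul_inv_cancel_right (ltransv h)⁻¹ (signAut i),
    ← signAut_mul_rtransv]
  exact ⟨fun hr => hN.conj_mem _ hr _, fun hr => (hN.mem_comm_iff.1 hr |> fun hr => by
    simpa using hr)⟩

lemma transv_mem_of_mem {N : Subgroup (MulAut (FreeGroup J))} [hN : N.Normal] {i j : J}
    {h : i ≠ j} (hmem : rtransv h ∈ N ∨ ltransv h ∈ N) {i' j' : J} (h' : i' ≠ j') :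
    rtransv h' ∈ N ∧ ltransv h' ∈ N := by
  rw [← rtransv_mem_iff_ltransv_mem, or_self] at hmem
  rw [← rtransv_mem_iff_ltransv_mem, and_self]
  obtain ⟨π, rfl, rfl⟩ : ∃ π : Equiv.Perm J, π i = i' ∧ π j = j' := by
    refine ⟨Equiv.swap (Equiv.swap i i' j) j' * Equiv.swap i i', ?_, by simp⟩
    have hne : i' ≠ Equiv.swap i i' j := by
      simpa using (Equiv.swap i i').injective.ne h
    simp [Equiv.swap_apply_of_ne_of_ne hne h']
  rw [← mul_inv_cancel_right (rtransv h') (permAut π), ← permAut_mul_rtransv π h]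
  exact hN.conj_mem _ hmem _

lemma signed_mem {K : Subgroup (MulAut (FreeGroup J))} (hsign : ∀ i, signAut i ∈ K)
    (S : Finset J) (d : MulAut (FreeGroup J))
    (hS : ∀ i ∈ S, d (FreeGroup.of i) = FreeGroup.of i ∨ d (FreeGroup.of i) = (FreeGroup.of i)⁻¹)
    (hS' : ∀ i ∉ S, d (FreeGroup.of i) = FreeGroup.of i) : d ∈ K := by
  induction S using Finset.induction generalizing d with
  | empty =>
    rw [show d = 1 from mulAut_ext fun i => hS' i (by simp)]
    exact K.one_mem
  | insert j S hj ih =>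
    rcases hS j (by simp) with h | h
    · refine ih d (fun i hi => hS i (by simp [hi])) fun i hi => ?_
      by_cases hij : i = j
      · exact hij ▸ h
      · exact hS' i (by simp [hi, hij])
    · rw [← K.mul_mem_cancel_right (hsign j)]
      refine ih _ (fun i hi => ?_) fun i hi => ?_
      · have hij : i ≠ j := fun h => hj (h ▸ hi)
        simpa [signAut_of, hij] using hS i (by simp [hi])
      · by_cases hij : i = j
        · simp [hij, signAut_of, h]
        · simpa [signAut_of, hij] using hS' i (by simp [hi, hij])

lemma letterPerm_mem [Finite J] {K : Subgroup (MulAut (FreeGroup J))}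
    (hsign : ∀ i, signAut i ∈ K) (hswap : ∀ i j, i ≠ j → permAut (Equiv.swap i j) ∈ K)
    {g : MulAut (FreeGroup J)} (hg : ∀ i, ∃ a, g (FreeGroup.of i) = FreeGroup.mk [a]) :
    g ∈ K := by
  have := Fintype.ofFinite J
  have hperm : ∀ π : Equiv.Perm J, permAut π ∈ K := fun π => by
    induction π using Equiv.Perm.swap_induction_on with
    | one =>
      rw [show permAut (1 : Equiv.Perm J) = 1 from mulAut_ext fun i => by simp [permAut_of]]
      exact K.one_mem
    | swap_mul π i j hij ih =>
      rw [permAut_mul]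
      exact K.mul_mem (hswap i j hij) ih
  choose a ha using hg
  have hval : ∀ b : J × Bool, FreeGroup.mk [b] = FreeGroup.of b.1 ∨
      FreeGroup.mk [b] = (FreeGroup.of b.1)⁻¹ := by
    rintro ⟨j, _ | _⟩
    · exact .inr rfl
    · exact .inl rfl
  have hinj : Function.Injective fun i => (a i).1 := by
    intro i j hij
    have key : g (FreeGroup.of i) = g (FreeGroup.of j) ∨
        g (FreeGroup.of i) = g (FreeGroup.of j)⁻¹ := by
      rw [_root_.map_inv, ha, ha]
      dsimp only at hij
      rcases hval (a i) with h | h <;> rcases hval (a j) with h' | h' <;> rw [h, h', hij] <;> simp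
    rcases key with h | h
    · exact FreeGroup.of_injective (g.injective h)
    · have := congrArg FreeGroup.toWord (g.injective h)
      simp [FreeGroup.toWord_inv, FreeGroup.invRev] at this
  let π := Equiv.ofBijective _ (Finite.injective_iff_bijective.1 hinj)
  have hπ : ∀ i, π i = (a i).1 := fun i => rfl
  rw [← K.mul_mem_cancel_left (K.inv_mem (hperm π))]
  refine signed_mem hsign Finset.univ _ (fun i _ => ?_) (by simp)
  have hinv : (permAut π)⁻¹ (FreeGroup.of (a i).1) = FreeGroup.of i := by
    rw [← hπ, ← permAut_of, MulAut.inv_apply_self]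
  rw [MulAut.mul_apply, ha]
  rcases hval (a i) with h | h <;> rw [h] <;> simp only [_root_.map_inv, hinv, true_or, or_true]

end NormalGeneration

section Special

variable {n : ℕ}

lemma detρ_rtransv (hn : 3 ≤ n) {i j : Fin n} (h : i ≠ j) : detρ n (rtransv h) = 1 := by
  obtain ⟨k, hki, hkj⟩ : ∃ k : Fin n, k ≠ i ∧ k ≠ j := by
    have := Fin.exists_ne_and_ne_of_two_lt i j (by omega)
    exact this
  have hcomm : rtransv hkj * rtransv hki.symm =
      rtransv hki.symm * rtransv hkj * rtransv h := by
    refine mulAut_ext fun l => ?_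
    by_cases h1 : l = i
    · subst h1
      simp [rtransv_of, hki.symm, h.symm, hkj.symm, mul_assoc]
    · by_cases h2 : l = k
      · simp [rtransv_of, hki, h.symm, h2]
      · simp [rtransv_of, h1, h2]
  have := congrArg (detρ n) hcomm
  simp only [_root_.map_mul] at this
  rw [mul_comm (detρ n (rtransv hkj))] at this
  exact left_eq_mul.1 this

lemma detρ_signAut (i : Fin n) : detρ n (signAut i) = -1 := by
  have hmat : mat (signAut i) = Matrix.diagonal fun k => if k = i then -1 else 1 := by
    ext k l
    simp only [mat, Matrix.of_apply, signAut_of, Matrix.diagonal_apply]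
    by_cases hl : l = i
    · by_cases hk : k = l <;> simp [expSum, hl, hk, eq_comm]
      aesop
    · by_cases hk : k = l <;> simp [expSum, hl, hk, eq_comm]
  refine Units.ext ?_
  change (mat (signAut i)).det = -1
  rw [hmat, Matrix.det_diagonal]
  simp [Finset.prod_ite_eq']

theorem SAut_le_of_transv_mem (hn : 3 ≤ n) {N : Subgroup (FrAut n)} [N.Normal] {i j : Fin n}
    {h : i ≠ j} (hmem : rtransv h ∈ N ∨ ltransv h ∈ N) : SAut n ≤ N := by
  have hnorm : (SAut n).Normal := (detρ n).normal_ker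
  let T := N ⊓ SAut n
  have hTn : T.Normal := inferInstance
  have hT : ∀ (i j : Fin n) (h : i ≠ j), rtransv h ∈ T ∧ ltransv h ∈ T := fun i j h => by
    rw [← rtransv_mem_iff_ltransv_mem, and_self]
    exact ⟨(transv_mem_of_mem hmem h).1, detρ_rtransv hn h⟩
  let i₀ : Fin n := ⟨0, by omega⟩
  let q : FrAut n →* FrAut n ⧸ T := QuotientGroup.mk' T
  have hq : ∀ f, q f = 1 ↔ f ∈ T := QuotientGroup.eq_one_iff
  have hswap : ∀ i j, i ≠ j → q (permAut (Equiv.swap i j)) = q (signAut j) := by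
    intro i j hij
    have hone : q (permAut (Equiv.swap i j) * signAut j) = q (signAut j * signAut j) := by
      rw [signAut_mul_self, _root_.map_one, hq, permAut_swap_mul_signAut hij]
      exact T.mul_mem (T.mul_mem (hT _ _ _).2 (T.inv_mem (hT _ _ _).2)) (hT _ _ _).1
    rw [_root_.map_mul, _root_.map_mul] at hone
    exact mul_right_cancel hone
  have hsign : ∀ i, q (signAut i) = q (signAut i₀) := by
    intro i
    by_cases hi : i = i₀
    · rw [hi]
    · rw [← hswap _ _ (Ne.symm hi), Equiv.swap_comm, hswap _ _ hi]
  let K : Subgroup (FrAut n) := (Subgroup.zpowers (q (signAut i₀))).comap q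
  have hsignK : ∀ i, signAut i ∈ K := fun i =>
    Subgroup.mem_comap.2 ((hsign i).symm ▸ Subgroup.mem_zpowers _)
  have hswapK : ∀ i j, i ≠ j → permAut (Equiv.swap i j) ∈ K := fun i j hij =>
    Subgroup.mem_comap.2 (((hswap i j hij).trans (hsign j)).symm ▸ Subgroup.mem_zpowers _)
  intro g hg
  obtain ⟨t, ht, htg⟩ := exists_mul_eq_letter hT g
  obtain ⟨k, hk⟩ := Subgroup.mem_zpowers_iff.1 (letterPerm_mem hsignK hswapK htg)
  rw [← map_zpow, eq_comm, ← div_eq_one, ← map_div, hq, div_eq_mul_inv] at hk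
  have hdet : detρ n (t * g * (signAut i₀ ^ k)⁻¹) = 1 := hk.2
  rw [_root_.map_mul, _root_.map_mul, _root_.map_inv, map_zpow,
    detρ_signAut, show detρ n t = 1 from ht.2, show detρ n g = 1 from hg, one_mul, one_mul,
    inv_eq_one] at hdet
  have heven : Even k := by
    by_contra hodd
    rw [Int.not_even_iff_odd] at hodd
    rw [hodd.neg_one_zpow] at hdet
    exact absurd hdet (by decide)
  obtain ⟨m, rfl⟩ := heven
  rw [_root_.zpow_add, ← (Commute.refl _).mul_zpow, signAut_mul_self, _root_.one_zpow, inv_one,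
    mul_one, T.mul_mem_cancel_left ht] at hk
  exact hk.1

end Special

section Outer

lemma eq_one_of_commute_of {J : Type*} [DecidableEq J] (hJ : ∀ i : J, ∃ k, k ≠ i)
    {w : FreeGroup J} (hw : ∀ k, w * FreeGroup.of k = FreeGroup.of k * w) : w = 1 := by
  rw [← FreeGroup.toWord_eq_nil_iff]
  rcases hL : w.toWord with _ | ⟨a, L⟩
  · rfl
  exfalso
  obtain ⟨k, hk⟩ := hJ a.1
  have hleft : (FreeGroup.of k * w).toWord = (k, true) :: a :: L := by
    rw [FreeGroup.toWord_mul, hL, FreeGroup.toWord_of]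
    refine FreeGroup.IsReduced.reduce_eq
      (FreeGroup.isReduced_cons_cons.2 ⟨fun h => (hk h).elim, ?_⟩)
    exact hL ▸ FreeGroup.isReduced_toWord
  have hright := FreeGroup.toWord_mul_sublist w (FreeGroup.of k)
  rw [hw, hleft, hL, FreeGroup.toWord_of] at hright
  have heq := hright.eq_of_length (by simp)
  rw [List.cons_append, List.cons.injEq] at heq
  exact hk (congrArg Prod.fst heq.1)

lemma freeGroupCongr_rtransv {J K : Type*} [DecidableEq J] [DecidableEq K] (c : J ≃ K)
    {i j : J} (h : i ≠ j) :
    MulAut.congr (FreeGroup.freeGroupCongr c) (rtransv h) = rtransv (c.injective.ne h) :=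
  mulAut_ext fun k => by
    obtain ⟨k, rfl⟩ := c.surjective k
    by_cases hk : k = i <;> simp [rtransv_of, hk]

lemma freeGroupCongr_ltransv {J K : Type*} [DecidableEq J] [DecidableEq K] (c : J ≃ K)
    {i j : J} (h : i ≠ j) :
    MulAut.congr (FreeGroup.freeGroupCongr c) (ltransv h) = ltransv (c.injective.ne h) :=
  mulAut_ext fun k => by
    obtain ⟨k, rfl⟩ := c.surjective k
    by_cases hk : k = i <;> simp [ltransv_of, hk]

/-- Isomorphic groups have their automorphism groups identified canonically up to inner
automorphisms. -/
lemma congr_mem_of_congr_mem {G H : Type*} [Group G] [Group H] (κ ψ : G ≃* H)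
    {N : Subgroup (MulAut H)} [hN : N.Normal] {f : MulAut G} (hf : MulAut.congr ψ f ∈ N) :
    MulAut.congr κ f ∈ N := by
  have hconj := hN.conj_mem _ hf (ψ.symm.trans κ)
  convert hconj using 1
  ext x
  change κ (f (κ.symm x)) = κ (ψ.symm (ψ (f (ψ.symm (ψ (κ.symm x))))))
  simp

variable {n : ℕ}

lemma conj_injective (hn : 2 ≤ n) :
    Function.Injective (MulAut.conj (G := FreeGroup (Fin n))) := by
  rw [injective_iff_map_eq_one]
  intro w hw
  have : Nontrivial (Fin n) := Fin.nontrivial_iff_two_le.2 hn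
  refine eq_one_of_commute_of exists_ne fun k => ?_
  have := DFunLike.congr_fun hw (FreeGroup.of k)
  rwa [MulAut.conj_apply, MulAut.one_apply, mul_inv_eq_iff_eq_mul] at this

theorem SAut_le_of_orderOf_eq_prime (hn : 3 ≤ n) {p : ℕ} [Fact p.Prime] (hp : p ≠ 2) {g : OutF n}
    (hg : orderOf g = p) {N : Subgroup (FrAut n)} [hN : N.Normal]
    (hgN : (Subgroup.zpowers g).comap (toOut n) ≤ N) : SAut n ≤ N := by
  let E := (Subgroup.zpowers g).comap (toOut n)
  have hout : ∀ f, toOut n f = 1 ↔ f ∈ Inn n := QuotientGroup.eq_one_iff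
  let ζ : Multiplicative (ZMod p) ≃* Subgroup.zpowers g :=
    zmodMulEquivOfGenerator (g := ⟨g, Subgroup.mem_zpowers g⟩)
      (by rintro ⟨x, k, rfl⟩; exact ⟨k, rfl⟩) (by rw [Nat.card_zpowers, hg])
  let r : E →* Subgroup.zpowers g := (toOut n).subgroupComap (Subgroup.zpowers g)
  have hr : Function.Surjective r := by
    rintro ⟨x, hx⟩
    obtain ⟨f, rfl⟩ := QuotientGroup.mk'_surjective (Inn n) x
    exact ⟨⟨f, hx⟩, rfl⟩
  let φ : E →* Multiplicative (ZMod p) := ζ.symm.toMonoidHom.comp r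
  have hφ : Function.Surjective φ := ζ.symm.surjective.comp hr
  have hmem : ∀ s : E, s ∈ φ.ker ↔ (s : FrAut n) ∈ Inn n := fun s => by
    rw [MonoidHom.mem_ker, ← hout]
    exact (ζ.symm.map_eq_one_iff).trans Subtype.ext_iff
  let ι : FreeGroup (Fin n) →* E := MulAut.conj.codRestrict E fun w => by
    rw [Subgroup.mem_comap, (hout _).2 ⟨w, rfl⟩]
    exact Subgroup.one_mem _
  have hι_coe : ∀ w, (ι w : FrAut n) = MulAut.conj w := fun w => rfl
  have hconj := conj_injective (n := n) (by omega)
  have hι : Function.Injective ι := fun a b hab => hconj (congrArg Subtype.val hab)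
  have hker : φ.ker = ι.range := by
    ext s
    rw [hmem]
    exact ⟨fun ⟨w, hw⟩ => ⟨w, Subtype.ext hw⟩, fun ⟨w, hw⟩ => ⟨w, congrArg Subtype.val hw⟩⟩
  have hcent : ∀ s, s ∉ φ.ker → ∃ f ∈ φ.ker, f * s ≠ s * f := by
    intro s
    contrapose!
    intro hs
    have hone : s = 1 := Subtype.ext <| MulEquiv.ext fun w => by
      have h1 := congrArg Subtype.val (hs (ι w) ((hmem _).2 ⟨w, rfl⟩))
      refine hconj (MulEquiv.ext fun x => ?_)
      have h2 := DFunLike.congr_fun h1 ((s : FrAut n)⁻¹ x)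
      simp [hι_coe] at h2
      simp [h2]
    exact hone ▸ φ.ker.one_mem
  have hfree : φ.ker ≃* FreeGroup (Fin n) :=
    (MulEquiv.subgroupCongr hker).trans (MonoidHom.ofInjective hι).symm
  obtain ⟨J, _, e, s, hs⟩ := hasTransvections hι hp hφ hker hcent fun J ⟨e⟩ i j => by
    have c := Equiv.ofFreeGroupEquiv (e.trans hfree)
    obtain ⟨k, hki, hkj⟩ := Fin.exists_ne_and_ne_of_two_lt (c i) (c j) hn
    exact ⟨c.symm k, fun h => hki (by simp [← h]), fun h => hkj (by simp [← h])⟩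
  let ψ : FreeGroup J ≃* FreeGroup (Fin n) :=
    e.trans ((MulEquiv.subgroupCongr hker).trans (MonoidHom.ofInjective hι).symm)
  have hψ : ∀ x, ι (ψ x) = e x := fun x =>
    congrArg Subtype.val ((MonoidHom.ofInjective hι).apply_symm_apply
      (MulEquiv.subgroupCongr hker (e x)))
  let c := Equiv.ofFreeGroupEquiv ψ
  let κ := FreeGroup.freeGroupCongr c
  obtain ⟨i, j, h, hij⟩ := hs ((MulAut.congr ψ).symm (s : FrAut n)⁻¹) (fun x => by
    rw [← hψ, ← hψ]
    refine Subtype.ext (MulEquiv.ext fun y => ?_)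
    change MulAut.conj (ψ (ψ.symm ((s : FrAut n)⁻¹ (ψ x)))) y =
      (s : FrAut n)⁻¹ (MulAut.conj (ψ x) ((s : FrAut n) y))
    simp) (N.comap (MulAut.congr ψ).toMonoidHom) inferInstance (by
      rw [Subgroup.mem_comap]
      change MulAut.congr ψ ((MulAut.congr ψ).symm _) ∈ N
      rw [MulEquiv.apply_symm_apply]
      exact N.inv_mem (hgN s.2))
  refine SAut_le_of_transv_mem hn (h := c.injective.ne h) (hij.imp (fun hr => ?_) fun hl => ?_)
  · exact freeGroupCongr_rtransv c h ▸ congr_mem_of_congr_mem κ ψ hr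
  · exact freeGroupCongr_ltransv c h ▸ congr_mem_of_congr_mem κ ψ hl

theorem SOut_le_normalClosure (hn : 3 ≤ n) {G : Subgroup (OutF n)} (hfin : Finite G)
    (h2 : ¬ ∃ k : ℕ, Nat.card G = 2 ^ k) :
    SOut n ≤ Subgroup.normalClosure (G : Set (OutF n)) := by
  obtain ⟨p, hp, hdvd, hodd⟩ :=
    (Nat.eq_two_pow_or_exists_odd_prime_and_dvd (Nat.card G)).resolve_left h2
  have := Fact.mk hp
  obtain ⟨g, hg⟩ := exists_prime_orderOf_dvd_card' p hdvd
  have hle : (Subgroup.zpowers (g : OutF n)).comap (toOut n) ≤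
      (Subgroup.normalClosure (G : Set (OutF n))).comap (toOut n) :=
    Subgroup.comap_mono (Subgroup.zpowers_le.2 (Subgroup.subset_normalClosure g.2))
  have hSAut := SAut_le_of_orderOf_eq_prime hn (by rintro rfl; exact absurd hodd (by decide))
    ((Subgroup.orderOf_coe g).trans hg) hle
  intro x hx
  obtain ⟨f, rfl⟩ := QuotientGroup.mk'_surjective (Inn n) x
  exact hSAut (show f ∈ SAut n from hx)

end Outer

/-- **Theorem 2.** For `n ≥ 3`, if `G'` is a nontrivial finite subgroup of `Out(F_n)` whose
order is not a power of `2`, then the normal closure of `G'` is `SOut(F_n)` if `G' ⊆ SOut(F_n)`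
and is all of `Out(F_n)` otherwise. -/
theorem normalClosure_finite_subgroup_out (n : ℕ) (hn : 3 ≤ n)
    (G' : Subgroup (OutF n)) (hG : G' ≠ ⊥) (hfin : Finite G')
    (h2 : ¬ ∃ k : ℕ, Nat.card G' = 2 ^ k) :
    (G' ≤ SOut n → Subgroup.normalClosure (G' : Set (OutF n)) = SOut n) ∧
    (¬ G' ≤ SOut n → Subgroup.normalClosure (G' : Set (OutF n)) = ⊤) := by
  have hle := SOut_le_normalClosure hn hfin h2
  refine ⟨fun hS => le_antisymm ?_ hle, fun hS => ?_⟩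
  · have : (SOut n).Normal := (detρOut n).normal_ker
    exact Subgroup.normalClosure_le_normal hS
  · obtain ⟨x, hxG, hxS⟩ := SetLike.not_le_iff_exists.1 hS
    refine eq_top_iff.2 fun y _ => ?_
    have hx := (Int.units_eq_one_or (detρOut n x)).resolve_left hxS
    rcases Int.units_eq_one_or (detρOut n y) with hy | hy
    · exact hle hy
    · rw [← Subgroup.mul_mem_cancel_right _ (Subgroup.subset_normalClosure hxG)]
      refine hle ?_
      rw [SOut, MonoidHom.mem_ker, _root_.map_mul, hx, hy]
      rfl

end NormalClosurePaper
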